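/- arXiv:1708.06054 — 2 statements merged into one kernel-verified Lean document; each statement's English description precedes it below -/
import Mathlib

section
/- Let S₀ be the set of ordered pairs (T, T′) with T, T′ ∈ T_{AB} and ⟨T, T′⟩ = 0. Then |S₀| = 891·42, the map s₀: (T,T′) ↦ pr(T′ − T) (orthogonal projection to R_{AB}^⊥ ⊗ Q) is injective, and the image of s₀ spans R_{AB}^⊥ ⊗ Q. -/
open scoped BigOperators

/-- A generator matrix of the extended binary Golay code (MOG coordinates). -/
def golayMatrix : Matrix (Fin 12) (Fin 24) (ZMod 2) :=
  !![0, 0, 0, 0, 0, 0, 0, 0, 0, 0, 0, 0, 0, 0, 0, 0, 1, 1, 1, 1, 1, 1, 1, 1;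
    0, 0, 0, 0, 0, 0, 0, 0, 0, 0, 0, 0, 1, 1, 1, 1, 0, 0, 0, 0, 1, 1, 1, 1;
    0, 0, 0, 0, 0, 0, 0, 0, 0, 0, 1, 1, 0, 0, 1, 1, 0, 0, 1, 1, 0, 0, 1, 1;
    0, 0, 0, 0, 0, 0, 0, 0, 0, 1, 0, 1, 0, 1, 0, 1, 0, 1, 0, 1, 0, 1, 0, 1;
    0, 0, 0, 0, 0, 0, 0, 0, 1, 0, 0, 1, 0, 1, 1, 0, 0, 1, 1, 0, 1, 0, 0, 1;
    0, 0, 0, 0, 0, 0, 1, 1, 0, 0, 0, 0, 0, 0, 1, 1, 0, 1, 1, 0, 0, 1, 0, 1;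
    0, 0, 0, 0, 0, 1, 0, 1, 0, 0, 0, 0, 0, 1, 0, 1, 0, 0, 1, 1, 0, 1, 1, 0;
    0, 0, 0, 0, 1, 0, 0, 1, 0, 0, 0, 0, 0, 1, 1, 0, 0, 1, 0, 1, 1, 1, 0, 0;
    0, 0, 0, 1, 0, 0, 0, 1, 0, 0, 0, 1, 0, 0, 0, 1, 0, 1, 1, 1, 1, 0, 0, 0;
    0, 0, 1, 0, 0, 0, 0, 1, 0, 0, 0, 1, 0, 0, 1, 0, 0, 0, 1, 0, 1, 1, 1, 0;
    0, 1, 0, 0, 0, 0, 0, 1, 0, 0, 0, 1, 0, 1, 0, 0, 0, 0, 0, 1, 1, 0, 1, 1;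
    1, 0, 0, 0, 0, 0, 0, 1, 0, 0, 0, 1, 0, 1, 1, 1, 0, 1, 0, 0, 0, 0, 1, 0]

/-- The extended binary Golay code `C₂₄`. -/
def GolayCode : Submodule (ZMod 2) (Fin 24 → ZMod 2) :=
  Submodule.span (ZMod 2) (Set.range fun i => golayMatrix i)

/-- Membership in the Leech lattice `Λ₂₄ ⊂ ℤ²⁴` (coordinates scaled by `√8`),
via the standard congruence characterization. -/
def IsLeech (x : Fin 24 → ℤ) : Prop :=
  ∃ m : ℤ, (m = 0 ∨ m = 1) ∧ (∀ i, (2:ℤ) ∣ (x i - m)) ∧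
    ((fun i => if (4:ℤ) ∣ (x i - m - 2) then (1 : ZMod 2) else 0) ∈ GolayCode) ∧
    (8:ℤ) ∣ ((∑ i, x i) - 4 * m)

/-- The inner product `⟨x, y⟩ = (Σ xᵢ yᵢ)/8` on the Leech lattice. -/
def leechInner (x y : Fin 24 → ℤ) : ℚ := (∑ i, (x i : ℚ) * (y i : ℚ)) / 8

/-- The lattice point `A = (0²¹, 4, 0, −4)`. -/
def vA : Fin 24 → ℤ := fun i => if i.val = 21 then 4 else if i.val = 23 then -4 else 0

/-- The lattice point `B = (0²¹, 0, 4, −4)`. -/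
def vB : Fin 24 → ℤ := fun i => if i.val = 22 then 4 else if i.val = 23 then -4 else 0

/-- `T_AB`: lattice points `T` with `|OT| = |AT| = |BT| = 2`. -/
def TAB : Set (Fin 24 → ℤ) :=
  {T | IsLeech T ∧ leechInner T T = 4 ∧
       leechInner (T - vA) (T - vA) = 4 ∧ leechInner (T - vB) (T - vB) = 4}

/-- The inner product `(Σ xᵢyᵢ)/8` on `ℚ²⁴`. -/
def ratInner (x y : Fin 24 → ℚ) : ℚ := (∑ i, x i * y i) / 8

/-- Integer vectors regarded as rational vectors. -/
def toRat (x : Fin 24 → ℤ) : Fin 24 → ℚ := fun i => (x i : ℚ)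

/-- Orthogonal projection of `ℚ²⁴` onto the orthogonal complement of
`span{A, B}` (Gram matrix `[[4,2],[2,4]]`). -/
def prPerp (v : Fin 24 → ℚ) : Fin 24 → ℚ :=
  v - ((4 * ratInner v (toRat vA) - 2 * ratInner v (toRat vB)) / 12) • toRat vA
    - ((-2 * ratInner v (toRat vA) + 4 * ratInner v (toRat vB)) / 12) • toRat vB

/-- The set `S₀` of ordered pairs `(T, T′)` in `T_AB` with `⟨T, T′⟩ = 0`. -/
def S0 : Set ((Fin 24 → ℤ) × (Fin 24 → ℤ)) :=
  {p | p.1 ∈ TAB ∧ p.2 ∈ TAB ∧ leechInner p.1 p.2 = 0}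

/-- The map `s₀ : (T, T′) ↦ pr(T′ − T)`. -/
def s0map (p : (Fin 24 → ℤ) × (Fin 24 → ℤ)) : Fin 24 → ℚ :=
  prPerp (toRat (p.2 - p.1))

/-!
Every point of `T_AB` reads `(t + 4, t + 4, t)` on the last three coordinates, and since nonempty
Golay codewords have weight at least eight, only `t = 0, -4, -2, -3` occur; in each case the points
are parametrised by signs and codewords.

A pair `(T, U)` of `S₀` extends to the pairwise orthogonal triple `T`, `U`, `A + B - T - U` of
points of `T_AB`, whose last coordinates sum to `-8`. With the admissible values of `t`, exactly two
of these three coordinates agree, so by cyclic rotation `|S₀|` is three times the number of pairs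
for which `U` and `A + B - T - U` have the same last coordinate. These pairs have last coordinates
`(0, -4)`, `(-4, -2)` or `(-2, -3)`, and there are `42`, `21 · 16 · 5` and `21 · 512` of them.

Points of `T_AB` have nonnegative inner products, since otherwise `A + B - T - U` would be too short
for the Leech lattice. Hence `T' - T = U' - U` with `⟨U, U'⟩ = 0` gives
`⟨T', U'⟩ = ⟨T, U'⟩ + |U'|² ≥ |U'|²`, which forces `T' = U'`. Finally, the pairs with
`T = (0²¹, 4, 4, 0)` map to the vectors `±4 eᵢ - 4 (0²¹, 1, 1, 1)`, which already span.
-/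

section BinaryWords

/-- The characteristic word of a finite set, which identifies subsets with binary words. -/
def charWord {ι : Type*} [DecidableEq ι] (s : Finset ι) (i : ι) : ZMod 2 := if i ∈ s then 1 else 0

theorem charWord_injective {ι : Type*} [DecidableEq ι] :
    Function.Injective (charWord : Finset ι → ι → ZMod 2) := by
  intro s t h
  ext i
  have := congrFun h i
  by_cases hs : i ∈ s <;> by_cases ht : i ∈ t <;> simp_all [charWord]

theorem charWord_dotProduct {ι : Type*} [DecidableEq ι] [Fintype ι] (s t : Finset ι) :
    charWord s ⬝ᵥ charWord t = (s ∩ t).card := by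
  simp [dotProduct, charWord, ← ite_and, Finset.filter_and, Finset.inter_comm]

variable {n : ℕ}

/-- The set of positions of the ones of a bit vector, counted from the most significant bit. -/
def bitSet (c : BitVec n) : Finset (Fin n) := {i | c.getMsbD i}

theorem mem_bitSet {c : BitVec n} {i : Fin n} : i ∈ bitSet c ↔ c.getMsbD i := by simp [bitSet]

theorem bitSet_injective : Function.Injective (bitSet : BitVec n → Finset (Fin n)) := by
  intro a b h
  refine BitVec.eq_of_getMsbD_eq fun i hi => ?_
  have := congrArg (⟨i, hi⟩ ∈ ·) h
  simpa only [mem_bitSet, eq_iff_iff, ← Bool.eq_iff_iff] using this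

theorem charWord_bitSet_zero : charWord (bitSet (0 : BitVec n)) = 0 := by
  funext i
  simp [charWord, mem_bitSet]

theorem charWord_bitSet_xor (a b : BitVec n) :
    charWord (bitSet (a ^^^ b)) = charWord (bitSet a) + charWord (bitSet b) := by
  funext i
  simp only [charWord, mem_bitSet, BitVec.getMsbD_xor, Pi.add_apply]
  cases a.getMsbD i <;> cases b.getMsbD i <;> decide

theorem cpopNatRec_eq_card (c : BitVec n) (k : ℕ) :
    c.cpopNatRec k 0 = ((Finset.range k).filter (c.getLsbD ·)).card := by
  induction k with
  | zero => rfl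
  | succ k ih =>
    rw [BitVec.cpopNatRec_succ, BitVec.cpopNatRec_eq, ih, Finset.range_add_one,
      Finset.filter_insert]
    cases c.getLsbD k <;> simp

theorem toNat_cpop_eq_card_bitSet (c : BitVec n) : c.cpop.toNat = (bitSet c).card := by
  rw [BitVec.toNat_cpop, cpopNatRec_eq_card]
  refine Finset.card_bij' (fun k hk => ⟨n - 1 - k, by grind⟩) (fun i _ => n - 1 - i) ?_ ?_ ?_ ?_
  all_goals simp [mem_bitSet, BitVec.getMsbD]
  all_goals grind

/-- The list of all sums modulo two of subfamilies of a list of bit vectors. -/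
def xorSpan : List (BitVec n) → List (BitVec n)
  | [] => [0]
  | r :: rs => (xorSpan rs).flatMap fun c => [c, r ^^^ c]

theorem mem_span_charWord_bitSet_iff (rs : List (BitVec n)) (v : Fin n → ZMod 2) :
    v ∈ Submodule.span (ZMod 2) ((fun r => charWord (bitSet r)) '' {r | r ∈ rs}) ↔
      ∃ c ∈ xorSpan rs, charWord (bitSet c) = v := by
  induction rs generalizing v with
  | nil =>
    simp only [xorSpan, List.mem_singleton, exists_eq_left, charWord_bitSet_zero]
    simp [eq_comm]
  | cons r rs ih =>
    have insert_image : (fun r => charWord (bitSet r)) '' {s | s ∈ r :: rs} =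
        insert (charWord (bitSet r)) ((fun r => charWord (bitSet r)) '' {s | s ∈ rs}) := by
      have : {s | s ∈ r :: rs} = insert r {s | s ∈ rs} := by
        ext
        simp
      rw [this, Set.image_insert_eq]
    rw [insert_image, Submodule.mem_span_insert]
    simp only [ih, xorSpan, List.mem_flatMap, List.mem_cons, List.not_mem_nil, or_false]
    constructor
    · rintro ⟨a, -, ⟨c, hc, rfl⟩, rfl⟩
      obtain rfl | rfl : a = 0 ∨ a = 1 := by revert a; decide
      · exact ⟨c, ⟨c, hc, .inl rfl⟩, by simp⟩
      · exact ⟨r ^^^ c, ⟨c, hc, .inr rfl⟩, by simp [charWord_bitSet_xor]⟩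
    · rintro ⟨_, ⟨c, hc, rfl | rfl⟩, rfl⟩
      · exact ⟨0, _, ⟨_, hc, rfl⟩, by simp⟩
      · exact ⟨1, _, ⟨c, hc, rfl⟩, by simp [charWord_bitSet_xor]⟩

end BinaryWords

section Golay

/-- A subset of the coordinates whose characteristic word lies in the Golay code. -/
def IsGolaySet (s : Finset (Fin 24)) : Prop := charWord s ∈ GolayCode

/-- The rows of `golayMatrix`, read as binary numerals. -/
def golayRow : Fin 12 → BitVec 24 :=
  ![255, 3855, 13107, 21845, 38505, 197477, 329014, 591452, 1118584, 2167342, 4264987, 8460098]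

/-- The Golay code as a list of bit vectors. -/
def golayWords : List (BitVec 24) := xorSpan (List.ofFn golayRow)

theorem golayMatrix_eq_charWord (i : Fin 12) : golayMatrix i = charWord (bitSet (golayRow i)) := by
  have apply_beq : ∀ (i : Fin 12) (j : Fin 24),
      golayMatrix i j == charWord (bitSet (golayRow i)) j := by
    decide +kernel
  exact funext fun j => eq_of_beq (apply_beq i j)

theorem mem_golayCode_iff {v : Fin 24 → ZMod 2} :
    v ∈ GolayCode ↔ ∃ c ∈ golayWords, charWord (bitSet c) = v := by
  rw [GolayCode, golayWords, ← mem_span_charWord_bitSet_iff]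
  have rows : Set.range (fun i => golayMatrix i) =
      (fun r => charWord (bitSet r)) '' {r | r ∈ List.ofFn golayRow} := by
    simp only [golayMatrix_eq_charWord, List.mem_ofFn]
    exact Set.range_comp (fun r => charWord (bitSet r)) golayRow
  rw [rows]

theorem isGolaySet_iff {s : Finset (Fin 24)} : IsGolaySet s ↔ ∃ c ∈ golayWords, bitSet c = s := by
  simp only [IsGolaySet, mem_golayCode_iff, charWord_injective.eq_iff]

theorem isGolaySet_univ : IsGolaySet Finset.univ :=
  isGolaySet_iff.2 ⟨BitVec.allOnes 24, by decide +kernel, by decide +kernel⟩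

theorem dotProduct_eq_zero_of_mem_golayCode {v w : Fin 24 → ZMod 2} (hv : v ∈ GolayCode)
    (hw : w ∈ GolayCode) : v ⬝ᵥ w = 0 := by
  have rows_orthogonal : ∀ i j, golayMatrix i ⬝ᵥ golayMatrix j = 0 := by
    simp only [golayMatrix_eq_charWord, charWord_dotProduct]
    decide +kernel
  refine Submodule.span_induction₂ (p := fun v w _ _ => v ⬝ᵥ w = 0) ?_ ?_ ?_ ?_ ?_ ?_ ?_ hv hw
  · rintro _ _ ⟨i, rfl⟩ ⟨j, rfl⟩
    exact rows_orthogonal i j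
  all_goals simp +contextual [add_dotProduct, dotProduct_add]

theorem IsGolaySet.even_card_inter {s t : Finset (Fin 24)} (hs : IsGolaySet s)
    (ht : IsGolaySet t) : Even (s ∩ t).card := by
  rw [← ZMod.natCast_eq_zero_iff_even, ← charWord_dotProduct]
  exact dotProduct_eq_zero_of_mem_golayCode hs ht

set_option maxRecDepth 10000 in
theorem golayWords_cpop :
    golayWords.all (fun c => c.cpop.toNat ∈ [0, 8, 12, 16, 24]) = true := by
  decide +kernel

theorem IsGolaySet.card_mem {s : Finset (Fin 24)} (hs : IsGolaySet s) :
    s.card ∈ [0, 8, 12, 16, 24] := by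
  obtain ⟨c, hc, rfl⟩ := isGolaySet_iff.1 hs
  rw [← toNat_cpop_eq_card_bitSet]
  exact of_decide_eq_true (List.all_eq_true.1 golayWords_cpop c hc)

theorem IsGolaySet.eight_le_card {s : Finset (Fin 24)} (hs : IsGolaySet s) (h : s.Nonempty) :
    8 ≤ s.card := by
  have := hs.card_mem
  have := h.card_pos
  grind

theorem IsGolaySet.four_dvd_card {s : Finset (Fin 24)} (hs : IsGolaySet s) : 4 ∣ s.card := by
  have := hs.card_mem
  grind

/-- The last three coordinates, on which the points `A` and `B` are supported. -/
def triple : Finset (Fin 24) := {21, 22, 23}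

open Classical in
/-- The codewords vanishing on `triple`. -/
noncomputable def shortenedGolaySets : Finset (Finset (Fin 24)) :=
  {s | IsGolaySet s ∧ Disjoint s triple}

open Classical in
/-- The octads (codewords of weight eight) containing `triple`. -/
noncomputable def tripleOctads : Finset (Finset (Fin 24)) :=
  {s | IsGolaySet s ∧ s.card = 8 ∧ triple ⊆ s}

theorem mem_shortenedGolaySets {s : Finset (Fin 24)} :
    s ∈ shortenedGolaySets ↔ IsGolaySet s ∧ Disjoint s triple := by
  simp [shortenedGolaySets]

theorem mem_tripleOctads {s : Finset (Fin 24)} :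
    s ∈ tripleOctads ↔ IsGolaySet s ∧ s.card = 8 ∧ triple ⊆ s := by
  simp [tripleOctads]

-- `xorSpan` lists these words in increasing order, so distinctness needs only a linear check.
theorem card_eq_length_filter_golayWords {F : Finset (Finset (Fin 24))}
    {P : Finset (Fin 24) → Prop} {p : BitVec 24 → Bool} (hF : ∀ s, s ∈ F ↔ IsGolaySet s ∧ P s)
    (hp : ∀ c, P (bitSet c) ↔ p c) (sorted : (golayWords.filter p).IsChain (· < ·)) :
    F.card = (golayWords.filter p).length := by
  have F_eq : F = (golayWords.filter p).toFinset.image bitSet := by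
    ext s
    simp only [hF, isGolaySet_iff, Finset.mem_image, List.mem_toFinset, List.mem_filter]
    grind
  rw [F_eq, Finset.card_image_of_injective _ bitSet_injective,
    List.toFinset_card_of_nodup sorted.pairwise.nodup]

set_option maxRecDepth 10000 in
theorem card_shortenedGolaySets : shortenedGolaySets.card = 512 := by
  rw [card_eq_length_filter_golayWords (fun _ => mem_shortenedGolaySets)
    (p := fun c => !c.getMsbD 21 && !c.getMsbD 22 && !c.getMsbD 23)]
  · decide +kernel
  · simp [triple, mem_bitSet, and_assoc]
  · decide +kernel

set_option maxRecDepth 10000 in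
theorem card_tripleOctads : tripleOctads.card = 21 := by
  rw [card_eq_length_filter_golayWords (fun _ => mem_tripleOctads)
    (p := fun c => c.getMsbD 21 && c.getMsbD 22 && c.getMsbD 23 && c.cpop.toNat == 8)]
  · decide +kernel
  · intro c
    simp only [triple, Finset.insert_subset_iff, Finset.singleton_subset_iff, mem_bitSet,
      ← toNat_cpop_eq_card_bitSet, Bool.and_eq_true, beq_iff_eq]
    tauto
  · decide +kernel

end Golay

section Leech

variable {x y : Fin 24 → ℤ}

theorem isLeech_iff_exists_isGolaySet :
    IsLeech x ↔ ∃ m : ℤ, (m = 0 ∨ m = 1) ∧ ∃ s, IsGolaySet s ∧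
      (∀ i, 4 ∣ x i - m - if i ∈ s then 2 else 0) ∧ 8 ∣ (∑ i, x i) - 4 * m := by
  constructor
  · rintro ⟨m, hm, h2, hc, h8⟩
    refine ⟨m, hm, ({i | 4 ∣ x i - m - 2} : Finset (Fin 24)), ?_, fun i => ?_, h8⟩
    · unfold IsGolaySet charWord
      simpa using hc
    · have := h2 i
      simp only [Finset.mem_filter, Finset.mem_univ, true_and]
      split_ifs <;> omega
  · rintro ⟨m, hm, s, hs, h4, h8⟩
    refine ⟨m, hm, fun i => ?_, ?_, h8⟩
    · have := h4 i
      split_ifs at this <;> omega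
    · have mem_iff : ∀ i, 4 ∣ x i - m - 2 ↔ i ∈ s := fun i => by
        have := h4 i
        split_ifs at this with hi <;> simp only [hi, iff_true, iff_false] <;> omega
      unfold IsGolaySet charWord at hs
      simpa only [mem_iff] using hs

theorem intCast_zmod_two_eq_ite (a : ℤ) : (a : ZMod 2) = if 2 ∣ a then 0 else 1 := by
  split_ifs with h
  · exact (ZMod.intCast_zmod_eq_zero_iff_dvd a 2).2 h
  · exact ZMod.intCast_eq_one_iff_odd.2 (by rwa [← Int.not_even_iff_odd, even_iff_two_dvd])

theorem isLeech_iff_exists_intCast :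
    IsLeech x ↔ ∃ (m : ℤ) (c z : Fin 24 → ℤ), (∀ i, x i = m + 2 * c i + 4 * z i) ∧
      (fun i => (c i : ZMod 2)) ∈ GolayCode ∧ 8 ∣ (∑ i, x i) - 4 * m := by
  constructor
  · rw [isLeech_iff_exists_isGolaySet]
    rintro ⟨m, -, s, hs, h4, h8⟩
    choose z hz using h4
    refine ⟨m, fun i => if i ∈ s then 1 else 0, z, fun i => ?_, ?_, h8⟩
    · have := hz i
      dsimp only
      split_ifs at this ⊢ <;> linarith
    · unfold IsGolaySet charWord at hs
      simpa [Int.cast_ite] using hs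
  · rintro ⟨m, c, z, hx, hc, h8⟩
    refine ⟨m % 2, by omega, fun i => by grind, ?_, by omega⟩
    convert GolayCode.add_mem hc (GolayCode.smul_mem ((m / 2 : ℤ) : ZMod 2) isGolaySet_univ)
      using 1
    funext i
    have residue : 4 ∣ x i - m % 2 - 2 ↔ ¬ (2 : ℤ) ∣ c i + m / 2 := by grind
    rw [Pi.add_apply, Pi.smul_apply, charWord, if_pos (Finset.mem_univ i), smul_eq_mul, mul_one,
      ← Int.cast_add, intCast_zmod_two_eq_ite, if_congr residue rfl rfl, ite_not]

theorem IsLeech.sub (hx : IsLeech x) (hy : IsLeech y) : IsLeech (x - y) := by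
  rw [isLeech_iff_exists_intCast] at *
  obtain ⟨m, c, z, hx, hc, h8⟩ := hx
  obtain ⟨m', c', z', hy, hc', h8'⟩ := hy
  refine ⟨m - m', c - c', z - z', fun i => ?_, ?_, ?_⟩
  · simp only [Pi.sub_apply, hx i, hy i]
    ring
  · simpa [Pi.sub_def] using GolayCode.sub_mem hc hc'
  · simp only [Pi.sub_apply, Finset.sum_sub_distrib]
    omega

theorem IsLeech.eight_dvd_dotProduct (hx : IsLeech x) (hy : IsLeech y) : 8 ∣ x ⬝ᵥ y := by
  rw [isLeech_iff_exists_intCast] at *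
  obtain ⟨m, c, z, hx, hc, t, ht⟩ := hx
  obtain ⟨m', c', z', hy, hc', t', ht'⟩ := hy
  obtain ⟨k, hk⟩ : 2 ∣ ∑ i, c i * c' i := by
    refine (ZMod.intCast_zmod_eq_zero_iff_dvd _ 2).1 ?_
    simpa [dotProduct] using dotProduct_eq_zero_of_mem_golayCode hc hc'
  have expand : x ⬝ᵥ y = m * ∑ i, y i + m' * ∑ i, x i - ∑ _i : Fin 24, m * m' +
      4 * ∑ i, c i * c' i + 8 * ∑ i, (c i * z' i + z i * c' i + 2 * z i * z' i) := by
    simp only [dotProduct, Finset.mul_sum, ← Finset.sum_add_distrib, ← Finset.sum_sub_distrib]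
    exact Finset.sum_congr rfl fun i _ => by rw [hx i, hy i]; ring
  rw [expand, hk, show ∑ i, x i = 8 * t + 4 * m by linarith,
    show ∑ i, y i = 8 * t' + 4 * m' by linarith, Finset.sum_const, Finset.card_univ,
    Fintype.card_fin]
  exact ⟨m * t' + m' * t - 2 * m * m' + k + ∑ i, (c i * z' i + z i * c' i + 2 * z i * z' i),
    by ring⟩

theorem mul_card_le_dotProduct_self {ι : Type*} [Fintype ι] {x : ι → ℤ} {s : Finset ι} {a : ℤ}
    (h : ∀ i ∈ s, a ≤ x i * x i) : a * s.card ≤ x ⬝ᵥ x :=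
  calc a * s.card = s.card • a := by rw [nsmul_eq_mul, mul_comm]
    _ ≤ ∑ i ∈ s, x i * x i := s.card_nsmul_le_sum _ _ h
    _ ≤ x ⬝ᵥ x := Finset.sum_le_univ_sum_of_nonneg fun i => mul_self_nonneg (x i)

theorem dvd_dotProduct_self_of_four_dvd {ι : Type*} [Fintype ι] {x : ι → ℤ} (h4 : ∀ i, 4 ∣ x i)
    (h8 : 8 ∣ ∑ i, x i) : 32 ∣ x ⬝ᵥ x := by
  choose z hz using h4
  have sum_eq : ∑ i, x i = 4 * ∑ i, z i := by simp only [hz, Finset.mul_sum]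
  have norm_eq : x ⬝ᵥ x = 16 * (∑ i, z i + ∑ i, z i * (z i - 1)) := by
    rw [← Finset.sum_add_distrib, Finset.mul_sum]
    exact Finset.sum_congr rfl fun i _ => by rw [hz i]; ring
  have even_sum : 2 ∣ ∑ i, z i * (z i - 1) :=
    Finset.dvd_sum fun i _ => (Int.even_mul_pred_self (z i)).two_dvd
  omega

theorem four_le_mul_self_of_four_dvd_sub_two {a : ℤ} (h : 4 ∣ a - 2) : 4 ≤ a * a := by
  have : a ≤ -2 ∨ 2 ≤ a := by omega
  rcases this with h | h <;> nlinarith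

theorem IsLeech.eq_zero_of_dotProduct_self_lt (hx : IsLeech x) (h : x ⬝ᵥ x < 24) : x = 0 := by
  obtain ⟨m, rfl | rfl, s, hs, h4, h8⟩ := isLeech_iff_exists_isGolaySet.1 hx
  · obtain rfl | hne := s.eq_empty_or_nonempty
    · have := dvd_dotProduct_self_of_four_dvd (by simpa using h4) (by simpa using h8)
      have := Finset.sum_nonneg fun i (_ : i ∈ Finset.univ) => mul_self_nonneg (x i)
      refine dotProduct_self_eq_zero.1 ?_
      grind [dotProduct]
    · have := hs.eight_le_card hne
      have : 4 * (s.card : ℤ) ≤ x ⬝ᵥ x := mul_card_le_dotProduct_self fun i hi =>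
        four_le_mul_self_of_four_dvd_sub_two (by simpa [hi] using h4 i)
      omega
  · have : 1 * ((Finset.univ : Finset (Fin 24)).card : ℤ) ≤ x ⬝ᵥ x :=
      mul_card_le_dotProduct_self fun i _ => by
        have : x i ≠ 0 := by
          have := h4 i
          split_ifs at this <;> omega
        have := mul_self_pos.2 this
        omega
    rw [Finset.card_univ, Fintype.card_fin] at this
    omega

theorem isLeech_vA : IsLeech vA :=
  isLeech_iff_exists_isGolaySet.2 ⟨0, .inl rfl, ∅, GolayCode.zero_mem, by decide, by decide⟩

theorem isLeech_vB : IsLeech vB :=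
  isLeech_iff_exists_isGolaySet.2 ⟨0, .inl rfl, ∅, GolayCode.zero_mem, by decide, by decide⟩

end Leech

section TAB

variable {T x : Fin 24 → ℤ} {t m : ℤ} {s : Finset (Fin 24)}

theorem leechInner_eq_dotProduct_div (x y : Fin 24 → ℤ) :
    leechInner x y = ((x ⬝ᵥ y : ℤ) : ℚ) / 8 := by
  simp [leechInner, dotProduct]

theorem sum_eq_sum_compl_triple_add {M : Type*} [AddCommMonoid M] (f : Fin 24 → M) :
    ∑ i, f i = ∑ i ∈ tripleᶜ, f i + (f 21 + f 22 + f 23) := by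
  rw [← Finset.sum_compl_add_sum triple, triple, Finset.sum_insert (by decide),
    Finset.sum_pair (by decide), add_assoc]

theorem dotProduct_vA (x : Fin 24 → ℤ) : x ⬝ᵥ vA = 4 * x 21 - 4 * x 23 := by
  have vA_eq : vA = Pi.single 21 4 - Pi.single 23 4 := by decide
  rw [vA_eq, dotProduct_sub, dotProduct_single, dotProduct_single]
  ring

theorem dotProduct_vB (x : Fin 24 → ℤ) : x ⬝ᵥ vB = 4 * x 22 - 4 * x 23 := by
  have vB_eq : vB = Pi.single 22 4 - Pi.single 23 4 := by decide
  rw [vB_eq, dotProduct_sub, dotProduct_single, dotProduct_single]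
  ring

theorem mem_TAB_iff :
    T ∈ TAB ↔ IsLeech T ∧ T ⬝ᵥ T = 32 ∧ T 21 = T 23 + 4 ∧ T 22 = T 23 + 4 := by
  have inner_eq_four (x : Fin 24 → ℤ) : leechInner x x = 4 ↔ x ⬝ᵥ x = 32 := by
    rw [leechInner_eq_dotProduct_div, div_eq_iff (by norm_num)]
    norm_num
    norm_cast
  have vA_vA : vA ⬝ᵥ vA = 32 := by decide
  have vB_vB : vB ⬝ᵥ vB = 32 := by decide
  simp only [TAB, Set.mem_ofPred_eq, inner_eq_four, sub_dotProduct, dotProduct_sub,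
    dotProduct_comm vA T, dotProduct_comm vB T, dotProduct_vA T, dotProduct_vB T, vA_vA, vB_vB]
  grind

/-- The vector that agrees with `x` off `triple` and reads `(t + 4, t + 4, t)` on `triple`; every
point of `TAB` has this shape. -/
def tailed (x : Fin 24 → ℤ) (t : ℤ) : Fin 24 → ℤ :=
  fun i => if i ∈ triple then (if i = 23 then t else t + 4) else x i

theorem tailed_apply_of_notMem {i : Fin 24} (hi : i ∉ triple) : tailed x t i = x i := if_neg hi

theorem eq_tailed_of_mem_TAB (hT : T ∈ TAB) : T = tailed T (T 23) := by
  obtain ⟨-, -, h21, h22⟩ := mem_TAB_iff.1 hT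
  funext i
  by_cases hi : i ∈ triple
  · have : i = 21 ∨ i = 22 ∨ i = 23 := by simpa [triple] using hi
    rcases this with rfl | rfl | rfl
    · exact h21
    · exact h22
    · rfl
  · exact (tailed_apply_of_notMem hi).symm

theorem eq_tailed_of_forall (hT : T ∈ TAB) (last : T 23 = t) (h : ∀ i ∈ tripleᶜ, T i = x i) :
    T = tailed x t := by
  rw [eq_tailed_of_mem_TAB hT, last]
  funext i
  by_cases hi : i ∈ triple
  · simp only [tailed, if_pos hi]
  · simp only [tailed, if_neg hi, h i (Finset.mem_compl.2 hi)]

theorem sum_tailed (x : Fin 24 → ℤ) (t : ℤ) :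
    ∑ i, tailed x t i = ∑ i ∈ tripleᶜ, x i + 3 * t + 8 := by
  have off_triple : ∑ i ∈ tripleᶜ, tailed x t i = ∑ i ∈ tripleᶜ, x i :=
    Finset.sum_congr rfl fun i hi => tailed_apply_of_notMem (Finset.mem_compl.1 hi)
  rw [sum_eq_sum_compl_triple_add, off_triple]
  change _ + (t + 4 + (t + 4) + t) = _
  ring

theorem tailed_dotProduct_tailed (x y : Fin 24 → ℤ) (t u : ℤ) :
    tailed x t ⬝ᵥ tailed y u = ∑ i ∈ tripleᶜ, x i * y i + 2 * (t + 4) * (u + 4) + t * u := by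
  have off_triple : ∑ i ∈ tripleᶜ, tailed x t i * tailed y u i = ∑ i ∈ tripleᶜ, x i * y i :=
    Finset.sum_congr rfl fun i hi => by
      simp only [tailed_apply_of_notMem (Finset.mem_compl.1 hi)]
  rw [dotProduct, sum_eq_sum_compl_triple_add, off_triple]
  change _ + ((t + 4) * (u + 4) + (t + 4) * (u + 4) + t * u) = _
  ring

theorem tailed_mem_TAB (hm : m = 0 ∨ m = 1) (hs : IsGolaySet s)
    (h4 : ∀ i, 4 ∣ (if i ∈ triple then t else x i) - m - if i ∈ s then 2 else 0)
    (h8 : 8 ∣ ∑ i ∈ tripleᶜ, x i + 3 * t - 4 * m)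
    (norm_eq : ∑ i ∈ tripleᶜ, x i * x i = -t * (3 * t + 16)) : tailed x t ∈ TAB := by
  refine mem_TAB_iff.2 ⟨isLeech_iff_exists_isGolaySet.2 ⟨m, hm, s, hs, fun i => ?_, ?_⟩, ?_,
    rfl, rfl⟩
  · have := h4 i
    simp only [tailed]
    split_ifs at this ⊢ <;> omega
  · rw [sum_tailed]
    omega
  · rw [tailed_dotProduct_tailed, norm_eq]
    ring

theorem sum_mul_self_of_mem_TAB (hT : T ∈ TAB) :
    ∑ i ∈ tripleᶜ, T i * T i = -T 23 * (3 * T 23 + 16) := by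
  have norm_eq := (mem_TAB_iff.1 hT).2.1
  rw [eq_tailed_of_mem_TAB hT, tailed_dotProduct_tailed] at norm_eq
  linarith

theorem exists_isGolaySet_of_mem_TAB (hT : T ∈ TAB) :
    ∃ m : ℤ, (m = 0 ∨ m = 1) ∧ ∃ s, IsGolaySet s ∧
      (∀ i, 4 ∣ (if i ∈ triple then T 23 else T i) - m - if i ∈ s then 2 else 0) ∧
      8 ∣ ∑ i ∈ tripleᶜ, T i + 3 * T 23 - 4 * m := by
  obtain ⟨m, hm, s, hs, h4, h8⟩ := isLeech_iff_exists_isGolaySet.1 (mem_TAB_iff.1 hT).1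
  refine ⟨m, hm, s, hs, fun i => ?_, ?_⟩
  · have := h4 i
    rw [eq_tailed_of_mem_TAB hT, tailed] at this
    split_ifs at this ⊢ <;> omega
  · rw [eq_tailed_of_mem_TAB hT, sum_tailed] at h8
    omega

theorem card_compl_triple : tripleᶜ.card = 21 := rfl

theorem last_eq_of_mem_TAB (hT : T ∈ TAB) : T 23 = 0 ∨ T 23 = -4 ∨ T 23 = -2 ∨ T 23 = -3 := by
  have norm_eq := sum_mul_self_of_mem_TAB hT
  have norm_nonneg : 0 ≤ ∑ i ∈ tripleᶜ, T i * T i :=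
    Finset.sum_nonneg fun i _ => mul_self_nonneg (T i)
  have norm_of_odd (h : Odd (T 23)) : 21 ≤ ∑ i ∈ tripleᶜ, T i * T i := by
    obtain ⟨m, hm, s, -, h4, -⟩ := exists_isGolaySet_of_mem_TAB hT
    have one_le (i) (hi : i ∈ tripleᶜ) : 1 ≤ T i * T i := by
      have : T i ≠ 0 := by grind [Finset.mem_compl]
      exact mul_self_pos.2 this
    simpa [card_compl_triple] using Finset.card_nsmul_le_sum _ _ _ one_le
  generalize T 23 = t at *
  have : -5 ≤ t := by nlinarith
  have : t ≤ 0 := by nlinarith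
  interval_cases t <;> grind

end TAB

section Families

variable {T : Fin 24 → ℤ} {O : Finset (Fin 24)}

/-- The point `(0²¹, 4, 4, 0)` of `TAB`. -/
def tabZero : Fin 24 → ℤ := tailed 0 0

/-- The vector with `a` at `i` and `(0, 0, -4)` on `triple`, a point of `TAB` for `a = ±4`. -/
def tabSingle (i : Fin 24) (a : ℤ) : Fin 24 → ℤ := tailed (Pi.single i a) (-4)

/-- The vector with `-2` on `S`, `2` on the rest of `O` and `(2, 2, -2)` on `triple`, a point of
`TAB` for an octad `O ⊇ triple` and `S ⊆ O \ triple` of odd cardinality. -/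
def tabOctad (O S : Finset (Fin 24)) : Fin 24 → ℤ :=
  tailed (fun j => if j ∈ O then if j ∈ S then -2 else 2 else 0) (-2)

/-- The vector with `-1` on `w`, `1` off `w` and `(1, 1, -3)` on `triple`, a point of `TAB` for a
codeword `w` vanishing on `triple`. -/
def tabWord (w : Finset (Fin 24)) : Fin 24 → ℤ := tailed (fun j => if j ∈ w then -1 else 1) (-3)

/-- The subsets of odd cardinality. -/
def oddSubsets {ι : Type*} (s : Finset ι) : Finset (Finset ι) :=
  {t ∈ s.powerset | Odd t.card}

theorem mem_oddSubsets {ι : Type*} {s t : Finset ι} : t ∈ oddSubsets s ↔ t ⊆ s ∧ Odd t.card := by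
  simp [oddSubsets]

theorem sum_ite_mem_const {ι : Type*} [DecidableEq ι] {s t : Finset ι} (h : t ⊆ s) (a b : ℤ) :
    ∑ i ∈ s, (if i ∈ t then a else b) = b * s.card + (a - b) * t.card := by
  have split_term (i : ι) : (if i ∈ t then a else b) = b + if i ∈ t then a - b else 0 := by
    split_ifs <;> ring
  simp only [split_term, Finset.sum_add_distrib, Finset.sum_ite_mem, Finset.sum_const,
    Finset.inter_eq_right.2 h, nsmul_eq_mul, mul_comm]

theorem sum_compl_triple_ite_mem {M : Type*} [AddCommMonoid M] (s : Finset (Fin 24))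
    (f : Fin 24 → M) :
    ∑ i ∈ tripleᶜ, (if i ∈ s then f i else 0) = ∑ i ∈ s \ triple, f i := by
  rw [Finset.sum_ite_mem, Finset.inter_comm, ← Finset.sdiff_eq_inter_compl]

theorem card_sdiff_triple (hO : O ∈ tripleOctads) : (O \ triple).card = 5 := by
  obtain ⟨-, card_O, subset⟩ := mem_tripleOctads.1 hO
  rw [Finset.card_sdiff_of_subset subset, card_O]
  rfl

theorem tabZero_mem_TAB : tabZero ∈ TAB :=
  tailed_mem_TAB (m := 0) (.inl rfl) GolayCode.zero_mem (s := ∅) (by simp) (by simp) (by simp)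

theorem tabSingle_mem_TAB {i : Fin 24} (hi : i ∈ tripleᶜ) {a : ℤ} (ha : a = 4 ∨ a = -4) :
    tabSingle i a ∈ TAB := by
  refine tailed_mem_TAB (m := 0) (.inl rfl) GolayCode.zero_mem (s := ∅) (fun j => ?_) ?_ ?_
  · simp only [Pi.single_apply, Finset.notMem_empty, if_false]
    grind
  · rw [Finset.sum_pi_single', if_pos hi]
    omega
  · rw [Finset.sum_eq_single_of_mem i hi fun j _ hj => by simp [hj], Pi.single_eq_same]
    rcases ha with rfl | rfl <;> rfl

theorem tabOctad_mem_TAB (hO : O ∈ tripleOctads) {S : Finset (Fin 24)}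
    (hS : S ∈ oddSubsets (O \ triple)) : tabOctad O S ∈ TAB := by
  obtain ⟨golay_O, -, triple_subset⟩ := mem_tripleOctads.1 hO
  obtain ⟨subset, k, hk⟩ := mem_oddSubsets.1 hS
  refine tailed_mem_TAB (m := 0) (.inl rfl) golay_O (fun j => ?_) ?_ ?_
  · have := @triple_subset j
    grind
  · rw [sum_compl_triple_ite_mem, sum_ite_mem_const subset, card_sdiff_triple hO, hk]
    push_cast
    omega
  · have square (j : Fin 24) : (if j ∈ O then if j ∈ S then (-2 : ℤ) else 2 else 0) *
        (if j ∈ O then if j ∈ S then -2 else 2 else 0) = if j ∈ O then 4 else 0 := by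
      split_ifs <;> rfl
    simp only [square]
    rw [sum_compl_triple_ite_mem, Finset.sum_const, card_sdiff_triple hO]
    rfl

theorem tabWord_mem_TAB {w : Finset (Fin 24)} (hw : w ∈ shortenedGolaySets) : tabWord w ∈ TAB := by
  obtain ⟨golay_w, disj⟩ := mem_shortenedGolaySets.1 hw
  have notMem {j : Fin 24} (hj : j ∈ triple) : j ∉ w := Finset.disjoint_right.1 disj hj
  refine tailed_mem_TAB (m := 1) (.inr rfl) golay_w (fun j => ?_) ?_ ?_
  · grind
  · have subset : w ⊆ tripleᶜ := Finset.subset_compl_iff_disjoint_right.2 disj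
    have := golay_w.four_dvd_card
    rw [sum_ite_mem_const subset, card_compl_triple]
    omega
  · have square (j : Fin 24) :
        (if j ∈ w then (-1 : ℤ) else 1) * (if j ∈ w then -1 else 1) = 1 := by
      split_ifs <;> rfl
    simp only [square]
    rfl

theorem mem_TAB_and_last_eq_zero_iff : T ∈ TAB ∧ T 23 = 0 ↔ T = tabZero := by
  refine ⟨fun ⟨hT, last⟩ => ?_, by rintro rfl; exact ⟨tabZero_mem_TAB, rfl⟩⟩
  have norm_eq := sum_mul_self_of_mem_TAB hT
  rw [last, neg_zero, zero_mul, Finset.sum_eq_zero_iff_of_nonneg fun i _ => mul_self_nonneg (T i)]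
    at norm_eq
  exact eq_tailed_of_forall hT last fun i hi => mul_self_eq_zero.1 (norm_eq i hi)

theorem exists_eq_single_of_sum_mul_self_eq {ι : Type*} {F : Finset ι} {x : ι → ℤ}
    (h4 : ∀ i ∈ F, 4 ∣ x i) (h : ∑ i ∈ F, x i * x i = 16) :
    ∃ i ∈ F, (x i = 4 ∨ x i = -4) ∧ ∀ j ∈ F, j ≠ i → x j = 0 := by
  classical
  obtain ⟨i, hi, ne_zero⟩ := Finset.exists_ne_zero_of_sum_ne_zero (h.trans_ne (by norm_num))
  obtain ⟨k, hk⟩ := h4 i hi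
  have k_sq_pos : 0 < k * k := mul_self_pos.2 (by rintro rfl; simp [hk] at ne_zero)
  have rest_nonneg : ∀ j ∈ F.erase i, 0 ≤ x j * x j := fun j _ => mul_self_nonneg (x j)
  have split := Finset.add_sum_erase F (fun j => x j * x j) hi
  have x_sq : x i * x i = 16 * (k * k) := by rw [hk]; ring
  have rest_eq_zero : ∑ j ∈ F.erase i, x j * x j = 0 := by
    have := Finset.sum_nonneg rest_nonneg
    omega
  refine ⟨i, hi, mul_self_eq_mul_self_iff.1 (by omega), fun j hj hji => ?_⟩
  exact mul_self_eq_zero.1 <| (Finset.sum_eq_zero_iff_of_nonneg rest_nonneg).1 rest_eq_zero j <|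
    Finset.mem_erase.2 ⟨hji, hj⟩

theorem mem_TAB_and_last_eq_neg_four_iff :
    T ∈ TAB ∧ T 23 = -4 ↔ ∃ i ∈ tripleᶜ, ∃ a : ℤ, (a = 4 ∨ a = -4) ∧ T = tabSingle i a := by
  refine ⟨fun ⟨hT, last⟩ => ?_, ?_⟩
  · have norm_eq : ∑ i ∈ tripleᶜ, T i * T i = 16 := by rw [sum_mul_self_of_mem_TAB hT, last]; rfl
    obtain ⟨m, hm, s, hs, h4, -⟩ := exists_isGolaySet_of_mem_TAB hT
    rw [last] at h4
    obtain rfl : m = 0 := by grind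
    have subset : s ⊆ tripleᶜ := fun j hj => by grind [Finset.mem_compl]
    -- A nonempty codeword would contribute at least `8 · 2²` to the norm.
    have s_eq : s = ∅ := by
      by_contra hne
      have := hs.eight_le_card (Finset.nonempty_iff_ne_empty.2 hne)
      have : s.card • 4 ≤ ∑ i ∈ s, T i * T i := Finset.card_nsmul_le_sum _ _ _ fun i hi =>
        four_le_mul_self_of_four_dvd_sub_two (by grind [Finset.mem_compl])
      have : ∑ i ∈ s, T i * T i ≤ ∑ i ∈ tripleᶜ, T i * T i :=
        Finset.sum_le_sum_of_subset_of_nonneg subset fun i _ _ => mul_self_nonneg (T i)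
      simp only [nsmul_eq_mul] at *
      omega
    obtain ⟨i, hi, value, rest⟩ :=
      exists_eq_single_of_sum_mul_self_eq (F := tripleᶜ) (x := T)
        (by grind [Finset.mem_compl]) norm_eq
    exact ⟨i, hi, T i, value, eq_tailed_of_forall hT last fun j hj => by grind⟩
  · rintro ⟨i, hi, a, ha, rfl⟩
    exact ⟨tabSingle_mem_TAB hi ha, rfl⟩

theorem exists_mem_tripleOctads_of_last_eq_neg_two (hT : T ∈ TAB) (last : T 23 = -2) :
    ∃ O ∈ tripleOctads, (∀ i ∈ tripleᶜ, T i * T i = if i ∈ O then 4 else 0) ∧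
      8 ∣ ∑ i ∈ tripleᶜ, T i - 6 := by
  have norm_eq : ∑ i ∈ tripleᶜ, T i * T i = 20 := by rw [sum_mul_self_of_mem_TAB hT, last]; rfl
  obtain ⟨m, hm, O, golay_O, h4, h8⟩ := exists_isGolaySet_of_mem_TAB hT
  rw [last] at h4 h8
  obtain rfl : m = 0 := by grind
  have triple_subset : triple ⊆ O := fun j hj => by grind
  have four_le : ∀ i ∈ tripleᶜ, (if i ∈ O then 4 else 0) ≤ T i * T i := fun i hi => by
    split_ifs with hiO
    · exact four_le_mul_self_of_four_dvd_sub_two (by grind [Finset.mem_compl])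
    · exact mul_self_nonneg (T i)
  have sum_four : ∑ i ∈ tripleᶜ, (if i ∈ O then (4 : ℤ) else 0) = 4 * (O \ triple).card := by
    rw [sum_compl_triple_ite_mem, Finset.sum_const, nsmul_eq_mul, mul_comm]
  have card_O : O.card = 8 := by
    have := golay_O.eight_le_card (Finset.Nonempty.mono triple_subset ⟨23, by decide⟩)
    have := Finset.card_sdiff_add_card_eq_card triple_subset
    have := Finset.sum_le_sum four_le
    have : triple.card = 3 := rfl
    omega
  have hO : O ∈ tripleOctads := mem_tripleOctads.2 ⟨golay_O, card_O, triple_subset⟩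
  have sum_eq : ∑ i ∈ tripleᶜ, (if i ∈ O then (4 : ℤ) else 0) = ∑ i ∈ tripleᶜ, T i * T i := by
    rw [sum_four, card_sdiff_triple hO, norm_eq]
    rfl
  exact ⟨O, hO, fun i hi => ((Finset.sum_eq_sum_iff_of_le four_le).1 sum_eq i hi).symm, by omega⟩

theorem mem_TAB_and_last_eq_neg_two_iff :
    T ∈ TAB ∧ T 23 = -2 ↔
      ∃ O ∈ tripleOctads, ∃ S ∈ oddSubsets (O \ triple), T = tabOctad O S := by
  refine ⟨fun ⟨hT, last⟩ => ?_, ?_⟩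
  · obtain ⟨O, hO, square_eq, h8⟩ := exists_mem_tripleOctads_of_last_eq_neg_two hT last
    have value (i) (hi : i ∈ tripleᶜ) : T i =
        if i ∈ O then if i ∈ {j ∈ O \ triple | T j = -2} then -2 else 2 else 0 := by
      have square := square_eq i hi
      split_ifs at square with hiO
      · have : T i = 2 ∨ T i = -2 := mul_self_eq_mul_self_iff.1 square
        grind [Finset.mem_compl]
      · rw [if_neg hiO, mul_self_eq_zero.1 square]
    refine ⟨O, hO, {j ∈ O \ triple | T j = -2},
      mem_oddSubsets.2 ⟨Finset.filter_subset _ _, ?_⟩, eq_tailed_of_forall hT last value⟩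
    rw [Finset.sum_congr rfl value, sum_compl_triple_ite_mem,
      sum_ite_mem_const (Finset.filter_subset _ _), card_sdiff_triple hO] at h8
    rw [← Int.odd_coe_nat, Int.odd_iff]
    omega
  · rintro ⟨O, hO, S, hS, rfl⟩
    exact ⟨tabOctad_mem_TAB hO hS, rfl⟩

theorem mem_TAB_and_last_eq_neg_three_iff :
    T ∈ TAB ∧ T 23 = -3 ↔ ∃ w ∈ shortenedGolaySets, T = tabWord w := by
  refine ⟨fun ⟨hT, last⟩ => ?_, ?_⟩
  · have norm_eq : ∑ i ∈ tripleᶜ, 1 = ∑ i ∈ tripleᶜ, T i * T i := by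
      rw [sum_mul_self_of_mem_TAB hT, last]
      rfl
    obtain ⟨m, hm, w, golay_w, h4, -⟩ := exists_isGolaySet_of_mem_TAB hT
    rw [last] at h4
    obtain rfl : m = 1 := by grind
    have one_le : ∀ i ∈ tripleᶜ, 1 ≤ T i * T i := fun i hi => by
      have : T i ≠ 0 := by grind [Finset.mem_compl]
      exact mul_self_pos.2 this
    have square_eq_one := (Finset.sum_eq_sum_iff_of_le one_le).1 norm_eq
    have value (i) (hi : i ∈ tripleᶜ) : T i = if i ∈ w then -1 else 1 := by
      have := mul_self_eq_one_iff.1 (square_eq_one i hi).symm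
      grind [Finset.mem_compl]
    have disj : Disjoint w triple := Finset.disjoint_right.2 fun j hj => by grind
    exact ⟨w, mem_shortenedGolaySets.2 ⟨golay_w, disj⟩, eq_tailed_of_forall hT last value⟩
  · rintro ⟨w, hw, rfl⟩
    exact ⟨tabWord_mem_TAB hw, rfl⟩

end Families

section ThirdPoint

variable {T U : Fin 24 → ℤ} {p : (Fin 24 → ℤ) × (Fin 24 → ℤ)}

theorem mem_S0_iff : p ∈ S0 ↔ p.1 ∈ TAB ∧ p.2 ∈ TAB ∧ p.1 ⬝ᵥ p.2 = 0 := by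
  simp [S0, leechInner_eq_dotProduct_div]

/-- The point `A + B - T - U`, which completes a pair `(T, U)` of `S0` to a triple of pairwise
orthogonal points of `TAB`. -/
def thirdPoint (T U : Fin 24 → ℤ) : Fin 24 → ℤ := vA + vB - T - U

theorem thirdPoint_last (T U : Fin 24 → ℤ) : thirdPoint T U 23 = -8 - T 23 - U 23 := rfl

theorem thirdPoint_comm (T U : Fin 24 → ℤ) : thirdPoint T U = thirdPoint U T :=
  sub_right_comm _ _ _

theorem dotProduct_vA_add_vB (hT : T ∈ TAB) : T ⬝ᵥ (vA + vB) = 32 := by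
  obtain ⟨-, -, h21, h22⟩ := mem_TAB_iff.1 hT
  rw [dotProduct_add, dotProduct_vA, dotProduct_vB, h21, h22]
  ring

theorem dotProduct_thirdPoint (hT : T ∈ TAB) : T ⬝ᵥ thirdPoint T U = -(T ⬝ᵥ U) := by
  rw [thirdPoint, dotProduct_sub, dotProduct_sub, dotProduct_vA_add_vB hT, (mem_TAB_iff.1 hT).2.1]
  ring

theorem thirdPoint_dotProduct_self (hT : T ∈ TAB) (hU : U ∈ TAB) :
    thirdPoint T U ⬝ᵥ thirdPoint T U = 32 + 2 * (T ⬝ᵥ U) := by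
  have center_center : (vA + vB) ⬝ᵥ (vA + vB) = 96 := by decide
  have third_center : thirdPoint T U ⬝ᵥ (vA + vB) = 32 := by
    rw [thirdPoint, sub_dotProduct, sub_dotProduct, center_center, dotProduct_vA_add_vB hT,
      dotProduct_vA_add_vB hU]
    rfl
  have third_T : thirdPoint T U ⬝ᵥ T = -(T ⬝ᵥ U) := by
    rw [dotProduct_comm, dotProduct_thirdPoint hT]
  have third_U : thirdPoint T U ⬝ᵥ U = -(T ⬝ᵥ U) := by
    rw [dotProduct_comm, thirdPoint_comm, dotProduct_thirdPoint hU, dotProduct_comm]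
  nth_rw 2 [thirdPoint]
  rw [dotProduct_sub, dotProduct_sub, third_center, third_T, third_U]
  ring

theorem isLeech_thirdPoint (hT : IsLeech T) (hU : IsLeech U) : IsLeech (thirdPoint T U) := by
  convert (isLeech_vA.sub hT).sub (hU.sub isLeech_vB) using 1
  simp only [thirdPoint]
  abel

theorem thirdPoint_mem_TAB (h : (T, U) ∈ S0) : thirdPoint T U ∈ TAB := by
  obtain ⟨hT, hU, orth⟩ : T ∈ TAB ∧ U ∈ TAB ∧ T ⬝ᵥ U = 0 := mem_S0_iff.1 h
  obtain ⟨leech_T, -, T21, T22⟩ := mem_TAB_iff.1 hT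
  obtain ⟨leech_U, -, U21, U22⟩ := mem_TAB_iff.1 hU
  refine mem_TAB_iff.2 ⟨isLeech_thirdPoint leech_T leech_U, ?_, ?_, ?_⟩
  · rw [thirdPoint_dotProduct_self hT hU, orth]
    rfl
  · change 4 + 0 - T 21 - U 21 = -4 + -4 - T 23 - U 23 + 4
    omega
  · change 0 + 4 - T 22 - U 22 = -4 + -4 - T 23 - U 23 + 4
    omega

-- Otherwise `T ⬝ᵥ U ≤ -8`, and `thirdPoint T U` is shorter than the minimal vectors of the lattice.
theorem dotProduct_nonneg_of_mem_TAB (hT : T ∈ TAB) (hU : U ∈ TAB) : 0 ≤ T ⬝ᵥ U := by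
  by_contra! neg
  have leech_T := (mem_TAB_iff.1 hT).1
  have leech_U := (mem_TAB_iff.1 hU).1
  have := leech_T.eight_dvd_dotProduct leech_U
  have third_eq_zero : thirdPoint T U = 0 :=
    (isLeech_thirdPoint leech_T leech_U).eq_zero_of_dotProduct_self_lt <| by
      rw [thirdPoint_dotProduct_self hT hU]
      omega
  have := dotProduct_thirdPoint (U := U) hT
  rw [third_eq_zero, dotProduct_zero] at this
  omega

/-- The cyclic rotation `(T, U) ↦ (U, A + B - T - U)` of order three, which preserves `S0`. -/
def rotate (p : (Fin 24 → ℤ) × (Fin 24 → ℤ)) : (Fin 24 → ℤ) × (Fin 24 → ℤ) :=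
  (p.2, thirdPoint p.1 p.2)

theorem rotate_rotate_rotate (p : (Fin 24 → ℤ) × (Fin 24 → ℤ)) :
    rotate (rotate (rotate p)) = p := by
  ext1 <;> simp only [rotate, thirdPoint] <;> abel

theorem rotate_mem_S0 (hp : p ∈ S0) : rotate p ∈ S0 := by
  obtain ⟨-, hU, orth⟩ := mem_S0_iff.1 hp
  refine mem_S0_iff.2 ⟨hU, thirdPoint_mem_TAB hp, ?_⟩
  simp only [rotate]
  rw [thirdPoint_comm, dotProduct_thirdPoint hU, dotProduct_comm, orth, neg_zero]

theorem encard_eq_three_mul_of_order_three {α : Type*} {f : α → α} {S : Set α} {P : α → Prop}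
    (cube : ∀ x, f (f (f x)) = x) (mapsTo : ∀ x ∈ S, f x ∈ S)
    (cover : ∀ x ∈ S, P x ∨ P (f x) ∨ P (f (f x))) (excl : ∀ x ∈ S, P x → ¬ P (f x)) :
    S.encard = 3 * {x ∈ S | P x}.encard := by
  have injective : Function.Injective f := fun x y h => by rw [← cube x, h, cube y]
  have shift (Q : α → Prop) : {x ∈ S | Q (f x)}.encard = {x ∈ S | Q x}.encard := by
    rw [← injective.encard_image]
    congr 1
    ext x
    constructor
    · rintro ⟨y, ⟨hy, hQ⟩, rfl⟩
      exact ⟨mapsTo y hy, hQ⟩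
    · rintro ⟨hx, hQ⟩
      exact ⟨f (f x), ⟨mapsTo _ (mapsTo x hx), by rwa [cube]⟩, cube x⟩
  have union : S = {x ∈ S | P x} ∪ ({x ∈ S | P (f x)} ∪ {x ∈ S | P (f (f x))}) := by
    ext x
    have := cover x
    simp only [Set.mem_union, Set.mem_ofPred_eq]
    tauto
  have disj_right : Disjoint {x ∈ S | P (f x)} {x ∈ S | P (f (f x))} :=
    Set.disjoint_left.2 fun x hx hx' => excl (f x) (mapsTo x hx.1) hx.2 hx'.2
  have disj_left : Disjoint {x ∈ S | P x} ({x ∈ S | P (f x)} ∪ {x ∈ S | P (f (f x))}) := by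
    refine Set.disjoint_union_right.2 ⟨Set.disjoint_left.2 fun x hx hx' => excl x hx.1 hx.2 hx'.2,
      Set.disjoint_left.2 fun x hx hx' => excl _ (mapsTo _ (mapsTo x hx.1)) hx'.2 ?_⟩
    rw [cube]
    exact hx.2
  nth_rw 1 [union]
  rw [Set.encard_union_eq disj_left, Set.encard_union_eq disj_right, shift, shift fun x => P (f x),
    shift]
  ring

theorem encard_S0_eq_three_mul :
    S0.encard = 3 * {p ∈ S0 | p.2 23 = thirdPoint p.1 p.2 23}.encard := by
  refine encard_eq_three_mul_of_order_three rotate_rotate_rotate (fun _ => rotate_mem_S0) ?_ ?_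
  · intro p hp
    obtain ⟨hT, hU, -⟩ := mem_S0_iff.1 hp
    have := last_eq_of_mem_TAB hT
    have := last_eq_of_mem_TAB hU
    have := last_eq_of_mem_TAB (thirdPoint_mem_TAB hp)
    simp only [rotate, thirdPoint_last] at *
    omega
  · intro p _ h
    simp only [rotate, thirdPoint_last] at *
    omega

end ThirdPoint

section Count

variable {p : (Fin 24 → ℤ) × (Fin 24 → ℤ)}

theorem two_mul_card_oddSubsets {ι : Type*} {s : Finset ι} (hs : s.Nonempty) :
    2 * (oddSubsets s).card = 2 ^ s.card := by
  have parity (t : Finset ι) : (1 : ℤ) - (-1) ^ t.card = 2 * if Odd t.card then 1 else 0 := by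
    split_ifs with h
    · rw [h.neg_one_pow]
      rfl
    · rw [(Nat.not_odd_iff_even.1 h).neg_one_pow]
      rfl
  have alternating := Finset.sum_congr rfl fun t (_ : t ∈ s.powerset) => parity t
  rw [Finset.sum_sub_distrib, Finset.sum_powerset_neg_one_pow_card_of_nonempty hs,
    Finset.sum_const, Finset.card_powerset, ← Finset.mul_sum, Finset.sum_boole] at alternating
  simp only [nsmul_eq_mul, mul_one, sub_zero] at alternating
  exact_mod_cast alternating.symm

theorem card_oddSubsets_sdiff_triple {O : Finset (Fin 24)} (hO : O ∈ tripleOctads) :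
    (oddSubsets (O \ triple)).card = 16 := by
  have card_eq := card_sdiff_triple hO
  have := two_mul_card_oddSubsets (Finset.card_pos.1 (by rw [card_eq]; decide))
  rw [card_eq] at this
  omega

theorem tabZero_dotProduct_tabSingle (i : Fin 24) (a : ℤ) : tabZero ⬝ᵥ tabSingle i a = 0 := by
  simp [tabZero, tabSingle, tailed_dotProduct_tailed]

theorem tabSingle_dotProduct_tabOctad {i : Fin 24} (hi : i ∈ tripleᶜ) (a : ℤ)
    (O S : Finset (Fin 24)) :
    tabSingle i a ⬝ᵥ tabOctad O S = (a * if i ∈ O then if i ∈ S then -2 else 2 else 0) + 8 := by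
  rw [tabSingle, tabOctad, tailed_dotProduct_tailed,
    Finset.sum_eq_single_of_mem i hi fun j _ hj => by simp [hj], Pi.single_eq_same]
  ring

theorem tabOctad_dotProduct_tabWord (O S w : Finset (Fin 24)) :
    tabOctad O S ⬝ᵥ tabWord w =
      ∑ j ∈ O \ triple, (if j ∈ S then -2 else 2) * (if j ∈ w then -1 else 1) + 10 := by
  rw [tabOctad, tabWord, tailed_dotProduct_tailed, ← sum_compl_triple_ite_mem]
  simp only [ite_mul, zero_mul]
  ring

/-- The pairs of `S0` with last coordinates `0` and `-4`. -/
def zeroSinglePairs : Finset ((Fin 24 → ℤ) × (Fin 24 → ℤ)) :=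
  (tripleᶜ ×ˢ {4, -4}).image fun q => (tabZero, tabSingle q.1 q.2)

/-- The pairs of `S0` with last coordinates `-4` and `-2`. -/
noncomputable def singleOctadPairs : Finset ((Fin 24 → ℤ) × (Fin 24 → ℤ)) :=
  (tripleOctads.sigma fun O => oddSubsets (O \ triple) ×ˢ (O \ triple)).image fun q =>
    (tabSingle q.2.2 (if q.2.2 ∈ q.2.1 then 4 else -4), tabOctad q.1 q.2.1)

/-- The pairs of `S0` with last coordinates `-2` and `-3`. -/
noncomputable def octadWordPairs : Finset ((Fin 24 → ℤ) × (Fin 24 → ℤ)) :=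
  (tripleOctads ×ˢ shortenedGolaySets).image fun q =>
    (tabOctad q.1 ((q.1 \ triple) \ q.2), tabWord q.2)

theorem mem_zeroSinglePairs : p ∈ zeroSinglePairs ↔ p ∈ S0 ∧ p.1 23 = 0 ∧ p.2 23 = -4 := by
  rw [mem_S0_iff]
  constructor
  · intro hp
    obtain ⟨⟨i, a⟩, hq, rfl⟩ := Finset.mem_image.1 hp
    obtain ⟨hi, ha⟩ := Finset.mem_product.1 hq
    exact ⟨⟨tabZero_mem_TAB, tabSingle_mem_TAB hi (by simpa using ha),
      tabZero_dotProduct_tabSingle i a⟩, rfl, rfl⟩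
  · obtain ⟨T, U⟩ := p
    rintro ⟨⟨hT, hU, -⟩, lastT, lastU⟩
    obtain rfl := mem_TAB_and_last_eq_zero_iff.1 ⟨hT, lastT⟩
    obtain ⟨i, hi, a, ha, rfl⟩ := mem_TAB_and_last_eq_neg_four_iff.1 ⟨hU, lastU⟩
    exact Finset.mem_image.2 ⟨(i, a), Finset.mem_product.2 ⟨hi, by simpa using ha⟩, rfl⟩

theorem mem_singleOctadPairs : p ∈ singleOctadPairs ↔ p ∈ S0 ∧ p.1 23 = -4 ∧ p.2 23 = -2 := by
  rw [mem_S0_iff]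
  constructor
  · intro hp
    obtain ⟨⟨O, S, i⟩, hq, rfl⟩ := Finset.mem_image.1 hp
    simp only [Finset.mem_sigma, Finset.mem_product, Finset.mem_sdiff] at hq
    obtain ⟨hO, hS, hiO, hi⟩ := hq
    rw [← Finset.mem_compl] at hi
    refine ⟨⟨tabSingle_mem_TAB hi (by grind), tabOctad_mem_TAB hO hS, ?_⟩, rfl, rfl⟩
    rw [tabSingle_dotProduct_tabOctad hi, if_pos hiO]
    split_ifs <;> rfl
  · obtain ⟨T, U⟩ := p
    rintro ⟨⟨hT, hU, orth⟩, lastT, lastU⟩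
    obtain ⟨i, hi, a, ha, rfl⟩ := mem_TAB_and_last_eq_neg_four_iff.1 ⟨hT, lastT⟩
    obtain ⟨O, hO, S, hS, rfl⟩ := mem_TAB_and_last_eq_neg_two_iff.1 ⟨hU, lastU⟩
    rw [tabSingle_dotProduct_tabOctad hi] at orth
    have hiO : i ∈ O := by grind
    obtain rfl : a = if i ∈ S then 4 else -4 := by grind
    refine Finset.mem_image.2 ⟨⟨O, S, i⟩, ?_, rfl⟩
    simp only [Finset.mem_sigma, Finset.mem_product, Finset.mem_sdiff]
    exact ⟨hO, hS, hiO, Finset.mem_compl.1 hi⟩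

theorem sdiff_sdiff_mem_oddSubsets {O w : Finset (Fin 24)} (hO : O ∈ tripleOctads)
    (hw : w ∈ shortenedGolaySets) : (O \ triple) \ w ∈ oddSubsets (O \ triple) := by
  obtain ⟨golay_w, disj⟩ := mem_shortenedGolaySets.1 hw
  have even_inter := (mem_tripleOctads.1 hO).1.even_card_inter golay_w
  have inter_eq : (O \ triple) ∩ w = O ∩ w := by
    ext j
    have := @Finset.disjoint_left.1 disj j
    grind
  have := Finset.card_sdiff_add_card_inter (O \ triple) w
  rw [card_sdiff_triple hO, inter_eq] at this
  exact mem_oddSubsets.2 ⟨Finset.sdiff_subset, by grind⟩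

theorem tabOctad_orthogonal_tabWord_iff {O S w : Finset (Fin 24)} (hO : O ∈ tripleOctads)
    (hS : S ⊆ O \ triple) : tabOctad O S ⬝ᵥ tabWord w = 0 ↔ S = (O \ triple) \ w := by
  have neg_two_le : ∀ j ∈ O \ triple,
      (-2 : ℤ) ≤ (if j ∈ S then -2 else 2) * (if j ∈ w then -1 else 1) := fun j _ => by
    split_ifs <;> decide
  have sum_neg_two : ∑ j ∈ O \ triple, (-2 : ℤ) = -10 := by
    rw [Finset.sum_const, card_sdiff_triple hO]
    rfl
  rw [tabOctad_dotProduct_tabWord, add_eq_zero_iff_eq_neg, eq_comm, ← sum_neg_two,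
    Finset.sum_eq_sum_iff_of_le neg_two_le, Finset.ext_iff]
  refine forall_congr' fun j => ?_
  have := @hS j
  grind

theorem mem_octadWordPairs : p ∈ octadWordPairs ↔ p ∈ S0 ∧ p.1 23 = -2 ∧ p.2 23 = -3 := by
  rw [mem_S0_iff]
  constructor
  · intro hp
    obtain ⟨⟨O, w⟩, hq, rfl⟩ := Finset.mem_image.1 hp
    obtain ⟨hO, hw⟩ := Finset.mem_product.1 hq
    exact ⟨⟨tabOctad_mem_TAB hO (sdiff_sdiff_mem_oddSubsets hO hw), tabWord_mem_TAB hw,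
      (tabOctad_orthogonal_tabWord_iff hO Finset.sdiff_subset).2 rfl⟩, rfl, rfl⟩
  · obtain ⟨T, U⟩ := p
    rintro ⟨⟨hT, hU, orth⟩, lastT, lastU⟩
    obtain ⟨O, hO, S, hS, rfl⟩ := mem_TAB_and_last_eq_neg_two_iff.1 ⟨hT, lastT⟩
    obtain ⟨w, hw, rfl⟩ := mem_TAB_and_last_eq_neg_three_iff.1 ⟨hU, lastU⟩
    obtain rfl := (tabOctad_orthogonal_tabWord_iff hO (mem_oddSubsets.1 hS).1).1 orth
    exact Finset.mem_image.2 ⟨(O, w), Finset.mem_product.2 ⟨hO, hw⟩, rfl⟩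

theorem apply_eq_of_tailed_eq {x y : Fin 24 → ℤ} {t u : ℤ} (h : tailed x t = tailed y u) :
    ∀ i ∈ tripleᶜ, x i = y i := fun i hi => by
  simpa only [tailed_apply_of_notMem (Finset.mem_compl.1 hi)] using congrFun h i

theorem tabSingle_inj {i j : Fin 24} {a b : ℤ} (hi : i ∈ tripleᶜ) (ha : a ≠ 0)
    (h : tabSingle i a = tabSingle j b) : i = j ∧ a = b := by
  have := apply_eq_of_tailed_eq h i hi
  grind

theorem tabOctad_inj {O O' S S' : Finset (Fin 24)} (hO : O ∈ tripleOctads)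
    (hO' : O' ∈ tripleOctads) (hS : S ⊆ O \ triple) (hS' : S' ⊆ O' \ triple)
    (h : tabOctad O S = tabOctad O' S') : O = O' ∧ S = S' := by
  have triple_subset := (mem_tripleOctads.1 hO).2.2
  have triple_subset' := (mem_tripleOctads.1 hO').2.2
  have values := apply_eq_of_tailed_eq h
  constructor <;> ext j <;> grind [Finset.mem_compl]

theorem tabWord_inj {w w' : Finset (Fin 24)} (hw : w ∈ shortenedGolaySets)
    (hw' : w' ∈ shortenedGolaySets) (h : tabWord w = tabWord w') : w = w' := by
  have disj := Finset.disjoint_left.1 (mem_shortenedGolaySets.1 hw).2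
  have disj' := Finset.disjoint_left.1 (mem_shortenedGolaySets.1 hw').2
  have values := apply_eq_of_tailed_eq h
  ext j
  grind [Finset.mem_compl]

theorem card_zeroSinglePairs : zeroSinglePairs.card = 42 := by
  rw [zeroSinglePairs, Finset.card_image_of_injOn]
  · rfl
  · rintro ⟨i, a⟩ hq ⟨j, b⟩ - h
    obtain ⟨hi, ha⟩ := Finset.mem_product.1 hq
    have ha : a = 4 ∨ a = -4 := by simpa using ha
    obtain ⟨rfl, rfl⟩ := tabSingle_inj hi (by grind) (Prod.mk.inj h).2
    rfl

theorem card_singleOctadPairs : singleOctadPairs.card = 21 * (16 * 5) := by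
  rw [singleOctadPairs, Finset.card_image_of_injOn]
  · rw [Finset.card_sigma, ← card_tripleOctads, ← smul_eq_mul, ← Finset.sum_const]
    refine Finset.sum_congr rfl fun O hO => ?_
    rw [Finset.card_product, card_oddSubsets_sdiff_triple hO, card_sdiff_triple hO]
  · rintro ⟨O, S, i⟩ hq ⟨O', S', i'⟩ hq' h
    simp only [Finset.mem_coe, Finset.mem_sigma, Finset.mem_product, mem_oddSubsets,
      Finset.mem_sdiff, ← Finset.mem_compl] at hq hq'
    obtain ⟨rfl, rfl⟩ := tabOctad_inj hq.1 hq'.1 hq.2.1.1 hq'.2.1.1 (Prod.mk.inj h).2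
    obtain ⟨rfl, -⟩ := tabSingle_inj hq.2.2.2 (by grind) (Prod.mk.inj h).1
    rfl

theorem card_octadWordPairs : octadWordPairs.card = 21 * 512 := by
  rw [octadWordPairs, Finset.card_image_of_injOn]
  · rw [Finset.card_product, card_tripleOctads, card_shortenedGolaySets]
  · rintro ⟨O, w⟩ hq ⟨O', w'⟩ hq' h
    obtain ⟨hO, hw⟩ := Finset.mem_product.1 hq
    obtain ⟨hO', hw'⟩ := Finset.mem_product.1 hq'
    obtain rfl := tabWord_inj hw hw' (Prod.mk.inj h).2
    obtain ⟨rfl, -⟩ :=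
      tabOctad_inj hO hO' Finset.sdiff_subset Finset.sdiff_subset (Prod.mk.inj h).1
    rfl

theorem setOf_mem_S0_and_last_eq :
    {p ∈ S0 | p.2 23 = thirdPoint p.1 p.2 23} =
      ((zeroSinglePairs ∪ singleOctadPairs ∪ octadWordPairs : Finset _) : Set _) := by
  ext p
  simp only [Set.mem_ofPred_eq, Finset.mem_coe, Finset.mem_union, mem_zeroSinglePairs,
    mem_singleOctadPairs, mem_octadWordPairs, ← and_or_left, thirdPoint_last]
  refine and_congr_right fun hp => ?_
  obtain ⟨hT, hU, -⟩ := mem_S0_iff.1 hp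
  have := last_eq_of_mem_TAB hT
  have := last_eq_of_mem_TAB hU
  omega

theorem card_S0 : Nat.card S0 = 891 * 42 := by
  have disj_left : Disjoint zeroSinglePairs singleOctadPairs :=
    Finset.disjoint_left.2 fun p hp hp' => by grind [mem_zeroSinglePairs, mem_singleOctadPairs]
  have disj_right : Disjoint (zeroSinglePairs ∪ singleOctadPairs) octadWordPairs :=
    Finset.disjoint_left.2 fun p hp hp' => by
      grind [mem_zeroSinglePairs, mem_singleOctadPairs, mem_octadWordPairs]
  rw [Nat.card_coe_set_eq, Set.ncard, encard_S0_eq_three_mul, setOf_mem_S0_and_last_eq,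
    Set.encard_coe_eq_coe_finsetCard, Finset.card_union_of_disjoint disj_right,
    Finset.card_union_of_disjoint disj_left, card_zeroSinglePairs, card_singleOctadPairs,
    card_octadWordPairs]
  rfl

end Count

section Projection

variable {T U : Fin 24 → ℤ} {w : Fin 24 → ℚ} {p : (Fin 24 → ℤ) × (Fin 24 → ℤ)}

/-- The orthogonal complement `R_AB^⊥ ⊗ ℚ` of `A` and `B`, in coordinates. -/
def perpAB : Submodule ℚ (Fin 24 → ℚ) :=
  (LinearMap.proj 21 : (Fin 24 → ℚ) →ₗ[ℚ] ℚ).eqLocus (LinearMap.proj 23) ⊓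
    (LinearMap.proj 22 : (Fin 24 → ℚ) →ₗ[ℚ] ℚ).eqLocus (LinearMap.proj 23)

theorem mem_perpAB : w ∈ perpAB ↔ w 21 = w 23 ∧ w 22 = w 23 := by
  simp [perpAB]

theorem ratInner_vA (w : Fin 24 → ℚ) : ratInner w (toRat vA) = (w 21 - w 23) / 2 := by
  have vA_eq : toRat vA = Pi.single 21 4 - Pi.single 23 4 := by decide +kernel
  change (w ⬝ᵥ toRat vA) / 8 = _
  rw [vA_eq, dotProduct_sub, dotProduct_single, dotProduct_single]
  ring

theorem ratInner_vB (w : Fin 24 → ℚ) : ratInner w (toRat vB) = (w 22 - w 23) / 2 := by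
  have vB_eq : toRat vB = Pi.single 22 4 - Pi.single 23 4 := by decide +kernel
  change (w ⬝ᵥ toRat vB) / 8 = _
  rw [vB_eq, dotProduct_sub, dotProduct_single, dotProduct_single]
  ring

theorem mem_perpAB_iff_ratInner :
    w ∈ perpAB ↔ ratInner w (toRat vA) = 0 ∧ ratInner w (toRat vB) = 0 := by
  simp [mem_perpAB, ratInner_vA, ratInner_vB, sub_eq_zero]

theorem prPerp_eq_self (hw : w ∈ perpAB) : prPerp w = w := by
  obtain ⟨hA, hB⟩ := mem_perpAB_iff_ratInner.1 hw
  simp [prPerp, hA, hB]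

theorem toRat_sub_mem_perpAB (hT : T ∈ TAB) (hU : U ∈ TAB) : toRat (U - T) ∈ perpAB := by
  obtain ⟨-, -, T21, T22⟩ := mem_TAB_iff.1 hT
  obtain ⟨-, -, U21, U22⟩ := mem_TAB_iff.1 hU
  simp [mem_perpAB, toRat, T21, T22, U21, U22]

theorem s0map_eq_toRat_sub (hp : p ∈ S0) : s0map p = toRat (p.2 - p.1) :=
  prPerp_eq_self (toRat_sub_mem_perpAB hp.1 hp.2.1)

theorem toRat_injective : Function.Injective toRat := fun _ _ h =>
  funext fun i => Int.cast_injective (congrFun h i)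

theorem eq_of_le_dotProduct (hT : T ∈ TAB) (hU : U ∈ TAB) (h : 32 ≤ T ⬝ᵥ U) : T = U := by
  have norm_sub : (T - U) ⬝ᵥ (T - U) = 64 - 2 * (T ⬝ᵥ U) := by
    rw [sub_dotProduct, dotProduct_sub, dotProduct_sub, (mem_TAB_iff.1 hT).2.1,
      (mem_TAB_iff.1 hU).2.1, dotProduct_comm U T]
    ring
  have norm_nonneg : 0 ≤ (T - U) ⬝ᵥ (T - U) := Finset.sum_nonneg fun i _ => mul_self_nonneg _
  exact sub_eq_zero.1 (dotProduct_self_eq_zero.1 (by omega))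

theorem s0map_injOn : Set.InjOn s0map S0 := by
  rintro ⟨T, T'⟩ hp ⟨U, U'⟩ hq h
  rw [s0map_eq_toRat_sub hp, s0map_eq_toRat_sub hq] at h
  obtain ⟨hT, hT', -⟩ : T ∈ TAB ∧ T' ∈ TAB ∧ T ⬝ᵥ T' = 0 := mem_S0_iff.1 hp
  obtain ⟨-, hU', orth⟩ : U ∈ TAB ∧ U' ∈ TAB ∧ U ⬝ᵥ U' = 0 := mem_S0_iff.1 hq
  have sub_eq : T' - T = U' - U := toRat_injective h
  have dot_eq : T' ⬝ᵥ U' - T ⬝ᵥ U' = 32 := by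
    rw [← sub_dotProduct, sub_eq, sub_dotProduct, orth, (mem_TAB_iff.1 hU').2.1, sub_zero]
  have := dotProduct_nonneg_of_mem_TAB hT hU'
  obtain rfl := eq_of_le_dotProduct hT' hU' (by omega)
  rw [sub_right_injective sub_eq]

/-- The indicator vector `(0²¹, 1, 1, 1)` of `triple`. -/
def tripleVec : Fin 24 → ℚ := fun i => if i ∈ triple then 1 else 0

theorem smul_single_sub_mem_span {i : Fin 24} (hi : i ∈ tripleᶜ) {a : ℤ} (ha : a = 4 ∨ a = -4) :
    (a : ℚ) • Pi.single i (1 : ℚ) - (4 : ℚ) • tripleVec ∈ Submodule.span ℚ (s0map '' S0) := by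
  have hp : (tabZero, tabSingle i a) ∈ S0 := mem_S0_iff.2
    ⟨tabZero_mem_TAB, tabSingle_mem_TAB hi ha, tabZero_dotProduct_tabSingle i a⟩
  refine Submodule.subset_span ⟨_, hp, ?_⟩
  rw [s0map_eq_toRat_sub hp]
  funext j
  simp only [toRat, tabZero, tabSingle, tailed, tripleVec, Pi.sub_apply, Pi.smul_apply,
    Pi.single_apply, Pi.zero_apply, smul_eq_mul]
  have := Finset.mem_compl.1 hi
  split_ifs <;> first | (exfalso; grind) | norm_num

theorem tripleVec_mem_span : tripleVec ∈ Submodule.span ℚ (s0map '' S0) := by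
  have h0 : (0 : Fin 24) ∈ tripleᶜ := by decide
  convert Submodule.smul_mem _ (-1 / 8 : ℚ) (Submodule.add_mem _
    (smul_single_sub_mem_span h0 (.inl rfl)) (smul_single_sub_mem_span h0 (.inr rfl))) using 1
  push_cast
  module

theorem single_mem_span {i : Fin 24} (hi : i ∈ tripleᶜ) :
    Pi.single i (1 : ℚ) ∈ Submodule.span ℚ (s0map '' S0) := by
  convert Submodule.smul_mem _ (1 / 4 : ℚ) (Submodule.add_mem _
    (smul_single_sub_mem_span hi (.inl rfl))
    (Submodule.smul_mem _ (4 : ℚ) tripleVec_mem_span)) using 1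
  push_cast
  module

theorem eq_sum_single_add_smul_tripleVec (hw : w ∈ perpAB) :
    w = ∑ i ∈ tripleᶜ, w i • Pi.single i (1 : ℚ) + w 23 • tripleVec := by
  obtain ⟨h21, h22⟩ := mem_perpAB.1 hw
  funext j
  have : j ∈ triple → j = 21 ∨ j = 22 ∨ j = 23 := by simp [triple]
  simp only [Pi.add_apply, Finset.sum_apply, Pi.smul_apply, Pi.single_apply, smul_eq_mul,
    tripleVec, mul_ite, mul_one, mul_zero, Finset.sum_ite_eq, Finset.mem_compl]
  grind

theorem span_image_s0map : Submodule.span ℚ (s0map '' S0) = perpAB := by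
  refine le_antisymm (Submodule.span_le.2 ?_) fun w hw => ?_
  · rintro _ ⟨p, hp, rfl⟩
    rw [s0map_eq_toRat_sub hp]
    exact toRat_sub_mem_perpAB hp.1 hp.2.1
  · rw [eq_sum_single_add_smul_tripleVec hw]
    exact Submodule.add_mem _
      (Submodule.sum_mem _ fun i hi => Submodule.smul_mem _ _ (single_mem_span hi))
      (Submodule.smul_mem _ _ tripleVec_mem_span)

end Projection

/-- `|S₀| = 891·42`, the map `s₀` is injective on `S₀`, and its
image spans `R_AB^⊥ ⊗ ℚ`. -/
theorem S0_card_inj_span :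
    Nat.card ↥S0 = 891 * 42 ∧
    Function.Injective (fun p : ↥S0 => s0map p.val) ∧
    (Submodule.span ℚ {w | ∃ p ∈ S0, w = s0map p} : Set (Fin 24 → ℚ))
      = {w | ratInner w (toRat vA) = 0 ∧ ratInner w (toRat vB) = 0} := by
  refine ⟨card_S0, s0map_injOn.injective, ?_⟩
  have image_eq : {w | ∃ p ∈ S0, w = s0map p} = s0map '' S0 := by
    ext w
    simp only [Set.mem_ofPred_eq, Set.mem_image, eq_comm]
  rw [image_eq, span_image_s0map]
  ext w
  exact mem_perpAB_iff_ratInner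
end

section
/- There exists a bijection φ from the set P_X of 891 planes contained in the Fermat cubic fourfold over F̄₂ to the set T_{AB} of 891 Leech lattice points T with |OT| = |AT| = |BT| = 2, such that for all Π, Π′ ∈ P_X, the intersection number Π·Π′ equals ⟨φ(Π), φ(Π′)⟩ − 1. -/
open scoped BigOperators

/-- A plane contained in the Fermat cubic fourfold `x₁³+⋯+x₆³ = 0 ⊂ P⁵`. -/
def IsFermatPlane (K : Type*) [Field K] (P : Submodule K (Fin 6 → K)) : Prop :=
  Module.finrank K ↥P = 3 ∧ ∀ x ∈ P, ∑ i, x i ^ 3 = 0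

/-- The intersection number `Π·Π′ = (1 − (−2)^(dim(Π∩Π′)+1))/3`, in terms of
the linear dimension `d = dim(Π∩Π′)+1` (also valid for `Π = Π′`, where the
excess intersection formula gives `Π·Π = 3`). -/
def icNum (d : ℕ) : ℚ := (1 - (-2 : ℚ) ^ d) / 3

/-!
In characteristic two the cubic `∑ xᵢ³` is `h(x, x)` for the form `h(x, y) = ∑ xᵢ² yᵢ`, which is
semilinear for the Frobenius, and a plane lies in the fourfold iff it is its own orthogonal for
`h`. Such a plane is stable under the square of the Frobenius, hence defined over `F4`, where `h`
is Hermitian; after a change of coordinates the planes are the Lagrangians of the hyperbolic space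
`F4³ × F4³`.

A Lagrangian `L` is the graph of a Hermitian form on its projection `U` to the first factor, modulo
the orthogonal of `U`. Send it to the vector with entries `±(-2)^codim U` on the points of the
projective plane that lie in `U`, the signs being the values of the Hermitian form, zero on the
other points, and three tail entries that depend only on `codim U`. The inner product of two such
vectors is a Gauss sum over the fiber product of `L` and `L'` over the first factor; since Gauss
sums of Hermitian forms are powers of `-2`, it is determined by `dim (L ∩ L')`, and this gives
injectivity. The Golay words needed for membership in the Leech lattice are values of Hermitian
forms and indicators of lines. Conversely the tail of a point of `T_AB` determines how much norm is
left on the plane, and this forces its support to be everything, a line, a point or empty.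
-/

namespace EdgeCorrespondence

open Module
open scoped QuadraticAlgebra

/-! ### Hermitian forms -/

section Sesquilinear

variable {F M : Type*} [Field F] [StarRing F] [AddCommGroup M] [Module F M]

theorem finrank_map_sesquilinear {B : M →ₗ⋆[F] M →ₗ[F] F} (hB : Function.Injective B)
    (W : Submodule F M) : finrank F (W.map B) = finrank F W := by
  have h := lift_rank_eq_of_equiv_equiv (starRingEnd F) (W.equivMapOfInjective B hB).toAddEquiv
    (starRingAut (R := F)).bijective fun c w ↦ (W.equivMapOfInjective B hB).map_smulₛₗ c w
  simpa [finrank] using (congrArg Cardinal.toNat h).symm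

theorem finrank_add_finrank_orthogonalBilin [FiniteDimensional F M] {B : M →ₗ⋆[F] M →ₗ[F] F}
    (hB : Function.Injective B) (W : Submodule F M) :
    finrank F W + finrank F (W.orthogonalBilin B) = finrank F M := by
  have hW : W.orthogonalBilin B = (W.map B).dualCoannihilator := by
    ext y
    simp [Submodule.mem_dualCoannihilator]
  rw [hW, ← finrank_map_sesquilinear hB W,
    Subspace.finrank_add_finrank_dualCoannihilator_eq]

theorem orthogonalBilin_orthogonalBilin [FiniteDimensional F M] {B : M →ₗ⋆[F] M →ₗ[F] F}
    (hB : Function.Injective B) (hrefl : B.IsRefl) (W : Submodule F M) :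
    (W.orthogonalBilin B).orthogonalBilin B = W := by
  refine (Submodule.eq_of_le_of_finrank_eq (W.le_orthogonalBilin_orthogonalBilin hrefl) ?_).symm
  have := finrank_add_finrank_orthogonalBilin hB W
  have := finrank_add_finrank_orthogonalBilin hB (W.orthogonalBilin B)
  lia

variable {ι : Type*} [Fintype ι]

variable (F ι) in
/-- The standard Hermitian form `∑ i, star (u i) * v i`, conjugate-linear in the first variable. -/
def stdForm : (ι → F) →ₗ⋆[F] (ι → F) →ₗ[F] F :=
  LinearMap.mk₂'ₛₗ (starRingEnd F) (RingHom.id F) (fun u v ↦ star u ⬝ᵥ v)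
    (by simp [add_dotProduct]) (by simp [starRingEnd_apply]) (by simp [dotProduct_add]) (by simp)

theorem stdForm_apply (u v : ι → F) : stdForm F ι u v = star u ⬝ᵥ v := rfl

theorem stdForm_isSymm : (stdForm F ι).IsSymm :=
  ⟨fun u v ↦ by
    rw [stdForm_apply, stdForm_apply, starRingEnd_apply, Matrix.star_dotProduct, star_star,
      dotProduct_comm]⟩

theorem stdForm_injective : Function.Injective (stdForm F ι) := by
  classical
  intro u v huv
  ext i
  have := LinearMap.congr_fun huv (Pi.single i 1)
  simpa [stdForm_apply] using this

end Sesquilinear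

/-- The field with four elements, as `(ZMod 2)[ω]` with `ω ^ 2 = 1 + ω`. Its star operation is the
nontrivial automorphism. -/
abbrev F4 : Type := QuadraticAlgebra (ZMod 2) 1 1

namespace F4

instance : Fintype F4 := Fintype.ofEquiv _ (QuadraticAlgebra.equivProd 1 1).symm

instance : Fact (∀ r : ZMod 2, r ^ 2 ≠ 1 + 1 * r) := ⟨by decide⟩

instance : CharP F4 2 := charP_of_injective_algebraMap (algebraMap (ZMod 2) F4).injective 2

theorem card : Fintype.card F4 = 4 := by decide

theorem star_eq_sq (x : F4) : star x = x ^ 2 := by decide +revert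

theorem eq_zero_or_one_of_star_eq {x : F4} (h : star x = x) : x = 0 ∨ x = 1 := by decide +revert

theorem star_mul_self_of_ne_zero {x : F4} (h : x ≠ 0) : star x * x = 1 := by decide +revert

/-- The additive character of `F4` that extends `(-1) ^ a` from the prime field and is trivial on
`ω`; on the values `B x x` of a Hermitian form it is the sign `(-1) ^ B x x`. -/
def signChar : AddChar F4 ℤ where
  toFun x := if x.re = 0 then 1 else -1
  map_zero_eq_one' := by decide
  map_add_eq_mul' := by decide

end F4

open F4

/-! ### Gauss sums of Hermitian forms over `F4` -/

section GaussSum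

variable {M : Type*} [AddCommGroup M] [Module F4 M] {B : M →ₗ⋆[F4] M →ₗ[F4] F4}

theorem self_eq_zero_or_one (hB : B.IsSymm) (x : M) : B x x = 0 ∨ B x x = 1 :=
  eq_zero_or_one_of_star_eq (hB.eq x x)

theorem smul_smul_self {c : F4} (hc : c ≠ 0) (x : M) : B (c • x) (c • x) = B x x := by
  rw [map_smul, map_smulₛₗ, LinearMap.smul_apply, smul_smul, mul_comm, starRingEnd_apply,
    star_mul_self_of_ne_zero hc, one_smul]

theorem three_dvd_card_self_eq_one (B : M →ₗ⋆[F4] M →ₗ[F4] F4) [Fintype {x // B x x = 1}] :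
    3 ∣ Fintype.card {x // B x x = 1} := by
  classical
  have hω : (ω : F4) ≠ 0 ∧ (ω : F4) ^ 3 = 1 ∧ (ω : F4) ≠ 1 := by decide
  let f : Function.End {x // B x x = 1} := fun x ↦
    ⟨(ω : F4) • x.1, (smul_smul_self hω.1 _).trans x.2⟩
  have hf : f ^ 3 ^ 1 = 1 := by
    refine funext fun x ↦ Subtype.ext ?_
    change (ω : F4) • (ω : F4) • (ω : F4) • x.1 = x.1
    rw [smul_smul, smul_smul, ← pow_three', hω.2.1, one_smul]
  have hfix : IsEmpty f.fixedPoints := by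
    refine ⟨fun ⟨x, hx⟩ ↦ ?_⟩
    have hx' : ((ω : F4) - 1) • x.1 = 0 := by
      rw [sub_smul, one_smul, sub_eq_zero]
      exact congrArg Subtype.val hx
    have hx0 : x.1 = 0 := (smul_eq_zero.1 hx').resolve_left (sub_ne_zero.2 hω.2.2)
    simpa [hx0] using x.2
  have hmod := Equiv.Perm.card_fixedPoints_modEq hf
  rwa [Fintype.card_eq_zero (α := f.fixedPoints), Nat.modEq_zero_iff_dvd] at hmod

variable [Fintype M]

open Classical in
theorem sum_signChar_trace (hB : B.IsSymm) (z : M) :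
    ∑ x, signChar (B x z + B z x) = if z ∈ LinearMap.ker B then (Fintype.card M : ℤ) else 0 := by
  let ψ : AddChar M ℤ :=
    signChar.compAddMonoidHom ((B z).toAddMonoidHom + (B.flip z).toAddMonoidHom)
  have hψ : ψ = 0 ↔ z ∈ LinearMap.ker B := by
    constructor
    · refine fun h ↦ LinearMap.ext fun x ↦ ?_
      have key : ∀ a : F4, (∀ c : F4, signChar (c * a + star (c * a)) = 1) → a = 0 := by decide
      refine key _ fun c ↦ ?_
      simpa [ψ, ← hB.eq z, starRingEnd_apply] using DFunLike.congr_fun h (c • x)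
    · intro h
      ext x
      have hz : B z = 0 := h
      simp [ψ, ← hB.eq z, hz]
  rw [← if_congr hψ rfl rfl, ← AddChar.sum_eq_ite ψ]
  exact Finset.sum_congr rfl fun x _ ↦ congrArg signChar (add_comm _ _)

theorem sq_sum_signChar (hB : B.IsSymm) :
    (∑ x, signChar (B x x)) ^ 2 = 4 ^ (finrank F4 M + finrank F4 (LinearMap.ker B)) := by
  classical
  have expand (x z : M) : signChar (B x x) * signChar (B (x + z) (x + z)) =
      signChar (B z z) * signChar (B x z + B z x) := by
    rw [← AddChar.map_add_eq_mul, ← AddChar.map_add_eq_mul]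
    congr 1
    have : B x x + B x x = 0 := CharTwo.add_self_eq_zero _
    simp only [map_add, LinearMap.add_apply]
    linear_combination this
  have card_mul (z : M) : signChar (B z z) * (∑ x, signChar (B x z + B z x)) =
      if z ∈ LinearMap.ker B then (Fintype.card M : ℤ) else 0 := by
    rw [sum_signChar_trace hB]
    split_ifs with hz
    · rw [LinearMap.mem_ker.1 hz, LinearMap.zero_apply, AddChar.map_zero_eq_one, one_mul]
    · rw [mul_zero]
  calc (∑ x, signChar (B x x)) ^ 2
      = ∑ x, ∑ z, signChar (B x x) * signChar (B (x + z) (x + z)) := by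
        rw [sq, Finset.sum_mul_sum]
        exact Finset.sum_congr rfl fun x _ ↦ (Equiv.sum_comp (Equiv.addLeft x) _).symm
    _ = ∑ z, signChar (B z z) * ∑ x, signChar (B x z + B z x) := by
        simp_rw [expand, Finset.mul_sum]
        exact Finset.sum_comm
    _ = Fintype.card (LinearMap.ker B) * Fintype.card M := by
        simp_rw [card_mul, Finset.sum_ite, Finset.sum_const, smul_zero, add_zero, nsmul_eq_mul,
          Fintype.card_subtype]
    _ = 4 ^ (finrank F4 M + finrank F4 (LinearMap.ker B)) := by
        rw [Module.card_eq_pow_finrank (K := F4) (V := M),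
          Module.card_eq_pow_finrank (K := F4) (V := LinearMap.ker B), F4.card]
        push_cast
        ring

theorem sum_signChar_modEq_one (hB : B.IsSymm) : ∑ x, signChar (B x x) ≡ 1 [ZMOD 3] := by
  classical
  have hvalue (x : M) : signChar (B x x) = 1 - 2 * if B x x = 1 then 1 else 0 := by
    rcases self_eq_zero_or_one hB x with h | h <;> rw [h] <;> decide
  have hcard : (Fintype.card M : ℤ) ≡ 1 [ZMOD 3] := by
    rw [Module.card_eq_pow_finrank (K := F4), F4.card]
    simpa using (show (4 : ℤ) ≡ 1 [ZMOD 3] from rfl).pow (finrank F4 M)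
  have hone : ((Fintype.card {x : M // B x x = 1} : ℕ) : ℤ) ≡ 0 [ZMOD 3] :=
    Int.modEq_zero_iff_dvd.2 (Int.natCast_dvd_natCast.2 (three_dvd_card_self_eq_one B))
  simp_rw [hvalue, Finset.sum_sub_distrib, ← Finset.mul_sum, Finset.sum_boole,
    ← Fintype.card_subtype, Finset.sum_const, Finset.card_univ, nsmul_eq_mul, mul_one]
  simpa using hcard.sub (hone.mul_left 2)

theorem sum_signChar_self (hB : B.IsSymm) :
    ∑ x, signChar (B x x) = (-2) ^ (finrank F4 M + finrank F4 (LinearMap.ker B)) := by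
  set n := finrank F4 M + finrank F4 (LinearMap.ker B)
  have hpow : (-2 : ℤ) ^ n ≡ 1 [ZMOD 3] := by
    simpa using (show (-2 : ℤ) ≡ 1 [ZMOD 3] from rfl).pow n
  have hsq : (∑ x, signChar (B x x)) ^ 2 = ((-2) ^ n) ^ 2 := by
    rw [sq_sum_signChar hB, pow_right_comm]
    rfl
  rcases sq_eq_sq_iff_eq_or_eq_neg.1 hsq with h | h
  · exact h
  · have := sum_signChar_modEq_one hB
    rw [h] at this
    exact absurd (this.symm.trans hpow.neg) (by decide)

end GaussSum

/-! ### Lagrangians and their signs -/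

section Lagrangian

variable {F ι : Type*} [Field F] {L : Submodule F ((ι → F) × (ι → F))}

variable (L) in
/-- The projection of `L` to the first factor. -/
abbrev baseSpace : Submodule F (ι → F) := L.map (.fst F _ _)

variable (L) in
/-- The intersection of `L` with the second factor. -/
abbrev fiberSpace : Submodule F (ι → F) := L.comap (.inr F _ _)

variable (L) in
/-- The dimension of the intersection of `L` with the second factor. For Lagrangian `L` it is the
codimension of `baseSpace L`. -/
noncomputable def corank : ℕ := finrank F (fiberSpace L)

theorem mem_baseSpace {u : ι → F} : u ∈ baseSpace L ↔ ∃ v, (u, v) ∈ L := by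
  simp

variable [StarRing F] [Fintype ι]

variable (F ι) in
/-- The Hermitian form on `F^ι × F^ι` that pairs the two factors by `stdForm` and vanishes on each
of them. -/
def hyperbolicForm : ((ι → F) × (ι → F)) →ₗ⋆[F] ((ι → F) × (ι → F)) →ₗ[F] F :=
  (stdForm F ι ∘ₛₗ .fst F _ _).compl₂ (.snd F _ _) +
    (stdForm F ι ∘ₛₗ .snd F _ _).compl₂ (.fst F _ _)

theorem hyperbolicForm_apply (x y : (ι → F) × (ι → F)) :
    hyperbolicForm F ι x y = stdForm F ι x.1 y.2 + stdForm F ι x.2 y.1 := rfl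

theorem hyperbolicForm_injective : Function.Injective (hyperbolicForm F ι) := by
  intro x y h
  refine Prod.ext (stdForm_injective (LinearMap.ext fun v ↦ ?_))
    (stdForm_injective (LinearMap.ext fun v ↦ ?_))
  · simpa [hyperbolicForm_apply] using LinearMap.congr_fun h (0, v)
  · simpa [hyperbolicForm_apply] using LinearMap.congr_fun h (v, 0)

/-- A Lagrangian is a subspace that equals its own orthogonal for the hyperbolic form. -/
def IsLagrangian (L : Submodule F ((ι → F) × (ι → F))) : Prop :=
  L.orthogonalBilin (hyperbolicForm F ι) = L

theorem isLagrangian_iff : IsLagrangian L ↔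
    finrank F L = Fintype.card ι ∧ ∀ x ∈ L, ∀ y ∈ L, hyperbolicForm F ι x y = 0 := by
  have hdim := finrank_add_finrank_orthogonalBilin hyperbolicForm_injective L
  rw [finrank_prod, finrank_pi] at hdim
  constructor
  · intro h
    rw [h] at hdim
    exact ⟨by lia, fun x hx y hy ↦ (h.ge hy) x hx⟩
  · rintro ⟨hL, hiso⟩
    have hle : L ≤ L.orthogonalBilin (hyperbolicForm F ι) := fun y hy x hx ↦ hiso x hx y hy
    exact (Submodule.eq_of_le_of_finrank_eq hle (by lia)).symm

namespace IsLagrangian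

theorem orthogonal_baseSpace (hL : IsLagrangian L) :
    (baseSpace L).orthogonalBilin (stdForm F ι) = fiberSpace L := by
  ext v
  have hmem : (0, v) ∈ L.orthogonalBilin (hyperbolicForm F ι) ↔ (0, v) ∈ L := by rw [hL]
  simpa [hyperbolicForm_apply] using hmem

theorem finrank_baseSpace_add_corank (hL : IsLagrangian L) :
    finrank F (baseSpace L) + corank L = Fintype.card ι := by
  rw [corank, ← hL.orthogonal_baseSpace,
    finrank_add_finrank_orthogonalBilin stdForm_injective, finrank_pi]

theorem orthogonal_fiberSpace (hL : IsLagrangian L) :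
    (fiberSpace L).orthogonalBilin (stdForm F ι) = baseSpace L := by
  rw [← hL.orthogonal_baseSpace,
    orthogonalBilin_orthogonalBilin stdForm_injective stdForm_isSymm.isRefl]

end IsLagrangian

end Lagrangian

section Comap

variable {F M V : Type*} [Field F] [AddCommGroup M] [Module F M] [AddCommGroup V]
  [Module F V] [FiniteDimensional F M] [FiniteDimensional F V]

theorem finrank_comap_of_le_range {p : Submodule F V} {g : M →ₗ[F] V}
    (h : p ≤ LinearMap.range g) :
    finrank F (p.comap g) = finrank F p + finrank F (LinearMap.ker g) := by
  have hker : LinearMap.ker (g.domRestrict (p.comap g)) =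
      (LinearMap.ker g).comap (p.comap g).subtype := by
    ext x
    simp
  rw [← (g.domRestrict (p.comap g)).finrank_range_add_finrank_ker, LinearMap.range_domRestrict,
    Submodule.map_comap_eq_of_le h, hker,
    (Submodule.comapSubtypeEquivOfLe (LinearMap.ker_le_comap g)).finrank_eq]

theorem finrank_add_finrank_comap_orthogonal [StarRing F] {B : V →ₗ⋆[F] V →ₗ[F] F}
    (hB : Function.Injective B) {f g : M →ₗ[F] V}
    (h : (LinearMap.range f).orthogonalBilin B ≤ LinearMap.range g) :
    finrank F M + finrank F (((LinearMap.range f).orthogonalBilin B).comap g) =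
      finrank F V + finrank F (LinearMap.ker f) + finrank F (LinearMap.ker g) := by
  have := f.finrank_range_add_finrank_ker
  have := finrank_add_finrank_orthogonalBilin hB (LinearMap.range f)
  have := finrank_comap_of_le_range h
  lia

end Comap

section FiberProduct

variable {ι : Type*}

/-- The triples `(u, v, v')` with `(u, v) ∈ L` and `(u, v') ∈ L'`. -/
def fiberProduct (L L' : Submodule F4 ((ι → F4) × (ι → F4))) :
    Submodule F4 ((ι → F4) × (ι → F4) × (ι → F4)) :=
  L.comap (.prod (.fst _ _ _) (.fst _ _ _ ∘ₗ .snd _ _ _)) ⊓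
    L'.comap (.prod (.fst _ _ _) (.snd _ _ _ ∘ₗ .snd _ _ _))

variable (L L' : Submodule F4 ((ι → F4) × (ι → F4)))

theorem mem_fiberProduct {w : (ι → F4) × (ι → F4) × (ι → F4)} :
    w ∈ fiberProduct L L' ↔ (w.1, w.2.1) ∈ L ∧ (w.1, w.2.2) ∈ L' := Iff.rfl

/-- The projection `(u, v, v') ↦ u` of the fiber product. -/
def fiberProductBase : fiberProduct L L' →ₗ[F4] (ι → F4) :=
  .fst _ _ _ ∘ₗ (fiberProduct L L').subtype

/-- The map `(u, v, v') ↦ v + v'` on the fiber product. -/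
def fiberProductSum : fiberProduct L L' →ₗ[F4] (ι → F4) :=
  (LinearMap.id.coprod .id ∘ₗ .snd _ _ _) ∘ₗ (fiberProduct L L').subtype

theorem finrank_ker_fiberProductBase [Finite ι] :
    finrank F4 (LinearMap.ker (fiberProductBase L L')) = corank L + corank L' := by
  rw [corank, corank, ← finrank_prod]
  refine LinearEquiv.finrank_eq
    { toFun w := (⟨w.1.1.2.1, ?_⟩, ⟨w.1.1.2.2, ?_⟩)
      invFun v := ⟨⟨(0, v.1.1, v.2.1), v.1.2, v.2.2⟩, rfl⟩
      map_add' _ _ := rfl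
      map_smul' _ _ := rfl
      left_inv w := Subtype.ext (Subtype.ext (Prod.ext w.2.symm rfl))
      right_inv _ := rfl }
  · have : (w.1.1.1, w.1.1.2.1) ∈ L := w.1.2.1
    rwa [show w.1.1.1 = 0 from w.2] at this
  · have : (w.1.1.1, w.1.1.2.2) ∈ L' := w.1.2.2
    rwa [show w.1.1.1 = 0 from w.2] at this

theorem finrank_ker_fiberProductSum :
    finrank F4 (LinearMap.ker (fiberProductSum L L')) =
      finrank F4 (L ⊓ L' : Submodule F4 ((ι → F4) × (ι → F4))) := by
  have hker (w : LinearMap.ker (fiberProductSum L L')) : w.1.1.2.1 = w.1.1.2.2 := by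
    rw [← sub_eq_zero, ZModModule.sub_eq_add]
    exact w.2
  refine LinearEquiv.finrank_eq
    { toFun w := ⟨(w.1.1.1, w.1.1.2.1), w.1.2.1, ?_⟩
      invFun x := ⟨⟨(x.1.1, x.1.2, x.1.2), x.2⟩, ZModModule.add_self _⟩
      map_add' _ _ := rfl
      map_smul' _ _ := rfl
      left_inv w := Subtype.ext (Subtype.ext (Prod.ext rfl (Prod.ext rfl ?_)))
      right_inv _ := rfl }
  · have : (w.1.1.1, w.1.1.2.2) ∈ L' := w.1.2.2
    rwa [show w.1.1.2.1 = w.1.1.2.2 from hker w]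
  · exact hker w

variable [Fintype ι]

/-- The form on the fiber product that pairs `u` with `v + v'`. It is Hermitian when `L` and `L'`
are Lagrangian, and its Gauss sum measures the dimension of `L ⊓ L'`. -/
def fiberProductForm : fiberProduct L L' →ₗ⋆[F4] fiberProduct L L' →ₗ[F4] F4 :=
  (stdForm F4 ι ∘ₛₗ fiberProductBase L L').compl₂ (fiberProductSum L L')

theorem fiberProductForm_apply (w x : fiberProduct L L') :
    fiberProductForm L L' w x = stdForm F4 ι w.1.1 (x.1.2.1 + x.1.2.2) := rfl

variable {L L'}

theorem isSymm_fiberProductForm (hL : IsLagrangian L) (hL' : IsLagrangian L') :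
    (fiberProductForm L L').IsSymm := by
  refine ⟨fun w x ↦ ?_⟩
  have h := (isLagrangian_iff.1 hL).2 (w.1.1, w.1.2.1) w.2.1 (x.1.1, x.1.2.1) x.2.1
  have h' := (isLagrangian_iff.1 hL').2 (w.1.1, w.1.2.2) w.2.2 (x.1.1, x.1.2.2) x.2.2
  rw [hyperbolicForm_apply, CharTwo.add_eq_zero] at h h'
  rw [fiberProductForm_apply, fiberProductForm_apply, map_add, map_add, h, h', map_add,
    stdForm_isSymm.eq, stdForm_isSymm.eq]

theorem range_fiberProductBase_orthogonal_le (hL : IsLagrangian L) (hL' : IsLagrangian L') :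
    (LinearMap.range (fiberProductBase L L')).orthogonalBilin (stdForm F4 ι) ≤
      LinearMap.range (fiberProductSum L L') := by
  rw [← orthogonalBilin_orthogonalBilin stdForm_injective stdForm_isSymm.isRefl
    (LinearMap.range (fiberProductSum L L'))]
  refine Submodule.orthogonalBilin_le fun u hu ↦ ?_
  have hbase : u ∈ baseSpace L := by
    rw [← hL.orthogonal_fiberSpace]
    exact fun v hv ↦ hu v ⟨⟨(0, v, 0), hv, L'.zero_mem⟩, add_zero v⟩
  have hbase' : u ∈ baseSpace L' := by
    rw [← hL'.orthogonal_fiberSpace]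
    exact fun v hv ↦ hu v ⟨⟨(0, 0, v), L.zero_mem, hv⟩, zero_add v⟩
  obtain ⟨v, hv⟩ := mem_baseSpace.1 hbase
  obtain ⟨v', hv'⟩ := mem_baseSpace.1 hbase'
  exact ⟨⟨(u, v, v'), hv, hv'⟩, rfl⟩

theorem ker_fiberProductForm (hL : IsLagrangian L) (hL' : IsLagrangian L') :
    LinearMap.ker (fiberProductForm L L') =
      ((LinearMap.range (fiberProductBase L L')).orthogonalBilin (stdForm F4 ι)).comap
        (fiberProductSum L L') := by
  ext w
  have hsymm := isSymm_fiberProductForm hL hL'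
  rw [LinearMap.mem_ker, LinearMap.ext_iff]
  simp only [LinearMap.zero_apply, hsymm.eq_iff (x := w), Submodule.mem_comap,
    Submodule.mem_orthogonalBilin_iff, LinearMap.mem_range, forall_exists_index,
    forall_apply_eq_imp_iff]
  rfl

theorem sum_signChar_fiberProductForm [Fintype (fiberProduct L L')] (hL : IsLagrangian L)
    (hL' : IsLagrangian L') :
    ∑ w, signChar (fiberProductForm L L' w w) =
      (-2) ^ (Fintype.card ι + (corank L + corank L') +
        finrank F4 (L ⊓ L' : Submodule F4 ((ι → F4) × (ι → F4)))) := by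
  rw [sum_signChar_self (isSymm_fiberProductForm hL hL'), ker_fiberProductForm hL hL',
    finrank_add_finrank_comap_orthogonal stdForm_injective
      (range_fiberProductBase_orthogonal_le hL hL'),
    finrank_ker_fiberProductBase, finrank_ker_fiberProductSum, finrank_pi]

end FiberProduct

section LagrangianSign

variable {ι : Type*} [Fintype ι] {L L' : Submodule F4 ((ι → F4) × (ι → F4))}

open Classical in
variable (L) in
/-- The sign `(-1) ^ ⟨u, v⟩` for any `v` with `(u, v) ∈ L`, and `0` where no such `v` exists. When
`L` is Lagrangian it does not depend on `v`. -/
noncomputable def lagrangianSign (u : ι → F4) : ℤ :=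
  if h : ∃ v, (u, v) ∈ L then signChar (star u ⬝ᵥ h.choose) else 0

theorem lagrangianSign_of_notMem {u : ι → F4} (h : u ∉ baseSpace L) : lagrangianSign L u = 0 := by
  rw [lagrangianSign, dif_neg (mem_baseSpace.not.1 h)]

namespace IsLagrangian

theorem sign_eq (hL : IsLagrangian L) {u v : ι → F4} (h : (u, v) ∈ L) :
    lagrangianSign L u = signChar (star u ⬝ᵥ v) := by
  have hex : ∃ v, (u, v) ∈ L := ⟨v, h⟩
  have hdiff : hex.choose - v ∈ fiberSpace L := by
    simpa using L.sub_mem hex.choose_spec h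
  rw [← hL.orthogonal_baseSpace] at hdiff
  have horth : star u ⬝ᵥ (hex.choose - v) = 0 := hdiff u (mem_baseSpace.2 hex)
  rw [dotProduct_sub, sub_eq_zero] at horth
  rw [lagrangianSign, dif_pos hex, horth]

theorem sign_zero (hL : IsLagrangian L) : lagrangianSign L 0 = 1 := by
  rw [hL.sign_eq L.zero_mem, dotProduct_zero, AddChar.map_zero_eq_one]

theorem sign_smul (hL : IsLagrangian L) {c : F4} (hc : c ≠ 0) (u : ι → F4) :
    lagrangianSign L (c • u) = lagrangianSign L u := by
  by_cases h : u ∈ baseSpace L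
  · obtain ⟨v, hv⟩ := mem_baseSpace.1 h
    rw [hL.sign_eq hv, hL.sign_eq (L.smul_mem c hv), star_smul, smul_dotProduct, dotProduct_smul,
      smul_smul, star_mul_self_of_ne_zero hc, one_smul]
  · rw [lagrangianSign_of_notMem h, lagrangianSign_of_notMem]
    rwa [Submodule.smul_mem_iff _ hc]

open Classical in
theorem sum_signChar_fiber [DecidableEq ι] (hL : IsLagrangian L) (u : ι → F4) :
    ∑ v, (if (u, v) ∈ L then signChar (star u ⬝ᵥ v) else 0) =
      4 ^ corank L * lagrangianSign L u := by
  have hsign (v : ι → F4) : (if (u, v) ∈ L then signChar (star u ⬝ᵥ v) else 0) =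
      if (u, v) ∈ L then lagrangianSign L u else 0 :=
    ite_congr rfl (fun hv ↦ (hL.sign_eq hv).symm) fun _ ↦ rfl
  simp_rw [hsign]
  by_cases h : u ∈ baseSpace L
  · obtain ⟨v₀, hv₀⟩ := mem_baseSpace.1 h
    have htranslate (v : ι → F4) : (u, v + v₀) ∈ L ↔ v ∈ fiberSpace L := by
      have := L.add_mem_iff_left hv₀ (x := (0, v))
      rwa [Prod.mk_add_mk, zero_add] at this
    rw [← Equiv.sum_comp (Equiv.addRight v₀)]
    simp_rw [Equiv.coe_addRight, htranslate, ← Finset.sum_filter, Finset.sum_const, nsmul_eq_mul]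
    rw [← Fintype.card_subtype, Module.card_eq_pow_finrank (K := F4) (V := fiberSpace L), F4.card]
    simp [corank]
  · simp [lagrangianSign_of_notMem h]

theorem sum_sign_mul_sign [DecidableEq ι] (hL : IsLagrangian L) (hL' : IsLagrangian L') :
    4 ^ (corank L + corank L') * ∑ u, lagrangianSign L u * lagrangianSign L' u =
      (-2) ^ (Fintype.card ι + (corank L + corank L') +
        finrank F4 (L ⊓ L' : Submodule F4 ((ι → F4) × (ι → F4)))) := by
  classical
  rw [← sum_signChar_fiberProductForm hL hL', Finset.mul_sum]
  calc ∑ u, 4 ^ (corank L + corank L') * (lagrangianSign L u * lagrangianSign L' u)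
      = ∑ u, (∑ v, if (u, v) ∈ L then signChar (star u ⬝ᵥ v) else 0) *
          ∑ v', if (u, v') ∈ L' then signChar (star u ⬝ᵥ v') else 0 := by
        refine Finset.sum_congr rfl fun u _ ↦ ?_
        rw [hL.sum_signChar_fiber, hL'.sum_signChar_fiber]
        ring
    _ = ∑ w : (ι → F4) × (ι → F4) × (ι → F4), if w ∈ fiberProduct L L' then
          signChar (stdForm F4 ι w.1 (w.2.1 + w.2.2)) else 0 := by
        simp_rw [Fintype.sum_prod_type, Finset.sum_mul_sum, ite_zero_mul_ite_zero,
          mem_fiberProduct, map_add, AddChar.map_add_eq_mul, stdForm_apply]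
    _ = ∑ w : fiberProduct L L', signChar (fiberProductForm L L' w w) := by
        rw [← Finset.sum_filter]
        exact Finset.sum_subtype _ (by simp) _

end IsLagrangian
end LagrangianSign

section GraphLagrangian

variable {ι : Type*} [Fintype ι]

/-- The Lagrangian with base space `U` attached to a Hermitian matrix `b`: the pairs `(u, v)` with
`u ∈ U` and `v - b u` orthogonal to `U`. -/
def graphLagrangian (U : Submodule F4 (ι → F4)) (b : Matrix ι ι F4) :
    Submodule F4 ((ι → F4) × (ι → F4)) :=
  U.comap (.fst F4 _ _) ⊓
    (U.orthogonalBilin (stdForm F4 ι)).comap (.snd F4 _ _ - b.mulVecLin ∘ₗ .fst F4 _ _)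

variable {U : Submodule F4 (ι → F4)} {b : Matrix ι ι F4} {u v : ι → F4}

theorem mem_graphLagrangian : (u, v) ∈ graphLagrangian U b ↔
    u ∈ U ∧ v - b.mulVec u ∈ U.orthogonalBilin (stdForm F4 ι) := Iff.rfl

theorem mk_mulVec_mem_graphLagrangian (hu : u ∈ U) : (u, b.mulVec u) ∈ graphLagrangian U b :=
  mem_graphLagrangian.2 ⟨hu, by rw [sub_self]; exact zero_mem _⟩

variable (U b) in
theorem baseSpace_graphLagrangian : baseSpace (graphLagrangian U b) = U :=
  Submodule.ext fun _ ↦ mem_baseSpace.trans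
    ⟨fun ⟨_, h⟩ ↦ (mem_graphLagrangian.1 h).1, fun h ↦ ⟨_, mk_mulVec_mem_graphLagrangian h⟩⟩

theorem stdForm_mulVec_left (hb : b.IsHermitian) (u v : ι → F4) :
    stdForm F4 ι (b.mulVec u) v = stdForm F4 ι u (b.mulVec v) := by
  rw [stdForm_apply, stdForm_apply, Matrix.star_mulVec, hb.eq, Matrix.dotProduct_mulVec]

theorem isLagrangian_graphLagrangian (U : Submodule F4 (ι → F4)) (hb : b.IsHermitian) :
    IsLagrangian (graphLagrangian U b) := by
  have hform (u v x y : ι → F4) : hyperbolicForm F4 ι (u, v) (x, y) =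
      stdForm F4 ι u (y - b.mulVec x) + stdForm F4 ι (v - b.mulVec u) x := by
    rw [hyperbolicForm_apply, map_sub, map_sub, LinearMap.sub_apply, stdForm_mulVec_left hb,
      CharTwo.sub_eq_add, CharTwo.sub_eq_add]
    have := CharTwo.add_self_eq_zero (stdForm F4 ι u (b.mulVec x))
    linear_combination -this
  refine le_antisymm ?_ ?_
  · rintro ⟨x, y⟩ hxy
    have hx : x ∈ U := by
      rw [← orthogonalBilin_orthogonalBilin stdForm_injective stdForm_isSymm.isRefl U]
      refine fun w hw ↦ ?_
      have h := hxy (0, w) (mem_graphLagrangian.2 ⟨zero_mem U, by simpa using hw⟩)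
      simpa [hform] using h
    refine mem_graphLagrangian.2 ⟨hx, fun u hu ↦ ?_⟩
    have h := hxy (u, b.mulVec u) (mk_mulVec_mem_graphLagrangian hu)
    simpa only [hform, sub_self, map_zero, LinearMap.zero_apply, add_zero] using h
  · rintro ⟨x, y⟩ hxy ⟨u, v⟩ huv
    obtain ⟨hx, hy⟩ := mem_graphLagrangian.1 hxy
    obtain ⟨hu, hv⟩ := mem_graphLagrangian.1 huv
    rw [hform, hy u hu, stdForm_isSymm.isRefl _ _ (hv x hx), add_zero]

theorem corank_graphLagrangian (U : Submodule F4 (ι → F4)) (hb : b.IsHermitian) :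
    finrank F4 U + corank (graphLagrangian U b) = Fintype.card ι := by
  rw [← (isLagrangian_graphLagrangian U hb).finrank_baseSpace_add_corank,
    baseSpace_graphLagrangian]

theorem lagrangianSign_graphLagrangian (hb : b.IsHermitian) (hu : u ∈ U) :
    lagrangianSign (graphLagrangian U b) u = signChar (star u ⬝ᵥ b.mulVec u) :=
  (isLagrangian_graphLagrangian U hb).sign_eq (mk_mulVec_mem_graphLagrangian hu)

theorem lagrangianSign_graphLagrangian_of_notMem (hu : u ∉ U) :
    lagrangianSign (graphLagrangian U b) u = 0 :=
  lagrangianSign_of_notMem (by rwa [baseSpace_graphLagrangian])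

theorem IsLagrangian.exists_isHermitian {L : Submodule F4 ((ι → F4) × (ι → F4))}
    (hL : IsLagrangian L) (hcorank : corank L = 0) :
    ∃ b : Matrix ι ι F4, b.IsHermitian ∧
      ∀ u, lagrangianSign L u = signChar (star u ⬝ᵥ b.mulVec u) := by
  classical
  have hbase : baseSpace L = ⊤ := by
    refine Submodule.eq_top_of_finrank_eq ?_
    have := hL.finrank_baseSpace_add_corank
    rw [finrank_pi]
    lia
  have hcol (j : ι) : ∃ v, (Pi.single j 1, v) ∈ L := by
    rw [← mem_baseSpace, hbase]
    trivial
  choose col hcol using hcol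
  refine ⟨.of fun i j ↦ col j i, Matrix.IsHermitian.ext fun i j ↦ ?_, fun u ↦ hL.sign_eq ?_⟩
  · have := (isLagrangian_iff.1 hL).2 _ (hcol i) _ (hcol j)
    rw [hyperbolicForm_apply, CharTwo.add_eq_zero] at this
    simpa [stdForm_apply] using this.symm
  · have hsum := L.sum_mem fun j (_ : j ∈ Finset.univ) ↦ L.smul_mem (u j) (hcol j)
    have hfst : ∑ j, u j • (Pi.single j 1 : ι → F4) = u := (pi_eq_sum_univ' u).symm
    have hsnd : ∑ j, u j • col j = (Matrix.of fun i j ↦ col j i).mulVec u := by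
      refine funext fun i ↦ ?_
      simp [Matrix.mulVec, dotProduct, mul_comm]
    simp only [Prod.smul_mk, ← prod_mk_sum, hfst] at hsum
    rwa [hsnd] at hsum

end GraphLagrangian

/-! ### The vector of a Lagrangian -/

section LeechVector

/-- The normalized homogeneous coordinates of the 21 points of the projective plane over `F4`: the
points `[1, x, y]`, then `[0, 1, y]`, then `[0, 0, 1]`. The numbering is chosen so that the lines
give words of `GolayCode`. -/
def point (p : Fin 21) : Fin 3 → F4 :=
  let coord (n : ℕ) : F4 := ⟨n, (n / 2 : ℕ)⟩
  if p < 16 then ![1, coord (p / 4), coord p] else if p < 20 then ![0, 1, coord p] else ![0, 0, 1]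

theorem point_ne_zero (p : Fin 21) : point p ≠ 0 := by decide +revert

theorem eq_of_smul_point_eq {p q : Fin 21} {c : F4} (h : c • point p = point q) : q = p := by
  revert p q c
  decide +kernel

theorem sum_eq_zero_add_sum_point {f : (Fin 3 → F4) → ℤ}
    (hf : ∀ c : F4, c ≠ 0 → ∀ u, f (c • u) = f u) : ∑ u, f u = f 0 + 3 * ∑ p, f (point p) := by
  let vec : Option ({c : F4 // c ≠ 0} × Fin 21) → Fin 3 → F4 := fun x ↦
    x.elim 0 fun x ↦ x.1.1 • point x.2
  have hvec : Function.Bijective vec := by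
    rw [Fintype.bijective_iff_injective_and_card]
    refine ⟨?_, by decide⟩
    rintro (_ | ⟨c, p⟩) (_ | ⟨d, q⟩) h
    · rfl
    · exact absurd h.symm (smul_ne_zero d.2 (point_ne_zero q))
    · exact absurd h (smul_ne_zero c.2 (point_ne_zero p))
    · have hpq : q = p := eq_of_smul_point_eq (c := (d : F4)⁻¹ * c)
        (by rw [mul_smul]; exact (inv_smul_eq_iff₀ d.2).2 h)
      subst hpq
      have hcd : c.1 = d.1 := smul_left_injective F4 (point_ne_zero q) h
      rw [Subtype.ext hcd]
  rw [← hvec.sum_comp, Fintype.sum_option, Fintype.sum_prod_type]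
  have hcard : Fintype.card {c : F4 // c ≠ 0} = 3 := by decide
  have hvalue (c : {c : F4 // c ≠ 0}) (p : Fin 21) : f (vec (some (c, p))) = f (point p) :=
    hf c.1 c.2 _
  simp_rw [hvalue, Finset.sum_const, Finset.card_univ, hcard, nsmul_eq_mul]
  rfl

/-- The coordinate of `Fin 24` labelled by a point of the plane; `21`, `22`, `23` remain. -/
def pointIndex (p : Fin 21) : Fin 24 := Fin.castAdd 3 p

theorem forall_fin24 {P : Fin 24 → Prop} :
    (∀ j, P j) ↔ (∀ p, P (pointIndex p)) ∧ P 21 ∧ P 22 ∧ P 23 := by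
  refine ⟨fun h ↦ ⟨fun p ↦ h _, h _, h _, h _⟩, fun ⟨hp, h21, h22, h23⟩ j ↦ ?_⟩
  refine Fin.addCases (m := 21) (n := 3) (motive := P) hp (fun k ↦ ?_) j
  fin_cases k
  exacts [h21, h22, h23]

theorem sum_fin24 {R : Type*} [AddCommMonoid R] (f : Fin 24 → R) :
    ∑ j, f j = ∑ p, f (pointIndex p) + (f 21 + f 22 + f 23) :=
  (Fin.sum_univ_add (a := 21) (b := 3) f).trans (congrArg _ (Fin.sum_univ_three _))

/-- The vector with entry `f u` at a point `u` of the plane and entries `t` at `21`, `22`, `23`. -/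
def extendByTail {R : Type*} (f : (Fin 3 → F4) → R) (t : Fin 3 → R) : Fin 24 → R :=
  Fin.append (fun p : Fin 21 ↦ f (point p)) t

theorem extendByTail_pointIndex {R : Type*} (f : (Fin 3 → F4) → R) (t : Fin 3 → R) (p : Fin 21) :
    extendByTail f t (pointIndex p) = f (point p) :=
  Fin.append_left _ _ p

theorem eq_extendByTail_iff {R : Type*} {T : Fin 24 → R} {f : (Fin 3 → F4) → R} {t : Fin 3 → R} :
    T = extendByTail f t ↔ (∀ p, T (pointIndex p) = f (point p)) ∧
      T 21 = t 0 ∧ T 22 = t 1 ∧ T 23 = t 2 := by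
  rw [funext_iff, forall_fin24]
  simp only [extendByTail_pointIndex]
  rfl

/-- The number `(4 - (-2) ^ a) / 3`, an exact quotient: `1, 2, 0, 4` for `a = 0, 1, 2, 3`. -/
def tailValue (a : ℕ) : ℤ := (4 - (-2) ^ a) / 3

theorem three_mul_tailValue (a : ℕ) : 3 * tailValue a = 4 - (-2) ^ a := by
  have h : (-2) ^ a ≡ 1 [ZMOD 3] := by
    simpa using (show (-2 : ℤ) ≡ 1 [ZMOD 3] from rfl).pow a
  exact Int.mul_ediv_cancel' (h.trans (show 1 ≡ 4 [ZMOD 3] from rfl)).dvd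

/-- The point of `T_AB` attached to a Lagrangian: the entries are `±(-2) ^ corank L` on the points
of its base space and `0` on the other points. The tail entries give it the norm and the inner
products with `A` and `B` that `T_AB` requires. -/
noncomputable def leechVector (L : Submodule F4 ((Fin 3 → F4) × (Fin 3 → F4))) : Fin 24 → ℤ :=
  extendByTail (fun u ↦ (-2) ^ corank L * lagrangianSign L u)
    ![tailValue (corank L), tailValue (corank L), tailValue (corank L) - 4]

variable {L L' : Submodule F4 ((Fin 3 → F4) × (Fin 3 → F4))}

theorem leechVector_pointIndex (p : Fin 21) :
    leechVector L (pointIndex p) = (-2) ^ corank L * lagrangianSign L (point p) :=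
  extendByTail_pointIndex _ _ p

theorem leechVector_tail : leechVector L 21 = tailValue (corank L) ∧
    leechVector L 22 = tailValue (corank L) ∧ leechVector L 23 = tailValue (corank L) - 4 :=
  ⟨rfl, rfl, rfl⟩

theorem IsLagrangian.sum_sign_point_mul_sign_point (hL : IsLagrangian L) (hL' : IsLagrangian L') :
    (-2) ^ corank L * (-2) ^ corank L' *
      (1 + 3 * ∑ p, lagrangianSign L (point p) * lagrangianSign L' (point p)) =
    -8 * (-2) ^ finrank F4 (L ⊓ L' : Submodule F4 ((Fin 3 → F4) × (Fin 3 → F4))) := by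
  have hsum := hL.sum_sign_mul_sign hL'
  rw [sum_eq_zero_add_sum_point fun c hc u ↦ by rw [hL.sign_smul hc, hL'.sign_smul hc],
    hL.sign_zero, hL'.sign_zero, one_mul, show (4 : ℤ) = (-2) * (-2) from rfl, mul_pow,
    Fintype.card_fin, pow_add, pow_add, pow_add] at hsum
  have hne : (-2 : ℤ) ^ corank L * (-2) ^ corank L' ≠ 0 := by positivity
  refine mul_left_cancel₀ hne ?_
  linear_combination hsum

theorem three_mul_sum_leechVector_mul (hL : IsLagrangian L) (hL' : IsLagrangian L') :
    3 * ∑ j, leechVector L j * leechVector L' j =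
      32 - 8 * (-2) ^ finrank F4 (L ⊓ L' : Submodule F4 ((Fin 3 → F4) × (Fin 3 → F4))) := by
  have hsum := hL.sum_sign_point_mul_sign_point hL'
  have htail := three_mul_tailValue (corank L)
  have htail' := three_mul_tailValue (corank L')
  obtain ⟨h21, h22, h23⟩ := leechVector_tail (L := L)
  obtain ⟨h21', h22', h23'⟩ := leechVector_tail (L := L')
  have hpoint (p : Fin 21) : leechVector L (pointIndex p) * leechVector L' (pointIndex p) =
      (-2) ^ corank L * (-2) ^ corank L' *
        (lagrangianSign L (point p) * lagrangianSign L' (point p)) := by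
    rw [leechVector_pointIndex, leechVector_pointIndex, mul_mul_mul_comm]
  simp_rw [sum_fin24, hpoint, ← Finset.mul_sum]
  rw [h21, h22, h23, h21', h22', h23']
  refine mul_left_cancel₀ (three_ne_zero (α := ℤ)) ?_
  linear_combination 3 * hsum + (9 * tailValue (corank L') - 12) * htail -
    3 * (-2) ^ corank L * htail'

theorem eight_dvd_sum_leechVector_mul (hL : IsLagrangian L) (hL' : IsLagrangian L') :
    8 ∣ ∑ j, leechVector L j * leechVector L' j := by
  have := three_mul_sum_leechVector_mul hL hL'
  lia

theorem leechVector_injOn : Set.InjOn leechVector {L | IsLagrangian L} := by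
  intro L hL L' hL' h
  have hself := three_mul_sum_leechVector_mul hL hL'
  rw [← h, three_mul_sum_leechVector_mul hL hL, inf_idem, (isLagrangian_iff.1 hL).1,
    sub_right_inj, mul_right_inj' (by decide)] at hself
  have hinf := Int.pow_right_injective (a := -2) (by decide) hself
  have hle := Submodule.eq_of_le_of_finrank_eq (inf_le_left : L ⊓ L' ≤ L)
    (hinf.symm.trans (isLagrangian_iff.1 hL).1.symm)
  have hle' := Submodule.eq_of_le_of_finrank_eq (inf_le_right : L ⊓ L' ≤ L')
    (hinf.symm.trans (isLagrangian_iff.1 hL').1.symm)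
  exact hle.symm.trans hle'

end LeechVector

/-! ### Golay words from the projective plane over `F4` -/

section Golay

/-- The pivot columns of `golayMatrix`, which is in reduced form. -/
def golayPivot : Fin 12 → Fin 24 := ![16, 12, 10, 9, 8, 6, 5, 4, 3, 2, 1, 0]

theorem mem_golayCode_iff {c : Fin 24 → ZMod 2} :
    c ∈ GolayCode ↔ Matrix.vecMul (c ∘ golayPivot) golayMatrix = c := by
  constructor
  · intro hc
    have hpivot : golayMatrix.submatrix id golayPivot = 1 := by decide +kernel
    obtain ⟨m, rfl⟩ := (Submodule.mem_span_range_iff_exists_fun _).1 hc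
    rw [← Matrix.vecMul_eq_sum]
    have hm : Matrix.vecMul m golayMatrix ∘ golayPivot = m := calc
      _ = Matrix.vecMul m (golayMatrix.submatrix id golayPivot) := rfl
      _ = m := by rw [hpivot, Matrix.vecMul_one]
    rw [hm]
  · intro hc
    rw [← hc, Matrix.vecMul_eq_sum]
    exact sum_mem fun i _ ↦ Submodule.smul_mem _ _ (Submodule.subset_span ⟨i, rfl⟩)

instance : DecidablePred (· ∈ GolayCode) := fun _ ↦ decidable_of_iff' _ mem_golayCode_iff

/-- An information set of the Golay code: nine points of the plane at which a Hermitian form can be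
prescribed freely, and the labels `21`, `22`, `23`. -/
def frameIndex : Fin 12 → Fin 24 := ![0, 16, 20, 4, 8, 1, 2, 17, 18, 21, 22, 23]

/-- The inverse of the minor of `golayMatrix` on the columns `frameIndex`. -/
def frameInverse : Matrix (Fin 12) (Fin 12) (ZMod 2) :=
  !![0, 1, 1, 1, 0, 1, 1, 0, 1, 0, 0, 1;
    1, 1, 1, 0, 0, 1, 1, 0, 0, 0, 0, 0;
    0, 0, 1, 0, 0, 1, 1, 0, 1, 0, 0, 0;
    0, 1, 0, 0, 0, 1, 1, 1, 0, 0, 0, 0;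
    0, 1, 1, 1, 1, 0, 0, 0, 0, 0, 0, 0;
    0, 0, 0, 1, 0, 0, 1, 0, 1, 0, 1, 0;
    0, 0, 1, 0, 0, 1, 0, 0, 1, 1, 0, 0;
    0, 0, 1, 1, 0, 0, 1, 0, 0, 0, 0, 0;
    0, 0, 0, 1, 0, 1, 0, 0, 0, 0, 0, 0;
    0, 1, 0, 1, 0, 0, 1, 0, 1, 0, 0, 0;
    0, 1, 0, 0, 0, 1, 0, 0, 1, 0, 0, 0;
    0, 1, 1, 1, 0, 0, 0, 0, 1, 0, 0, 0]

theorem eq_of_mem_golayCode_of_frame {c c' : Fin 24 → ZMod 2} (hc : c ∈ GolayCode)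
    (hc' : c' ∈ GolayCode) (h : c ∘ frameIndex = c' ∘ frameIndex) : c = c' := by
  have hinv : golayMatrix.submatrix id frameIndex * frameInverse = 1 := by decide +kernel
  have hrecover {c : Fin 24 → ZMod 2} (hc : c ∈ GolayCode) :
      Matrix.vecMul (c ∘ frameIndex) frameInverse = c ∘ golayPivot := by
    have hframe : c ∘ frameIndex =
        Matrix.vecMul (c ∘ golayPivot) (golayMatrix.submatrix id frameIndex) :=
      (congrArg (· ∘ frameIndex) (mem_golayCode_iff.1 hc)).symm
    rw [hframe, Matrix.vecMul_vecMul, hinv, Matrix.vecMul_one]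
  rw [← mem_golayCode_iff.1 hc, ← mem_golayCode_iff.1 hc', ← hrecover hc, ← hrecover hc', h]

end Golay

section HermitianWord

/-- The values of the Hermitian form of `b` at the points of the plane, extended by zero. The values
of a Hermitian form lie in `ZMod 2`, so that taking `re` loses nothing. -/
def hermitianWord : Matrix (Fin 3) (Fin 3) F4 →+ (Fin 24 → ZMod 2) :=
  AddMonoidHom.mk' (fun b ↦ extendByTail (fun u ↦ (star u ⬝ᵥ b.mulVec u).re) 0) fun b b' ↦ by
    symm
    rw [eq_extendByTail_iff]
    refine ⟨fun p ↦ ?_, add_zero 0, add_zero 0, add_zero 0⟩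
    rw [Pi.add_apply, extendByTail_pointIndex, extendByTail_pointIndex, Matrix.add_mulVec,
      dotProduct_add, QuadraticAlgebra.re_add]

theorem eq_hermitianWord_iff {c : Fin 24 → ZMod 2} {b : Matrix (Fin 3) (Fin 3) F4} :
    c = hermitianWord b ↔ (∀ p, c (pointIndex p) = (star (point p) ⬝ᵥ b.mulVec (point p)).re) ∧
      c 21 = 0 ∧ c 22 = 0 ∧ c 23 = 0 := by
  rw [hermitianWord, AddMonoidHom.mk'_apply, eq_extendByTail_iff]
  rfl

theorem exists_add_conjTranspose_eq {ι : Type*} [LinearOrder ι] {b : Matrix ι ι F4}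
    (hb : b.IsHermitian) : ∃ h : Matrix ι ι F4, h + h.conjTranspose = b := by
  refine ⟨.of fun i j ↦ if i < j then b i j else if i = j then b i i * ω else 0, ?_⟩
  ext1 i j
  rcases lt_trichotomy i j with hij | rfl | hij
  · simp [hij, hij.not_gt, hij.ne']
  · have htrace (d : F4) (hd : star d = d) : d * ω + star (d * ω) = d := by
      decide +revert
    simpa using htrace _ (hb.apply i i)
  · simpa [hij, hij.not_gt, hij.ne'] using hb.apply i j

theorem hermitianWord_mem_golayCode {b : Matrix (Fin 3) (Fin 3) F4} (hb : b.IsHermitian) :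
    hermitianWord b ∈ GolayCode := by
  have hsingle (i j : Fin 3) (m : F4) :
      hermitianWord (.single i j m + (Matrix.single i j m).conjTranspose) ∈ GolayCode := by
    decide +kernel +revert
  obtain ⟨h, rfl⟩ := exists_add_conjTranspose_eq hb
  rw [Matrix.matrix_eq_sum_single h, Matrix.conjTranspose_sum]
  simp_rw [Matrix.conjTranspose_sum, ← Finset.sum_add_distrib, map_sum]
  exact sum_mem fun i _ ↦ sum_mem fun j _ ↦ hsingle i j _

/-- The basis of the Hermitian matrices dual to evaluation at the nine points of `frameIndex`. -/
def frameHermitian : Fin 9 → Matrix (Fin 3) (Fin 3) F4 :=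
  ![!![1, ω, ω; star ω, 0, 0; star ω, 0, 0], !![0, ω, 0; star ω, 1, ω; 0, star ω, 0],
    !![0, 0, ω; 0, 0, ω; star ω, star ω, 1], !![0, star ω, 0; ω, 0, 0; 0, 0, 0],
    !![0, 1, 0; 1, 0, 0; 0, 0, 0], !![0, 0, star ω; 0, 0, 0; ω, 0, 0],
    !![0, 0, 1; 0, 0, 0; 1, 0, 0], !![0, 0, 0; 0, 0, star ω; 0, ω, 0],
    !![0, 0, 0; 0, 0, 1; 0, 1, 0]]

theorem isHermitian_frameHermitian (k : Fin 9) : (frameHermitian k).IsHermitian := by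
  unfold Matrix.IsHermitian
  decide +revert

theorem hermitianWord_frameHermitian (k : Fin 9) :
    hermitianWord (frameHermitian k) ∘ frameIndex = Pi.single (Fin.castAdd 3 k) 1 := by
  decide +kernel +revert

theorem hermitianWord_sum_smul_frameHermitian (x : Fin 9 → ZMod 2) :
    hermitianWord (∑ k, x k • frameHermitian k) ∘ frameIndex =
      Fin.append x (0 : Fin 3 → ZMod 2) := by
  have hdual (k : Fin 9) (l : Fin 12) : hermitianWord (frameHermitian k) (frameIndex l) =
      (Pi.single (Fin.castAdd 3 k) 1 : Fin 12 → ZMod 2) l :=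
    congrFun (hermitianWord_frameHermitian k) l
  funext l
  simp only [map_sum, ZMod.map_smul, Function.comp_apply, Finset.sum_apply, Pi.smul_apply, hdual,
    smul_eq_mul]
  refine Fin.addCases (m := 9) (n := 3) (fun k ↦ ?_) (fun k ↦ ?_) l
  · simp [Pi.single_apply, (Fin.castAdd_injective 9 3).eq_iff]
  · simp only [Fin.append_right, Pi.zero_apply]
    refine Finset.sum_eq_zero fun i _ ↦ mul_eq_zero_of_right _ (Pi.single_eq_of_ne ?_ _)
    simp only [ne_eq, Fin.ext_iff, Fin.val_natAdd, Fin.val_castAdd]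
    lia

theorem exists_hermitianWord_eq {c : Fin 24 → ZMod 2} (hc : c ∈ GolayCode) (h21 : c 21 = 0)
    (h22 : c 22 = 0) (h23 : c 23 = 0) :
    ∃ b : Matrix (Fin 3) (Fin 3) F4, b.IsHermitian ∧ c = hermitianWord b := by
  let x : Fin 9 → ZMod 2 := fun k ↦ c (frameIndex (Fin.castAdd 3 k))
  have hb : (∑ k, x k • frameHermitian k).IsHermitian :=
    sum_mem (S := selfAdjoint (Matrix (Fin 3) (Fin 3) F4)) fun k _ ↦
      ZMod.smul_mem (isHermitian_frameHermitian k) (x k)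
  refine ⟨_, hb, eq_of_mem_golayCode_of_frame hc (hermitianWord_mem_golayCode hb) ?_⟩
  rw [hermitianWord_sum_smul_frameHermitian]
  have htail : c ∘ frameIndex ∘ Fin.natAdd 9 = (0 : Fin 3 → ZMod 2) := by
    funext k
    fin_cases k
    exacts [h21, h22, h23]
  rw [← htail]
  exact (Fin.append_castAdd_natAdd (m := 9) (n := 3) (f := c ∘ frameIndex)).symm

/-- The indicator of the line with normal vector `n`, extended by ones. -/
def lineWord (n : Fin 3 → F4) : Fin 24 → ZMod 2 :=
  extendByTail (fun u ↦ if star n ⬝ᵥ u = 0 then 1 else 0) 1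

theorem lineWord_mem_golayCode {n : Fin 3 → F4} (hn : n ≠ 0) : lineWord n ∈ GolayCode := by
  decide +kernel +revert

end HermitianWord

/-! ### The vector of a Lagrangian lies in `T_AB` -/

section MemTAB

theorem leechInner_eq (x y : Fin 24 → ℤ) : leechInner x y = ((∑ i, x i * y i : ℤ) : ℚ) / 8 := by
  simp [leechInner]

theorem leechInner_eq_four_iff {x y : Fin 24 → ℤ} : leechInner x y = 4 ↔ ∑ i, x i * y i = 32 := by
  rw [leechInner_eq, div_eq_iff (by norm_num)]
  norm_cast

theorem mem_TAB_iff {T : Fin 24 → ℤ} : T ∈ TAB ↔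
    IsLeech T ∧ ∑ i, T i * T i = 32 ∧ T 21 = T 23 + 4 ∧ T 22 = T 23 + 4 := by
  have hA : ∑ i, (T - vA) i * (T - vA) i = ∑ i, T i * T i - 8 * (T 21 - T 23) + 32 := by
    have (p : Fin 21) : vA (pointIndex p) = 0 := by decide +revert
    simp only [sum_fin24, Pi.sub_apply, this, show vA 21 = 4 from rfl, show vA 22 = 0 from rfl,
      show vA 23 = -4 from rfl, sub_zero]
    ring
  have hB : ∑ i, (T - vB) i * (T - vB) i = ∑ i, T i * T i - 8 * (T 22 - T 23) + 32 := by
    have (p : Fin 21) : vB (pointIndex p) = 0 := by decide +revert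
    simp only [sum_fin24, Pi.sub_apply, this, show vB 21 = 0 from rfl, show vB 22 = 4 from rfl,
      show vB 23 = -4 from rfl, sub_zero]
    ring
  rw [TAB, Set.mem_ofPred_eq, leechInner_eq_four_iff, leechInner_eq_four_iff,
    leechInner_eq_four_iff, hA, hB]
  refine and_congr_right fun _ ↦ ⟨fun ⟨_, _, _⟩ ↦ ?_, fun ⟨_, _, _⟩ ↦ ?_⟩ <;> lia

end MemTAB

section LeechVectorMem

variable {L : Submodule F4 ((Fin 3 → F4) × (Fin 3 → F4))}

theorem corank_graphLagrangian_top {b : Matrix (Fin 3) (Fin 3) F4} (hb : b.IsHermitian) :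
    corank (graphLagrangian ⊤ b) = 0 := by
  simpa using corank_graphLagrangian ⊤ hb

theorem leechVector_graphLagrangian_top {b : Matrix (Fin 3) (Fin 3) F4} (hb : b.IsHermitian) :
    leechVector (graphLagrangian ⊤ b) =
      extendByTail (fun u ↦ signChar (star u ⬝ᵥ b.mulVec u)) ![1, 1, -3] := by
  rw [eq_extendByTail_iff]
  obtain ⟨h21, h22, h23⟩ := leechVector_tail (L := graphLagrangian ⊤ b)
  rw [corank_graphLagrangian_top hb] at h21 h22 h23
  refine ⟨fun p ↦ ?_, h21, h22, h23⟩
  rw [leechVector_pointIndex, corank_graphLagrangian_top hb, pow_zero, one_mul,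
    lagrangianSign_graphLagrangian hb Submodule.mem_top]

theorem sum_leechVector : ∑ j, leechVector L j =
    ∑ j, leechVector L j * leechVector (graphLagrangian ⊤ 0) j + 4 * leechVector L 23 := by
  obtain ⟨hpoint, h21, h22, h23⟩ :=
    eq_extendByTail_iff.1 (leechVector_graphLagrangian_top Matrix.isHermitian_zero)
  simp only [sum_fin24, hpoint, h21, h22, h23, Matrix.zero_mulVec, dotProduct_zero,
    AddChar.map_zero_eq_one, mul_one, Matrix.cons_val]
  ring

/-- The word that has to lie in the Golay code for `x` to be a Leech vector of parity `m`. -/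
def residueWord (m : ℤ) (x : Fin 24 → ℤ) (i : Fin 24) : ZMod 2 :=
  if 4 ∣ x i - m - 2 then 1 else 0

theorem residueWord_leechVector_of_corank_eq_zero (hL : IsLagrangian L) (h : corank L = 0) :
    (∀ i, 2 ∣ leechVector L i - 1) ∧ residueWord 1 (leechVector L) ∈ GolayCode := by
  obtain ⟨b, hb, hsign⟩ := hL.exists_isHermitian h
  obtain ⟨h21, h22, h23⟩ := leechVector_tail (L := L)
  rw [h] at h21 h22 h23
  have hpoint (p : Fin 21) : leechVector L (pointIndex p) =
      signChar (star (point p) ⬝ᵥ b.mulVec (point p)) := by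
    rw [leechVector_pointIndex, h, hsign, pow_zero, one_mul]
  constructor
  · rw [forall_fin24, h21, h22, h23]
    simp only [hpoint]
    have hodd (x : F4) : 2 ∣ signChar x - 1 := by decide +revert
    exact ⟨fun p ↦ hodd _, by decide⟩
  · suffices residueWord 1 (leechVector L) = hermitianWord b from
      this ▸ hermitianWord_mem_golayCode hb
    rw [eq_hermitianWord_iff]
    simp only [residueWord, hpoint, h21, h22, h23]
    have hre (x : F4) : (if 4 ∣ signChar x - 1 - 2 then 1 else 0) = x.re := by decide +revert
    exact ⟨fun p ↦ hre _, by decide⟩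

theorem IsLagrangian.sign_eq_one_or_neg_one (hL : IsLagrangian L) {u : Fin 3 → F4}
    (hu : u ∈ baseSpace L) : lagrangianSign L u = 1 ∨ lagrangianSign L u = -1 := by
  obtain ⟨v, hv⟩ := mem_baseSpace.1 hu
  rw [hL.sign_eq hv]
  generalize star u ⬝ᵥ v = x
  decide +revert

theorem IsLagrangian.exists_mem_baseSpace_iff (hL : IsLagrangian L) (h : corank L = 1) :
    ∃ n : Fin 3 → F4, n ≠ 0 ∧ ∀ u, u ∈ baseSpace L ↔ star n ⬝ᵥ u = 0 := by
  obtain ⟨n, hn, hspan⟩ := finrank_eq_one_iff'.1 h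
  refine ⟨n, fun h0 ↦ hn (Subtype.ext h0), fun u ↦ ?_⟩
  rw [← hL.orthogonal_fiberSpace]
  refine ⟨fun hu ↦ hu n n.2, fun hu v hv ↦ ?_⟩
  obtain ⟨c, hc⟩ := hspan ⟨v, hv⟩
  obtain rfl : c • (n : Fin 3 → F4) = v := congrArg Subtype.val hc
  change stdForm F4 (Fin 3) _ u = 0
  rw [map_smulₛₗ, LinearMap.smul_apply, stdForm_apply, hu, smul_zero]

theorem residueWord_leechVector_of_corank_eq_one (hL : IsLagrangian L) (h : corank L = 1) :
    (∀ i, 2 ∣ leechVector L i - 0) ∧ residueWord 0 (leechVector L) ∈ GolayCode := by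
  obtain ⟨n, hn, hbase⟩ := hL.exists_mem_baseSpace_iff h
  obtain ⟨h21, h22, h23⟩ := leechVector_tail (L := L)
  rw [h] at h21 h22 h23
  constructor
  · rw [forall_fin24, h21, h22, h23]
    refine ⟨fun p ↦ ?_, by decide⟩
    rw [leechVector_pointIndex, h, sub_zero]
    exact Dvd.dvd.mul_right (by decide) _
  · suffices residueWord 0 (leechVector L) = lineWord n from this ▸ lineWord_mem_golayCode hn
    rw [lineWord, eq_extendByTail_iff]
    simp only [residueWord, h21, h22, h23]
    refine ⟨fun p ↦ ?_, by decide⟩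
    rw [leechVector_pointIndex, h]
    by_cases hp : point p ∈ baseSpace L
    · rw [if_pos ((hbase _).1 hp)]
      rcases hL.sign_eq_one_or_neg_one hp with hsign | hsign <;> rw [hsign] <;> decide
    · rw [lagrangianSign_of_notMem hp, if_neg (mt (hbase _).2 hp)]
      decide

theorem residueWord_leechVector_of_two_le_corank (h : 2 ≤ corank L) :
    (∀ i, 2 ∣ leechVector L i - 0) ∧ residueWord 0 (leechVector L) ∈ GolayCode := by
  have hfour : (4 : ℤ) ∣ (-2) ^ corank L := pow_dvd_pow (-2) h
  have htail : 4 ∣ tailValue (corank L) := by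
    have := three_mul_tailValue (corank L)
    lia
  obtain ⟨h21, h22, h23⟩ := leechVector_tail (L := L)
  have hdvd : ∀ i, 4 ∣ leechVector L i := by
    rw [forall_fin24, h21, h22, h23]
    refine ⟨fun p ↦ ?_, htail, htail, dvd_sub_self_right.2 htail⟩
    rw [leechVector_pointIndex]
    exact hfour.mul_right _
  refine ⟨fun i ↦ by have := hdvd i; lia, ?_⟩
  have hzero : residueWord 0 (leechVector L) = 0 :=
    funext fun i ↦ if_neg (by have := hdvd i; lia)
  exact hzero ▸ zero_mem _

theorem isLeech_leechVector (hL : IsLagrangian L) : IsLeech (leechVector L) := by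
  have hsum {m : ℤ} (hm : 2 ∣ leechVector L 23 - m) : 8 ∣ ∑ j, leechVector L j - 4 * m := by
    have := eight_dvd_sum_leechVector_mul hL
      (isLagrangian_graphLagrangian ⊤ Matrix.isHermitian_zero)
    rw [sum_leechVector]
    lia
  obtain ⟨m, hm, heven, hgolay⟩ : ∃ m : ℤ, (m = 0 ∨ m = 1) ∧
      (∀ i, 2 ∣ leechVector L i - m) ∧ residueWord m (leechVector L) ∈ GolayCode := by
    rcases (by lia : corank L = 0 ∨ corank L = 1 ∨ 2 ≤ corank L) with h | h | h
    · exact ⟨1, .inr rfl, residueWord_leechVector_of_corank_eq_zero hL h⟩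
    · exact ⟨0, .inl rfl, residueWord_leechVector_of_corank_eq_one hL h⟩
    · exact ⟨0, .inl rfl, residueWord_leechVector_of_two_le_corank h⟩
  exact ⟨m, hm, heven, hgolay, hsum (heven 23)⟩

theorem leechVector_mem_TAB (hL : IsLagrangian L) : leechVector L ∈ TAB := by
  obtain ⟨h21, h22, h23⟩ := leechVector_tail (L := L)
  have hnorm := three_mul_sum_leechVector_mul hL hL
  rw [inf_idem, (isLagrangian_iff.1 hL).1, Fintype.card_fin] at hnorm
  exact mem_TAB_iff.2 ⟨isLeech_leechVector hL, by lia, by lia, by lia⟩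

end LeechVectorMem

/-! ### Every point of `T_AB` comes from a Lagrangian -/

section LowWeight

/-- The points of the plane at which `c` is nonzero. -/
def pointSupport (c : Fin 24 → ZMod 2) : Finset (Fin 21) := {p | c (pointIndex p) ≠ 0}

theorem mem_pointSupport {c : Fin 24 → ZMod 2} {p : Fin 21} :
    p ∈ pointSupport c ↔ c (pointIndex p) ≠ 0 := by
  simp [pointSupport]

theorem pointSupport_add (c c' : Fin 24 → ZMod 2) :
    pointSupport (c + c') = symmDiff (pointSupport c) (pointSupport c') := by
  have hadd (x y : ZMod 2) : x + y ≠ 0 ↔ x ≠ 0 ∧ ¬y ≠ 0 ∨ y ≠ 0 ∧ ¬x ≠ 0 := by decide +revert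
  ext p
  simp only [Finset.mem_symmDiff, mem_pointSupport, Pi.add_apply, hadd]

theorem sum_leechVector_graphLagrangian_top {b : Matrix (Fin 3) (Fin 3) F4} (hb : b.IsHermitian) :
    ∑ j, leechVector (graphLagrangian ⊤ b) j = 20 - 2 * (pointSupport (hermitianWord b)).card := by
  obtain ⟨hpoint, h21, h22, h23⟩ := eq_extendByTail_iff.1 (leechVector_graphLagrangian_top hb)
  obtain ⟨hword, -⟩ := eq_hermitianWord_iff.1 (rfl : hermitianWord b = _)
  have hsign (x : F4) : signChar x = 1 - 2 * if x.re ≠ 0 then 1 else 0 := by decide +revert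
  rw [sum_fin24, h21, h22, h23]
  simp only [hpoint, hsign, ← hword, Finset.sum_sub_distrib, ← Finset.mul_sum, Finset.sum_boole,
    pointSupport, Finset.sum_const, Finset.card_univ, Fintype.card_fin, Matrix.cons_val]
  ring

theorem eq_zero_of_card_pointSupport_lt_eight {c : Fin 24 → ZMod 2} (hc : c ∈ GolayCode)
    (h21 : c 21 = 0) (h22 : c 22 = 0) (h23 : c 23 = 0) (hcard : (pointSupport c).card < 8) :
    c = 0 := by
  obtain ⟨b, hb, rfl⟩ := exists_hermitianWord_eq hc h21 h22 h23
  have hL := isLagrangian_graphLagrangian ⊤ hb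
  have hinner := three_mul_sum_leechVector_mul hL
    (isLagrangian_graphLagrangian ⊤ Matrix.isHermitian_zero)
  have hsum := sum_leechVector (L := graphLagrangian ⊤ b)
  rw [sum_leechVector_graphLagrangian_top hb, leechVector_tail.2.2,
    corank_graphLagrangian_top hb, show tailValue 0 = 1 from rfl] at hsum
  have hdim : finrank F4 (graphLagrangian ⊤ b ⊓ graphLagrangian ⊤ 0 : Submodule F4 _) ≤ 3 :=
    (Submodule.finrank_mono inf_le_left).trans (isLagrangian_iff.1 hL).1.le
  have hempty : pointSupport (hermitianWord b) = ∅ := by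
    rw [← Finset.card_eq_zero]
    generalize finrank F4 (graphLagrangian ⊤ b ⊓ graphLagrangian ⊤ 0 : Submodule F4 _) = d
      at hinner hdim
    interval_cases d <;> lia
  refine funext (forall_fin24.2 ⟨fun p ↦ ?_, h21, h22, h23⟩)
  simpa [mem_pointSupport] using Finset.eq_empty_iff_forall_notMem.1 hempty p

end LowWeight

section Lines

/-- The line of the plane whose normal vector is the point `q`. -/
def linePoints (q : Fin 21) : Finset (Fin 21) := {p | star (point q) ⬝ᵥ point p = 0}

theorem mem_linePoints {p q : Fin 21} : p ∈ linePoints q ↔ star (point q) ⬝ᵥ point p = 0 := by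
  simp [linePoints]

theorem lineWord_pointIndex (p q : Fin 21) :
    lineWord (point q) (pointIndex p) = if p ∈ linePoints q then 1 else 0 := by
  rw [lineWord, extendByTail_pointIndex]
  simp only [mem_linePoints]

theorem pointSupport_lineWord (q : Fin 21) : pointSupport (lineWord (point q)) = linePoints q := by
  ext p
  rw [mem_pointSupport, lineWord_pointIndex]
  simp

theorem card_linePoints (q : Fin 21) : (linePoints q).card = 5 := by
  decide +kernel +revert

theorem exists_mem_linePoints (p p' : Fin 21) : ∃ q, p ∈ linePoints q ∧ p' ∈ linePoints q := by
  decide +kernel +revert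

theorem exists_card_symmDiff_linePoints_lt_eight {s : Finset (Fin 21)} (hs : s.card ≤ 5) :
    ∃ q, (symmDiff s (linePoints q)).card < 8 := by
  have hsymm (q : Fin 21) :
      (symmDiff s (linePoints q)).card + 2 * (s ∩ linePoints q).card ≤ 10 := by
    have hunion : (symmDiff s (linePoints q)).card ≤ _ :=
      Finset.card_union_le (s \ linePoints q) (linePoints q \ s)
    have hleft := Finset.card_sdiff_add_card_inter s (linePoints q)
    have hright := Finset.card_sdiff_add_card_inter (linePoints q) s
    rw [card_linePoints, Finset.inter_comm] at hright
    lia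
  rcases le_or_gt s.card 1 with h | h
  · have hunion : (symmDiff s (linePoints 0)).card ≤ (s ∪ linePoints 0).card :=
      Finset.card_le_card symmDiff_le_sup
    have := Finset.card_union_le s (linePoints 0)
    exact ⟨0, by rw [card_linePoints] at this; lia⟩
  · obtain ⟨p, hp, p', hp', hne⟩ := Finset.one_lt_card.1 h
    obtain ⟨q, hq, hq'⟩ := exists_mem_linePoints p p'
    have hinter : 1 < (s ∩ linePoints q).card :=
      Finset.one_lt_card.2 ⟨p, Finset.mem_inter.2 ⟨hp, hq⟩, p', Finset.mem_inter.2 ⟨hp', hq'⟩, hne⟩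
    exact ⟨q, by have := hsymm q; lia⟩

theorem exists_eq_lineWord {c : Fin 24 → ZMod 2} (hc : c ∈ GolayCode) (h21 : c 21 = 1)
    (h22 : c 22 = 1) (h23 : c 23 = 1) (hcard : (pointSupport c).card ≤ 5) :
    ∃ q, c = lineWord (point q) := by
  obtain ⟨q, hq⟩ := exists_card_symmDiff_linePoints_lt_eight hcard
  obtain ⟨-, hq21, hq22, hq23⟩ := eq_extendByTail_iff.1 (rfl : lineWord (point q) = _)
  have hsum : c + lineWord (point q) = 0 :=
    eq_zero_of_card_pointSupport_lt_eight (add_mem hc (lineWord_mem_golayCode (point_ne_zero q)))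
      (by rw [Pi.add_apply, h21, hq21]; rfl) (by rw [Pi.add_apply, h22, hq22]; rfl)
      (by rw [Pi.add_apply, h23, hq23]; rfl) (by rwa [pointSupport_add, pointSupport_lineWord])
  exact ⟨q, funext fun i ↦ CharTwo.add_eq_zero.1 (congrFun hsum i)⟩

end Lines

section HermitianOnLine

theorem hermitianWord_pointIndex (b : Matrix (Fin 3) (Fin 3) F4) (p : Fin 21) :
    hermitianWord b (pointIndex p) = (star (point p) ⬝ᵥ b.mulVec (point p)).re :=
  (eq_hermitianWord_iff.1 rfl).1 p

theorem isHermitian_vecMulVec_star {ι : Type*} (n : ι → F4) :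
    (Matrix.vecMulVec n (star n)).IsHermitian := by
  rw [Matrix.IsHermitian, Matrix.conjTranspose_vecMulVec, star_star]

theorem hermitianWord_vecMulVec_pointIndex (n : Fin 3 → F4) (p : Fin 21) :
    hermitianWord (Matrix.vecMulVec n (star n)) (pointIndex p) =
      if star n ⬝ᵥ point p = 0 then 0 else 1 := by
  have hnorm (x : F4) : (star x * x).re = if x = 0 then 0 else 1 := by decide +revert
  rw [hermitianWord_pointIndex, Matrix.vecMulVec_mulVec, op_smul_eq_smul, dotProduct_smul,
    smul_eq_mul, ← hnorm, Matrix.star_dotProduct, star_star, dotProduct_comm (star _),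
    mul_comm]

theorem exists_mem_linePoints_iff_eq {q p : Fin 21} (hp : p ∈ linePoints q) :
    ∃ r, ∀ p' ∈ linePoints q, p' ∈ linePoints r ↔ p' = p := by
  decide +kernel +revert

theorem exists_hermitianWord_eq_on_linePoints {q : Fin 21} {s : Fin 21 → ZMod 2}
    (hs : ∑ p ∈ linePoints q, s p = 0) : ∃ b : Matrix (Fin 3) (Fin 3) F4, b.IsHermitian ∧
      ∀ p ∈ linePoints q, hermitianWord b (pointIndex p) = s p := by
  choose! r hr using fun p (hp : p ∈ linePoints q) ↦ exists_mem_linePoints_iff_eq hp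
  let b (p : Fin 21) := Matrix.vecMulVec (point (r p)) (star (point (r p)))
  refine ⟨∑ p ∈ linePoints q, s p • b p,
    sum_mem (S := selfAdjoint (Matrix (Fin 3) (Fin 3) F4)) fun p _ ↦
      ZMod.smul_mem (isHermitian_vecMulVec_star (point (r p))) _,
    fun p' hp' ↦ ?_⟩
  have hterm (p : Fin 21) (hp : p ∈ linePoints q) :
      s p * hermitianWord (b p) (pointIndex p') = s p - if p' = p then s p else 0 := by
    simp only [b, hermitianWord_vecMulVec_pointIndex, ← mem_linePoints, hr p hp p' hp']
    split_ifs <;> simp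
  rw [map_sum, Finset.sum_apply]
  simp only [ZMod.map_smul, Pi.smul_apply, smul_eq_mul]
  rw [Finset.sum_congr rfl hterm, Finset.sum_sub_distrib, hs, Finset.sum_ite_eq, if_pos hp',
    zero_sub, ZMod.neg_eq_self_mod_two]

end HermitianOnLine

section Surjective

variable {T : Fin 24 → ℤ}

theorem leechVector_graphLagrangian_eq {U : Submodule F4 (Fin 3 → F4)}
    {b : Matrix (Fin 3) (Fin 3) F4} {a : ℕ} (hb : b.IsHermitian) (ha : finrank F4 U + a = 3)
    (h21 : T 21 = tailValue a) (h22 : T 22 = tailValue a) (h23 : T 23 = tailValue a - 4)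
    (hmem : ∀ p, point p ∈ U →
      T (pointIndex p) = (-2) ^ a * if hermitianWord b (pointIndex p) = 0 then 1 else -1)
    (hnotMem : ∀ p, point p ∉ U → T (pointIndex p) = 0) :
    leechVector (graphLagrangian U b) = T := by
  have hcorank : corank (graphLagrangian U b) = a := by
    refine Nat.add_left_cancel ((corank_graphLagrangian U hb).trans ?_)
    rw [ha, Fintype.card_fin]
  have hsign (x : F4) : signChar x = if x.re = 0 then 1 else -1 := by decide +revert
  symm
  rw [leechVector, eq_extendByTail_iff, hcorank]
  refine ⟨fun p ↦ ?_, h21, h22, h23⟩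
  by_cases hp : point p ∈ U
  · rw [hmem p hp, lagrangianSign_graphLagrangian hb hp, hermitianWord_pointIndex, hsign]
  · rw [hnotMem p hp, lagrangianSign_graphLagrangian_of_notMem hp, mul_zero]

theorem exists_leechVector_eq_of_signs (h21 : T 21 = 1) (h22 : T 22 = 1) (h23 : T 23 = -3)
    (hpoint : ∀ p, T (pointIndex p) = 1 ∨ T (pointIndex p) = -1)
    (hgolay : residueWord 1 T ∈ GolayCode) : ∃ L, IsLagrangian L ∧ leechVector L = T := by
  obtain ⟨b, hb, hword⟩ := exists_hermitianWord_eq hgolay (by rw [residueWord, h21]; rfl)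
    (by rw [residueWord, h22]; rfl) (by rw [residueWord, h23]; rfl)
  refine ⟨_, isLagrangian_graphLagrangian ⊤ hb, leechVector_graphLagrangian_eq (a := 0) hb (by simp)
    h21 h22 h23 (fun p _ ↦ ?_) fun p hp ↦ absurd Submodule.mem_top hp⟩
  rw [← hword, residueWord]
  rcases hpoint p with hp | hp <;> rw [hp] <;> rfl

theorem exists_leechVector_eq_of_zero (h21 : T 21 = 4) (h22 : T 22 = 4) (h23 : T 23 = 0)
    (hpoint : ∀ p, T (pointIndex p) = 0) :
    ∃ L, IsLagrangian L ∧ leechVector L = T :=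
  ⟨_, isLagrangian_graphLagrangian ⊥ Matrix.isHermitian_zero,
    leechVector_graphLagrangian_eq (a := 3) Matrix.isHermitian_zero (by simp) h21 h22 h23
      (fun p hp ↦ absurd ((Submodule.mem_bot _).1 hp) (point_ne_zero p)) fun p _ ↦ hpoint p⟩

theorem exists_hermitianWord_pointIndex_eq (p : Fin 21) (s : ZMod 2) :
    ∃ b : Matrix (Fin 3) (Fin 3) F4, b.IsHermitian ∧ hermitianWord b (pointIndex p) = s := by
  obtain ⟨n, hn⟩ : ∃ n, star n ⬝ᵥ point p ≠ 0 := by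
    decide +kernel +revert
  refine ⟨s • Matrix.vecMulVec n (star n), ZMod.smul_mem
    (K := selfAdjoint (Matrix (Fin 3) (Fin 3) F4)) (isHermitian_vecMulVec_star n) _, ?_⟩
  rw [ZMod.map_smul, Pi.smul_apply, hermitianWord_vecMulVec_pointIndex, if_neg hn, smul_eq_mul,
      mul_one]

theorem exists_leechVector_eq_of_point (h21 : T 21 = 0) (h22 : T 22 = 0) (h23 : T 23 = -4)
    {p : Fin 21} (hp : T (pointIndex p) = 4 ∨ T (pointIndex p) = -4)
    (hne : ∀ p', p' ≠ p → T (pointIndex p') = 0) : ∃ L, IsLagrangian L ∧ leechVector L = T := by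
  obtain ⟨b, hb, hword⟩ :=
    exists_hermitianWord_pointIndex_eq p (if T (pointIndex p) = 4 then 0 else 1)
  refine ⟨_, isLagrangian_graphLagrangian (Submodule.span F4 {point p}) hb,
    leechVector_graphLagrangian_eq (a := 2) hb (by rw [finrank_span_singleton (point_ne_zero p)])
      h21 h22 h23 (fun p' hp' ↦ ?_) fun p' hp' ↦ hne p' ?_⟩
  · obtain ⟨c, hc⟩ := Submodule.mem_span_singleton.1 hp'
    obtain rfl := eq_of_smul_point_eq hc
    rw [hword]
    rcases hp with hp | hp <;> rw [hp] <;> rfl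
  · rintro rfl
    exact hp' (Submodule.mem_span_singleton_self _)

theorem sum_ite_eq_two_eq_zero {q : Fin 21} (h21 : T 21 = 2) (h22 : T 22 = 2) (h23 : T 23 = -2)
    (hline : ∀ p ∈ linePoints q, T (pointIndex p) = 2 ∨ T (pointIndex p) = -2)
    (hoff : ∀ p ∉ linePoints q, T (pointIndex p) = 0) (hsum : 8 ∣ ∑ i, T i) :
    ∑ p ∈ linePoints q, (if T (pointIndex p) = 2 then 1 else 0 : ZMod 2) = 0 := by
  have hvalue (p : Fin 21) (hp : p ∈ linePoints q) :
      T (pointIndex p) = 4 * (if T (pointIndex p) = 2 then 1 else 0) - 2 := by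
    rcases hline p hp with h | h <;> rw [h] <;> rfl
  have hpoints : ∑ p, T (pointIndex p) =
      4 * {p ∈ linePoints q | T (pointIndex p) = 2}.card - 10 := by
    rw [← Finset.sum_subset (Finset.subset_univ (linePoints q)) fun p _ ↦ hoff p,
      Finset.sum_congr rfl hvalue, Finset.sum_sub_distrib, ← Finset.mul_sum, Finset.sum_boole,
      Finset.sum_const, card_linePoints]
    rfl
  rw [sum_fin24, h21, h22, h23, hpoints] at hsum
  rw [Finset.sum_boole, ZMod.natCast_eq_zero_iff]
  lia

theorem exists_leechVector_eq_of_line (h21 : T 21 = 2) (h22 : T 22 = 2) (h23 : T 23 = -2)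
    {q : Fin 21}
    (hline : ∀ p ∈ linePoints q, T (pointIndex p) = 2 ∨ T (pointIndex p) = -2)
    (hoff : ∀ p ∉ linePoints q, T (pointIndex p) = 0) (hsum : 8 ∣ ∑ i, T i) :
    ∃ L, IsLagrangian L ∧ leechVector L = T := by
  obtain ⟨b, hb, hword⟩ := exists_hermitianWord_eq_on_linePoints
    (sum_ite_eq_two_eq_zero h21 h22 h23 hline hoff hsum)
  have hmem {p : Fin 21} : point p ∈ LinearMap.ker (stdForm F4 (Fin 3) (point q)) ↔
      p ∈ linePoints q := by
    rw [LinearMap.mem_ker, stdForm_apply, mem_linePoints]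
  have hfinrank : finrank F4 (LinearMap.ker (stdForm F4 (Fin 3) (point q))) + 1 = 3 := by
    have hne : stdForm F4 (Fin 3) (point q) ≠ 0 :=
      (map_ne_zero_iff _ stdForm_injective).2 (point_ne_zero q)
    rw [Module.Dual.finrank_ker_add_one_of_ne_zero hne, finrank_pi, Fintype.card_fin]
  refine ⟨_, isLagrangian_graphLagrangian (LinearMap.ker (stdForm F4 (Fin 3) (point q))) hb,
    leechVector_graphLagrangian_eq hb hfinrank h21 h22 h23
      (fun p hp ↦ ?_) fun p hp ↦ hoff p (mt hmem.2 hp)⟩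
  rw [hword p (hmem.1 hp)]
  rcases hline p (hmem.1 hp) with h | h <;> rw [h] <;> rfl

theorem exists_leechVector_eq_of_odd (h21 : T 21 = T 23 + 4) (h22 : T 22 = T 23 + 4)
    (hnorm : ∑ i, T i * T i = 32) (hodd : ∀ i, 2 ∣ T i - 1)
    (hgolay : residueWord 1 T ∈ GolayCode) : ∃ L, IsLagrangian L ∧ leechVector L = T := by
  rw [sum_fin24, h21, h22] at hnorm
  have hone (p : Fin 21) : 1 ≤ T (pointIndex p) * T (pointIndex p) := by
    have hne : T (pointIndex p) ≠ 0 := by have := hodd (pointIndex p); lia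
    exact mul_self_pos.2 hne
  have hle : ∑ _p : Fin 21, 1 ≤ ∑ p, T (pointIndex p) * T (pointIndex p) :=
    Finset.sum_le_sum fun p _ ↦ hone p
  have hcount : ∑ _p : Fin 21, (1 : ℤ) = 21 := rfl
  have h23 : T 23 = -3 := by
    obtain ⟨k, hk⟩ := hodd 23
    obtain rfl : k = -2 := by nlinarith
    lia
  have heq (p : Fin 21) : 1 = T (pointIndex p) * T (pointIndex p) :=
    (Finset.sum_eq_sum_iff_of_le fun p _ ↦ hone p).1 (by rw [hcount]; rw [h23] at hnorm; lia) p
      (Finset.mem_univ p)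
  exact exists_leechVector_eq_of_signs (by lia) (by lia) h23
    (fun p ↦ mul_self_eq_one_iff.1 (heq p).symm) hgolay

theorem mem_pointSupport_residueWord {m : ℤ} {p : Fin 21} :
    p ∈ pointSupport (residueWord m T) ↔ 4 ∣ T (pointIndex p) - m - 2 := by
  rw [mem_pointSupport, residueWord]
  simp

theorem ite_mem_pointSupport_residueWord_le (p : Fin 21) :
    (if p ∈ pointSupport (residueWord 0 T) then 4 else 0) ≤
      T (pointIndex p) * T (pointIndex p) := by
  split_ifs with h
  · have habs : |(2 : ℤ)| ≤ |T (pointIndex p)| := by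
      obtain ⟨k, hk⟩ := mem_pointSupport_residueWord.1 h
      rw [abs_two, le_abs]
      lia
    exact abs_le_iff_mul_self_le.1 habs
  · exact mul_self_nonneg _

theorem four_mul_card_pointSupport_residueWord_le :
    4 * (pointSupport (residueWord 0 T)).card ≤ ∑ p, T (pointIndex p) * T (pointIndex p) := by
  refine le_of_eq_of_le ?_ (Finset.sum_le_sum fun p _ ↦ ite_mem_pointSupport_residueWord_le p)
  rw [Finset.sum_ite_mem, Finset.univ_inter, Finset.sum_const, nsmul_eq_mul, mul_comm]

theorem exists_linePoints_of_residueWord (h21 : T 21 = 2) (h22 : T 22 = 2) (h23 : T 23 = -2)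
    (hnorm : ∑ p, T (pointIndex p) * T (pointIndex p) = 20)
    (hgolay : residueWord 0 T ∈ GolayCode) :
    ∃ q, (∀ p ∈ linePoints q, T (pointIndex p) = 2 ∨ T (pointIndex p) = -2) ∧
      ∀ p ∉ linePoints q, T (pointIndex p) = 0 := by
  have hcard := four_mul_card_pointSupport_residueWord_le (T := T)
  obtain ⟨q, hq⟩ := exists_eq_lineWord hgolay (by rw [residueWord, h21]; rfl)
    (by rw [residueWord, h22]; rfl) (by rw [residueWord, h23]; rfl) (by lia)
  have hle (p : Fin 21) := ite_mem_pointSupport_residueWord_le (T := T) p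
  simp only [hq, pointSupport_lineWord] at hle
  have hsum : ∑ p, (if p ∈ linePoints q then 4 else 0) =
      ∑ p, T (pointIndex p) * T (pointIndex p) := by
    rw [hnorm, Finset.sum_ite_mem, Finset.univ_inter, Finset.sum_const, card_linePoints]
    rfl
  have heq (p : Fin 21) :=
    (Finset.sum_eq_sum_iff_of_le fun p _ ↦ hle p).1 hsum p (Finset.mem_univ p)
  refine ⟨q, fun p hp ↦ ?_, fun p hp ↦ ?_⟩
  · exact mul_self_eq_mul_self_iff.1 ((heq p).symm.trans (if_pos hp))
  · exact mul_self_eq_zero.1 ((heq p).symm.trans (if_neg hp))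

theorem exists_eq_four_of_sum_mul_self_eq_sixteen {ι : Type*} [Fintype ι] {x : ι → ℤ}
    (hfour : ∀ i, 4 ∣ x i) (hsum : ∑ i, x i * x i = 16) :
    ∃ i, (x i = 4 ∨ x i = -4) ∧ ∀ j ≠ i, x j = 0 := by
  classical
  obtain ⟨i, -, hi⟩ := Finset.exists_ne_zero_of_sum_ne_zero (hsum.trans_ne (by decide))
  have hlarge : 4 * 4 ≤ x i * x i :=
    abs_le_iff_mul_self_le.1 (Int.le_of_dvd (abs_pos.2 (left_ne_zero_of_mul hi))
      ((dvd_abs _ _).2 (hfour i)))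
  rw [← Finset.add_sum_erase _ _ (Finset.mem_univ i)] at hsum
  have hrest : 0 ≤ ∑ j ∈ Finset.univ.erase i, x j * x j :=
    Finset.sum_nonneg fun j _ ↦ mul_self_nonneg _
  refine ⟨i, mul_self_eq_mul_self_iff.1 (by linarith), fun j hj ↦ mul_self_eq_zero.1 ?_⟩
  exact (Finset.sum_eq_zero_iff_of_nonneg fun j _ ↦ mul_self_nonneg _).1 (by lia) j
    (Finset.mem_erase.2 ⟨hj, Finset.mem_univ j⟩)

theorem exists_leechVector_eq_of_even (h21 : T 21 = T 23 + 4) (h22 : T 22 = T 23 + 4)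
    (hnorm : ∑ i, T i * T i = 32) (heven : ∀ i, 2 ∣ T i)
    (hgolay : residueWord 0 T ∈ GolayCode) (hsum : 8 ∣ ∑ i, T i) :
    ∃ L, IsLagrangian L ∧ leechVector L = T := by
  rw [sum_fin24, h21, h22] at hnorm
  have hnonneg : 0 ≤ ∑ p, T (pointIndex p) * T (pointIndex p) :=
    Finset.sum_nonneg fun p _ ↦ mul_self_nonneg _
  have hcases : T 23 = 0 ∨ T 23 = -2 ∨ T 23 = -4 := by
    have hlower : -5 ≤ T 23 := by nlinarith
    have hupper : T 23 ≤ 0 := by nlinarith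
    have := heven 23
    lia
  rcases hcases with h23 | h23 | h23 <;> rw [h23] at h21 h22 hnorm
  · have hzero := (Finset.sum_eq_zero_iff_of_nonneg fun p _ ↦ mul_self_nonneg _).1
      (by lia : ∑ p, T (pointIndex p) * T (pointIndex p) = 0)
    exact exists_leechVector_eq_of_zero h21 h22 h23 fun p ↦
      mul_self_eq_zero.1 (hzero p (Finset.mem_univ p))
  · obtain ⟨q, hline, hoff⟩ := exists_linePoints_of_residueWord h21 h22 h23 (by lia) hgolay
    exact exists_leechVector_eq_of_line h21 h22 h23 hline hoff hsum
  · have hcard := four_mul_card_pointSupport_residueWord_le (T := T)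
    have hword : residueWord 0 T = 0 := eq_zero_of_card_pointSupport_lt_eight hgolay
      (by rw [residueWord, h21]; rfl) (by rw [residueWord, h22]; rfl)
      (by rw [residueWord, h23]; rfl) (by lia)
    have hfour (p : Fin 21) : 4 ∣ T (pointIndex p) := by
      have hmem := (mem_pointSupport_residueWord (T := T) (m := 0) (p := p)).not.1 (by
        rw [mem_pointSupport, hword]; exact not_not_intro rfl)
      have := heven (pointIndex p)
      lia
    obtain ⟨p, hp, hne⟩ := exists_eq_four_of_sum_mul_self_eq_sixteen hfour (by lia)
    exact exists_leechVector_eq_of_point h21 h22 h23 hp hne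

theorem exists_leechVector_eq (hT : T ∈ TAB) : ∃ L, IsLagrangian L ∧ leechVector L = T := by
  obtain ⟨⟨m, rfl | rfl, hparity, hgolay, hsum⟩, hnorm, h21, h22⟩ := mem_TAB_iff.1 hT
  · simp only [sub_zero, mul_zero] at hparity hsum
    exact exists_leechVector_eq_of_even h21 h22 hnorm hparity hgolay hsum
  · exact exists_leechVector_eq_of_odd h21 h22 hnorm hparity hgolay

end Surjective

/-! ### Galois descent -/

section Descent

variable {F K ι : Type*} [Field F] [Field K]

/-- Coordinatewise application of a field homomorphism, as a semilinear map. -/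
def mapVec (φ : F →+* K) : (ι → F) →ₛₗ[φ] (ι → K) where
  toFun x := φ ∘ x
  map_add' x y := by ext i; simp
  map_smul' c x := by ext i; simp

@[simp]
theorem mapVec_apply (φ : F →+* K) (x : ι → F) (i : ι) : mapVec φ x i = φ (x i) := rfl

/-- The `K`-subspace of `K^ι` spanned by an `F`-subspace of `F^ι` along a field homomorphism. -/
def extendScalars (φ : F →+* K) (P : Submodule F (ι → F)) : Submodule K (ι → K) :=
  .span K (mapVec φ '' P)

theorem mapVec_mem_extendScalars (φ : F →+* K) {P : Submodule F (ι → F)} {x : ι → F} (hx : x ∈ P) :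
    mapVec φ x ∈ extendScalars φ P :=
  Submodule.subset_span (Set.mem_image_of_mem _ hx)

theorem extendScalars_comap_le (φ : F →+* K) (Q : Submodule K (ι → K)) :
    extendScalars φ (Q.comap (mapVec φ)) ≤ Q :=
  Submodule.span_le.2 (Set.image_preimage_subset _ _)

theorem finrank_extendScalars [Finite ι] (φ : F →+* K) (P : Submodule F (ι → F)) :
    finrank K (extendScalars φ P) = finrank F P := by
  let b := finBasis F P
  have hspan : extendScalars φ P = .span K (Set.range fun k ↦ mapVec φ (b k : ι → F)) := by
    refine le_antisymm (Submodule.span_le.2 ?_) (Submodule.span_le.2 ?_)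
    · have hP : Submodule.span F (Set.range fun k ↦ (b k : ι → F)) = P := by
        have := congrArg (Submodule.map P.subtype) b.span_eq
        rwa [Submodule.map_span, ← Set.range_comp, Submodule.map_subtype_top] at this
      have := Submodule.image_span_subset_span (mapVec φ) (Set.range fun k ↦ (b k : ι → F))
      rwa [hP, ← Set.range_comp] at this
    · rintro _ ⟨k, rfl⟩
      exact mapVec_mem_extendScalars φ (b k).2
  have hindep : LinearIndependent K fun k ↦ mapVec φ (b k : ι → F) := by
    algebraize [φ]
    exact linearIndependent_algebraMap_comp_iff.2
      (b.linearIndependent.map' P.subtype P.ker_subtype)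
  rw [hspan, finrank_span_eq_card hindep, Fintype.card_fin]

theorem comap_extendScalars [Finite ι] (φ : F →+* K) (P : Submodule F (ι → F)) :
    (extendScalars φ P).comap (mapVec φ) = P := by
  refine (Submodule.eq_of_le_of_finrank_le (fun x hx ↦ mapVec_mem_extendScalars φ hx) ?_).symm
  rw [← finrank_extendScalars φ, ← finrank_extendScalars φ P]
  exact Submodule.finrank_mono (extendScalars_comap_le φ _)

variable {σ : K →+* K} {e : F →+* K}

-- A nonzero vector of minimal support, normalized to have a coordinate `1`, is fixed by `σ`.
theorem exists_mapVec_mem_of_ne_bot [Finite ι] (hfix : ∀ a, σ a = a → a ∈ e.range)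
    {Q : Submodule K (ι → K)} (hQ : ∀ x ∈ Q, mapVec σ x ∈ Q) (hne : Q ≠ ⊥) :
    ∃ y i, y i = 1 ∧ mapVec e y ∈ Q := by
  obtain ⟨x, ⟨hx, hx0⟩, hmin⟩ := exists_minimalFor_of_wellFoundedLT (fun x ↦ x ∈ Q ∧ x ≠ 0)
    Function.support (Submodule.exists_mem_ne_zero_of_ne_bot hne)
  obtain ⟨i, hi : x i ≠ 0⟩ := Function.ne_iff.1 hx0
  have hx' : (x i)⁻¹ • x ∈ Q := Q.smul_mem _ hx
  have hlt : Function.support (mapVec σ ((x i)⁻¹ • x) - (x i)⁻¹ • x) < Function.support x := by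
    have hsub := Function.support_subset_iff'.2 fun j (hj : j ∉ Function.support x) ↦ show
      (mapVec σ ((x i)⁻¹ • x) - (x i)⁻¹ • x) j = 0 by simp [Function.notMem_support.1 hj]
    exact (Set.ssubset_iff_of_subset hsub).2 ⟨i, hi, by simp [hi]⟩
  have hfixed : mapVec σ ((x i)⁻¹ • x) - (x i)⁻¹ • x = 0 := by
    by_contra h
    exact hlt.not_ge (hmin ⟨Q.sub_mem (hQ _ hx') hx', h⟩ hlt.le)
  choose y hy using fun j ↦ hfix _ (sub_eq_zero.1 (congrFun hfixed j))
  refine ⟨y, i, e.injective ?_, ?_⟩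
  · rw [hy, map_one, Pi.smul_apply, smul_eq_mul, inv_mul_cancel₀ hi]
  · rwa [show mapVec e y = (x i)⁻¹ • x from funext hy]

theorem extendScalars_comap [Finite ι] (hfix : ∀ a, σ a = a → a ∈ e.range)
    {Q : Submodule K (ι → K)} (hQ : ∀ x ∈ Q, mapVec σ x ∈ Q) :
    extendScalars e (Q.comap (mapVec e)) = Q := by
  refine le_antisymm (extendScalars_comap_le e Q) ?_
  induction Q using WellFoundedLT.induction with | ind Q ih
  rcases eq_or_ne Q ⊥ with rfl | hne
  · exact bot_le
  obtain ⟨y, i, hyi, hy⟩ := exists_mapVec_mem_of_ne_bot hfix hQ hne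
  let H : Submodule K (ι → K) := Q ⊓ LinearMap.ker (LinearMap.proj i)
  have hlt : H < Q := inf_le_left.lt_of_ne fun h ↦ by
    simpa [hyi] using (h.ge hy).2
  have hH : H ≤ extendScalars e (Q.comap (mapVec e)) := by
    refine (ih H hlt fun x hx ↦ ⟨hQ x hx.1, ?_⟩).trans (Submodule.span_mono
      (Set.image_mono fun x hx ↦ hlt.le hx))
    have hxi : x i = 0 := hx.2
    simp [hxi]
  intro x hx
  have hsub : x - x i • mapVec e y ∈ H := ⟨Q.sub_mem hx (Q.smul_mem _ hy), by simp [hyi]⟩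
  rw [← sub_add_cancel x (x i • mapVec e y)]
  exact add_mem (hH hsub) (Submodule.smul_mem _ _ (mapVec_mem_extendScalars e hy))

end Descent

section TwistedForm

variable {F K ι : Type*} [Field F] [Field K] [Fintype ι]

variable (ι) in
/-- The form `∑ i, φ (x i) * y i` on `K^ι`. For the Frobenius of a field of characteristic two its
diagonal is the Fermat cubic form. -/
def twistedForm (φ : K →+* K) : (ι → K) →ₛₗ[φ] (ι → K) →ₗ[K] K :=
  (dotProductBilin K K).comp (mapVec φ)

theorem twistedForm_apply (φ : K →+* K) (x y : ι → K) :
    twistedForm ι φ x y = ∑ i, φ (x i) * y i := rfl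

theorem le_orthogonalBilin_iff_forall_self_eq_zero {M : Type*} [AddCommGroup M] [Module K M]
    {φ : K →+* K} {t : K} (ht : φ t ≠ t) {B : M →ₛₗ[φ] M →ₗ[K] K} {P : Submodule K M} :
    P ≤ P.orthogonalBilin B ↔ ∀ x ∈ P, B x x = 0 := by
  refine ⟨fun h x hx ↦ h hx x hx, fun h y hy x hx ↦ ?_⟩
  have hone := h _ (P.add_mem hx hy)
  have hsmul := h _ (P.add_mem hx (P.smul_mem t hy))
  simp only [map_add, LinearMap.add_apply, map_smulₛₗ, LinearMap.smul_apply, h x hx, h y hy,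
    smul_eq_mul, RingHom.id_apply, mul_zero, add_zero, zero_add] at hone hsmul
  refine (mul_eq_zero.1 ?_).resolve_left (sub_ne_zero.2 ht)
  linear_combination φ t * hone - hsmul

theorem finrank_add_finrank_orthogonalBilin_twistedForm (φ : K →+* K) (P : Submodule K (ι → K)) :
    finrank K P + finrank K (P.orthogonalBilin (twistedForm ι φ)) = Fintype.card ι := by
  classical
  have hP : P.orthogonalBilin (twistedForm ι φ) =
      ((extendScalars φ P).map (dotProductEquiv K ι).toLinearMap).dualCoannihilator := by
    rw [SetLike.ext'_iff, extendScalars, Submodule.map_span, Submodule.coe_dualCoannihilator_span]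
    ext y
    simp [twistedForm]
  rw [hP, ← finrank_extendScalars φ P, ← LinearEquiv.finrank_map_eq (dotProductEquiv K ι),
    Subspace.finrank_add_finrank_dualCoannihilator_eq, finrank_pi]

theorem mapVec_comp_mem_of_le_orthogonalBilin (φ : K →+* K) {P : Submodule K (ι → K)}
    (hdim : 2 * finrank K P = Fintype.card ι)
    (hP : P ≤ P.orthogonalBilin (twistedForm ι φ)) {x : ι → K} (hx : x ∈ P) :
    mapVec (φ.comp φ) x ∈ P := by
  have horth : P = P.orthogonalBilin (twistedForm ι φ) := by
    refine Submodule.eq_of_le_of_finrank_eq hP ?_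
    have := finrank_add_finrank_orthogonalBilin_twistedForm φ P
    lia
  rw [horth]
  intro y hy
  have hφ : φ (twistedForm ι φ x y) = 0 := by rw [hP hy x hx, map_zero]
  simpa [twistedForm_apply, mul_comm] using hφ

variable {φ : F →+* F} {ψ : K →+* K} {e : F →+* K}

theorem twistedForm_mapVec (he : ψ.comp e = e.comp φ) (x y : ι → F) :
    twistedForm ι ψ (mapVec e x) (mapVec e y) = e (twistedForm ι φ x y) := by
  simp only [twistedForm_apply, mapVec_apply, map_sum, map_mul]
  exact Finset.sum_congr rfl fun i _ ↦ congrArg (· * _) (RingHom.congr_fun he (x i))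

theorem extendScalars_le_orthogonalBilin (he : ψ.comp e = e.comp φ) {P : Submodule F (ι → F)}
    (hP : P ≤ P.orthogonalBilin (twistedForm ι φ)) :
    extendScalars e P ≤ (extendScalars e P).orthogonalBilin (twistedForm ι ψ) := by
  refine Submodule.span_le.2 ?_
  rintro _ ⟨y, hy, rfl⟩
  suffices h : extendScalars e P ≤ LinearMap.ker ((twistedForm ι ψ).flip (mapVec e y)) from
    fun x hx ↦ h hx
  refine Submodule.span_le.2 ?_
  rintro _ ⟨x, hx, rfl⟩
  exact (twistedForm_mapVec he x y).trans (by rw [hP hy x hx, map_zero])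

theorem comap_mapVec_le_orthogonalBilin (he : ψ.comp e = e.comp φ) {Q : Submodule K (ι → K)}
    (hQ : Q ≤ Q.orthogonalBilin (twistedForm ι ψ)) :
    Q.comap (mapVec e) ≤ (Q.comap (mapVec e)).orthogonalBilin (twistedForm ι φ) :=
  fun y hy x hx ↦ e.injective (by rw [← twistedForm_mapVec he, hQ hy _ hx, map_zero])

end TwistedForm

/-! ### Planes of the Fermat cubic fourfold -/

section Planes

theorem exists_sq_add_self_add_one_eq_zero (K : Type*) [Field K] [IsAlgClosed K] :
    ∃ t : K, t ^ 2 + t + 1 = 0 := by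
  have hdeg : (Polynomial.X ^ 2 + Polynomial.X + 1 : Polynomial K).degree ≠ 0 := by
    rw [show (Polynomial.X ^ 2 + Polynomial.X + 1 : Polynomial K).degree = 2 by compute_degree!]
    decide
  simpa using IsAlgClosed.exists_root _ hdeg

section HyperbolicCoordinates

variable {n : ℕ}

variable (n) in
/-- Coordinates in which the standard Hermitian form of `F4^(2n)` becomes hyperbolic. -/
def hyperbolicCoordinates : ((Fin n → F4) × (Fin n → F4)) ≃ₗ[F4] (Fin (n + n) → F4) where
  toFun x := Fin.append (fun i ↦ ω ^ 2 * x.1 i + x.2 i) fun i ↦ ω * x.1 i + x.2 i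
  invFun y := (fun i ↦ y (Fin.castAdd n i) + y (Fin.natAdd n i),
    fun i ↦ ω * y (Fin.castAdd n i) + ω ^ 2 * y (Fin.natAdd n i))
  map_add' x y := by
    refine funext (Fin.addCases (fun i ↦ ?_) fun i ↦ ?_) <;>
      simp [-Fin.natAdd_eq_addNat] <;> ring
  map_smul' c x := by
    refine funext (Fin.addCases (fun i ↦ ?_) fun i ↦ ?_) <;>
      simp [-Fin.natAdd_eq_addNat] <;> ring
  left_inv x := by
    have hfst : ∀ a b : F4, ω ^ 2 * a + b + (ω * a + b) = a := by decide
    have hsnd : ∀ a b : F4, ω * (ω ^ 2 * a + b) + ω ^ 2 * (ω * a + b) = b := by decide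
    refine Prod.ext (funext fun i ↦ ?_) (funext fun i ↦ ?_) <;>
      simp [-Fin.natAdd_eq_addNat, hfst, hsnd]
  right_inv y := by
    have hleft : ∀ a b : F4, ω ^ 2 * (a + b) + (ω * a + ω ^ 2 * b) = a := by decide
    have hright : ∀ a b : F4, ω * (a + b) + (ω * a + ω ^ 2 * b) = b := by decide
    refine funext (Fin.addCases (fun i ↦ ?_) fun i ↦ ?_) <;>
      simp [-Fin.natAdd_eq_addNat, hleft, hright]

theorem twistedForm_hyperbolicCoordinates (x y : (Fin n → F4) × (Fin n → F4)) :
    twistedForm (Fin (n + n)) (frobenius F4 2) (hyperbolicCoordinates n x)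
      (hyperbolicCoordinates n y) = hyperbolicForm F4 (Fin n) x y := by
  have hpair : ∀ a b c d : F4, (ω ^ 2 * a + b) ^ 2 * (ω ^ 2 * c + d) +
      (ω * a + b) ^ 2 * (ω * c + d) = a ^ 2 * d + b ^ 2 * c := by decide
  simp [-Fin.natAdd_eq_addNat, twistedForm_apply, hyperbolicCoordinates, frobenius_def,
    hyperbolicForm_apply, stdForm_apply, dotProduct, Fin.sum_univ_add, ← Finset.sum_add_distrib,
    hpair, star_eq_sq]

end HyperbolicCoordinates

variable {K : Type*} [Field K] [CharP K 2] {P : Submodule K (Fin 6 → K)}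

theorem isFermatPlane_iff {t : K} (ht : frobenius K 2 t ≠ t) : IsFermatPlane K P ↔
    finrank K P = 3 ∧ P ≤ P.orthogonalBilin (twistedForm (Fin 6) (frobenius K 2)) := by
  rw [IsFermatPlane, le_orthogonalBilin_iff_forall_self_eq_zero ht]
  simp only [twistedForm_apply, frobenius_def, ← pow_succ]

theorem isFermatPlane_map_hyperbolicCoordinates_iff
    {L : Submodule F4 ((Fin 3 → F4) × (Fin 3 → F4))} :
    IsFermatPlane F4 (L.map (hyperbolicCoordinates 3).toLinearMap) ↔ IsLagrangian L := by
  rw [isFermatPlane_iff (t := ω) (by decide), isLagrangian_iff, Fintype.card_fin,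
    LinearEquiv.finrank_map_eq]
  refine and_congr_right fun _ ↦ ⟨fun h x hx y hy ↦ ?_, ?_⟩
  · rw [← twistedForm_hyperbolicCoordinates]
    exact h (Submodule.mem_map_of_mem hy) _ (Submodule.mem_map_of_mem hx)
  · rintro h _ ⟨y, hy, rfl⟩ _ ⟨x, hx, rfl⟩
    exact (twistedForm_hyperbolicCoordinates x y).trans (h x hx y hy)

theorem frobenius_map_omega_ne (e : F4 →+* K) : frobenius K 2 (e ω) ≠ e ω := by
  rw [← RingHom.map_frobenius, e.injective.ne_iff]
  decide

theorem frobenius_comp_ringHom (e : F4 →+* K) :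
    (frobenius K 2).comp e = e.comp (frobenius F4 2) :=
  RingHom.ext fun a ↦ (RingHom.map_frobenius e 2 a).symm

theorem isFermatPlane_extendScalars (e : F4 →+* K) {Q : Submodule F4 (Fin 6 → F4)}
    (hQ : IsFermatPlane F4 Q) : IsFermatPlane K (extendScalars e Q) := by
  rw [isFermatPlane_iff (t := ω) (by decide)] at hQ
  rw [isFermatPlane_iff (frobenius_map_omega_ne e), finrank_extendScalars]
  exact ⟨hQ.1, extendScalars_le_orthogonalBilin (frobenius_comp_ringHom e) hQ.2⟩

theorem mapVec_frobenius_mem (e : F4 →+* K) (hP : IsFermatPlane K P) {x : Fin 6 → K} (hx : x ∈ P) :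
    mapVec ((frobenius K 2).comp (frobenius K 2)) x ∈ P := by
  rw [isFermatPlane_iff (frobenius_map_omega_ne e)] at hP
  exact mapVec_comp_mem_of_le_orthogonalBilin _ (by rw [hP.1, Fintype.card_fin]) hP.2 hx

variable {e : F4 →+* K}

theorem isFermatPlane_comap_mapVec
    (hfix : ∀ a : K, frobenius K 2 (frobenius K 2 a) = a → a ∈ e.range)
    (hP : IsFermatPlane K P) : IsFermatPlane F4 (P.comap (mapVec e)) := by
  have hstable := extendScalars_comap hfix fun x ↦ mapVec_frobenius_mem e hP (x := x)
  rw [isFermatPlane_iff (frobenius_map_omega_ne e)] at hP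
  rw [isFermatPlane_iff (t := ω) (by decide), ← finrank_extendScalars e, hstable]
  exact ⟨hP.1, comap_mapVec_le_orthogonalBilin (frobenius_comp_ringHom e) hP.2⟩

/-- Descent to `F4` and passage to hyperbolic coordinates identify the planes of the Fermat cubic
fourfold over `K` with the Lagrangians of `F4³ × F4³`, provided the fixed field of the square of
the Frobenius of `K` is `F4`. -/
def planeEquivLagrangian
    (hfix : ∀ a : K, frobenius K 2 (frobenius K 2 a) = a → a ∈ e.range) :
    {P : Submodule K (Fin 6 → K) // IsFermatPlane K P} ≃
      {L : Submodule F4 ((Fin 3 → F4) × (Fin 3 → F4)) // IsLagrangian L} where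
  toFun P := ⟨(P.1.comap (mapVec e)).comap (hyperbolicCoordinates 3).toLinearMap, by
    rw [← isFermatPlane_map_hyperbolicCoordinates_iff,
      Submodule.map_comap_eq_of_surjective (hyperbolicCoordinates 3).surjective]
    exact isFermatPlane_comap_mapVec hfix P.2⟩
  invFun L := ⟨extendScalars e (L.1.map (hyperbolicCoordinates 3).toLinearMap),
    isFermatPlane_extendScalars e (isFermatPlane_map_hyperbolicCoordinates_iff.2 L.2)⟩
  left_inv P := Subtype.ext <| by
    dsimp only
    rw [Submodule.map_comap_eq_of_surjective (hyperbolicCoordinates 3).surjective]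
    exact extendScalars_comap hfix fun x ↦ mapVec_frobenius_mem e P.2
  right_inv L := Subtype.ext <| by
    dsimp only
    rw [comap_extendScalars]
    exact Submodule.comap_map_eq_of_injective (hyperbolicCoordinates 3).injective _

theorem finrank_planeEquivLagrangian_inf
    (hfix : ∀ a : K, frobenius K 2 (frobenius K 2 a) = a → a ∈ e.range)
    (P P' : {P : Submodule K (Fin 6 → K) // IsFermatPlane K P}) :
    finrank F4 ((planeEquivLagrangian hfix P).1 ⊓ (planeEquivLagrangian hfix P').1 :
      Submodule F4 ((Fin 3 → F4) × (Fin 3 → F4))) =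
      finrank K (P.1 ⊓ P'.1 : Submodule K (Fin 6 → K)) := by
  have hstable : extendScalars e ((P.1 ⊓ P'.1).comap (mapVec e)) = P.1 ⊓ P'.1 :=
    extendScalars_comap hfix fun x hx ↦
      ⟨mapVec_frobenius_mem e P.2 hx.1, mapVec_frobenius_mem e P'.2 hx.2⟩
  rw [← hstable, finrank_extendScalars,
    ← Submodule.map_comap_eq_of_surjective (hyperbolicCoordinates 3).surjective
      ((P.1 ⊓ P'.1).comap (mapVec e)), LinearEquiv.finrank_map_eq]
  rfl

theorem exists_ringHom_fixed_by_frobenius_sq {t : K} (ht : t ^ 2 + t + 1 = 0) :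
    ∃ e : F4 →+* K, ∀ a : K, frobenius K 2 (frobenius K 2 a) = a → a ∈ e.range := by
  have htwo : (2 : K) = 0 := CharTwo.two_eq_zero
  let _ : Algebra (ZMod 2) K := ZMod.algebra K 2
  let e : F4 →ₐ[ZMod 2] K := QuadraticAlgebra.lift ⟨t, by
    rw [one_smul, one_smul]; linear_combination ht - (1 + t) * htwo⟩
  have hω : e ω = t := by simp [e]
  refine ⟨e, fun a ha ↦ ?_⟩
  have hprod : a * (a - 1) * ((a - t) * (a - (t + 1))) = 0 := by
    simp only [frobenius_def] at ha
    linear_combination ha + (a ^ 2 - a) * ht - a ^ 3 * (t + 1) * htwo +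
      a ^ 2 * (t + 1) * htwo - a * (a - 1) * htwo
  simp only [mul_eq_zero, sub_eq_zero] at hprod
  rcases hprod with (rfl | rfl) | (rfl | rfl)
  · exact zero_mem _
  · exact one_mem _
  · exact ⟨ω, hω⟩
  · exact ⟨ω + 1, by simp [hω]⟩

end Planes

section Correspondence

/-- The bijection `L ↦ leechVector L` from the Lagrangians of `F4³ × F4³` to `T_AB`. -/
noncomputable def lagrangianEquivTAB :
    {L : Submodule F4 ((Fin 3 → F4) × (Fin 3 → F4)) // IsLagrangian L} ≃ ↥TAB :=
  Equiv.ofBijective (fun L ↦ ⟨leechVector L.1, leechVector_mem_TAB L.2⟩)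
    ⟨fun L L' h ↦ Subtype.ext (leechVector_injOn L.2 L'.2 (congrArg Subtype.val h)), fun T ↦
      let ⟨L, hL, hLT⟩ := exists_leechVector_eq T.2
      ⟨⟨L, hL⟩, Subtype.ext hLT⟩⟩

theorem icNum_finrank_inf_eq_leechInner_sub_one
    (L L' : {L : Submodule F4 ((Fin 3 → F4) × (Fin 3 → F4)) // IsLagrangian L}) :
    icNum (finrank F4 (L.1 ⊓ L'.1 : Submodule F4 ((Fin 3 → F4) × (Fin 3 → F4)))) =
      leechInner (lagrangianEquivTAB L : Fin 24 → ℤ) (lagrangianEquivTAB L' : Fin 24 → ℤ) - 1 := by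
  have h := congrArg (Int.cast : ℤ → ℚ) (three_mul_sum_leechVector_mul L.2 L'.2)
  push_cast at h
  change _ = leechInner (leechVector L.1) (leechVector L'.1) - 1
  rw [icNum, leechInner_eq]
  push_cast
  linear_combination -h / 24

end Correspondence

end EdgeCorrespondence

open EdgeCorrespondence

theorem edge_correspondence_exists_general (K : Type*) [Field K] [CharP K 2]
    (hK : ∃ t : K, t ^ 2 + t + 1 = 0) :
    ∃ φ : {P : Submodule K (Fin 6 → K) // IsFermatPlane K P} ≃ ↥TAB,
      ∀ P P' : {P : Submodule K (Fin 6 → K) // IsFermatPlane K P},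
        icNum (Module.finrank K ↥(P.val ⊓ P'.val))
          = leechInner ((φ P) : Fin 24 → ℤ) ((φ P') : Fin 24 → ℤ) - 1 := by
  obtain ⟨t, ht⟩ := hK
  obtain ⟨e, hfix⟩ := exists_ringHom_fixed_by_frobenius_sq ht
  refine ⟨(planeEquivLagrangian hfix).trans lagrangianEquivTAB, fun P P' ↦ ?_⟩
  rw [← finrank_planeEquivLagrangian_inf hfix P P']
  exact icNum_finrank_inf_eq_leechInner_sub_one _ _

/-- Theorem 1.2, existence of an Edge correspondence: there is
a bijection `φ : P_X ≃ T_AB` with `Π·Π′ = ⟨φ(Π), φ(Π′)⟩ − 1` for all planes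
`Π, Π′` of the Fermat cubic fourfold. -/
theorem edge_correspondence_exists (K : Type*) [Field K] [IsAlgClosed K]
    [CharP K 2] :
    ∃ φ : {P : Submodule K (Fin 6 → K) // IsFermatPlane K P} ≃ ↥TAB,
      ∀ P P' : {P : Submodule K (Fin 6 → K) // IsFermatPlane K P},
        icNum (Module.finrank K ↥(P.val ⊓ P'.val))
          = leechInner ((φ P) : Fin 24 → ℤ) ((φ P') : Fin 24 → ℤ) - 1 := by
  exact edge_correspondence_exists_general K (exists_sq_add_self_add_one_eq_zero K)
end
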